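/- Let p, q, s be distinct primes with p ≡ 5 (mod 8), q ≡ 3 (mod 8), s ≡ 3 (mod 4), (p/q) = (p/s) = 1. Then the 2-Sylow subgroup of the ideal class group of the triquadratic field ℚ(√p, √q, √s) is cyclic of order (1/2)·h₂(pqs), where h₂(pqs) is the 2-class number of ℚ(√(pqs)). -/

import Mathlib

open NumberField

/-- The triquadratic field `ℚ(√p, √q, √s)`, realized inside `ℂ`. -/
noncomputable def triquad (p q s : ℕ) : IntermediateField ℚ ℂ :=
  IntermediateField.adjoin ℚ
    {((Real.sqrt p : ℝ) : ℂ), ((Real.sqrt q : ℝ) : ℂ), ((Real.sqrt s : ℝ) : ℂ)}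

/-- The real quadratic field `ℚ(√d)`, realized inside `ℂ`. -/
noncomputable def quadF (d : ℕ) : IntermediateField ℚ ℂ :=
  IntermediateField.adjoin ℚ {((Real.sqrt d : ℝ) : ℂ)}

namespace TriQ

section Abstract

/-- norm-like endomorphism `x ↦ x * s x` -/
def nm {X : Type*} [CommGroup X] (s : X →* X) : X →* X := MonoidHom.id X * s
/-- `x ↦ s x / x` -/
def dl {X : Type*} [CommGroup X] (s : X →* X) : X →* X := s / MonoidHom.id X
/-- fixed points -/
def fx {X : Type*} [CommGroup X] (s : X →* X) : Subgroup X := (dl s).ker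
/-- squaring -/
def sqh (X : Type*) [CommGroup X] : X →* X := powMonoidHom 2

variable {X : Type*} [CommGroup X] (s : X →* X)

@[simp] lemma nm_apply (x : X) : nm s x = x * s x := rfl
@[simp] lemma dl_apply (x : X) : dl s x = s x / x := rfl
@[simp] lemma sqh_apply (x : X) : sqh X x = x ^ 2 := rfl
lemma mem_fx {x : X} : x ∈ fx s ↔ s x = x := by
  simp [fx, MonoidHom.mem_ker, div_eq_one]

theorem ambiguous_abstract {I : Type*} [CommGroup I] (S : I →* I) (dv : X →* I)
    (hs : ∀ x, s (s x) = x) (hS : ∀ a, S (S a) = a) (hdv : ∀ x, S (dv x) = dv (s x))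
    (H90 : ∀ x, x * s x = 1 → ∃ y, x = s y / y)
    (IF : Subgroup I) (hIF : IF ≤ fx S) (hPF : (fx s).map dv ≤ IF)
    (hH : 2 * (dv.ker.map (nm s)).relIndex (dv.ker ⊓ fx s)
      = (dv.ker.map (dl s)).relIndex (dv.ker ⊓ (nm s).ker)) :
    2 * dv.range.relIndex (dv.range.comap (dl S)) *
      ((nm s).range).relIndex (dv.ker ⊓ fx s) ∣
      ((fx s).map dv).relIndex IF * IF.relIndex (fx S) := by
  set P := dv.range with hP
  set E := dv.ker with hE
  set EF := E ⊓ fx s with hEF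
  set AA := P.comap (dl S) with hAA
  set NE := E.map (nm s) with hNE
  have hsE : ∀ x ∈ E, s x ∈ E := by
    intro x hx
    rw [hE, MonoidHom.mem_ker] at hx ⊢
    rw [← hdv, hx, map_one]
  -- (1)
  have h1 : (fx S ⊔ P).relIndex AA ∣ NE.relIndex (EF ⊓ (nm s).range) := by
    let V : Subgroup (I × X) := ((dl S).comp (MonoidHom.fst I X)).eqLocus (dv.comp (MonoidHom.snd I X))
    have hV : ∀ v : I × X, v ∈ V ↔ S v.1 / v.1 = dv v.2 := fun v => Iff.rfl
    let φ : V →* X := ((nm s).comp (MonoidHom.snd I X)).comp V.subtype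
    let π : V →* I := (MonoidHom.fst I X).comp V.subtype
    have hπ : π.range = AA := by
      ext a
      simp only [hAA, Subgroup.mem_comap, MonoidHom.mem_range, dl_apply, hP]
      constructor
      · rintro ⟨⟨v, hv⟩, rfl⟩
        exact ⟨v.2, ((hV v).1 hv).symm⟩
      · rintro ⟨x, hx⟩
        exact ⟨⟨(a, x), (hV _).2 hx.symm⟩, rfl⟩
    have hφ : φ.range ≤ EF ⊓ (nm s).range := by
      rintro _ ⟨⟨⟨a, x⟩, hv⟩, rfl⟩
      have hv' : S a / a = dv x := hv
      have e : φ ⟨⟨a, x⟩, hv⟩ = x * s x := rfl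
      rw [e]
      refine ⟨⟨?_, ?_⟩, x, rfl⟩
      · show dv (x * s x) = 1
        rw [map_mul, ← hdv, ← hv', map_div, hS, div_mul_div_cancel, div_self']
      · show x * s x ∈ fx s
        rw [mem_fx, map_mul, hs, mul_comm]
    have hle : NE ≤ φ.range := by
      rintro _ ⟨e, he, rfl⟩
      refine ⟨⟨(1, e), (hV _).2 ?_⟩, rfl⟩
      have : dv e = 1 := he
      simp [this]
    have h2 : (NE.comap φ) ≤ (fx S ⊔ P).comap π := by
      rintro ⟨⟨a, x⟩, hv⟩ hx
      have hv' : S a / a = dv x := hv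
      obtain ⟨e, he, hex⟩ := hx
      have hex' : e * s e = x * s x := hex
      have he' : dv e = 1 := he
      obtain ⟨y, hy⟩ := H90 (x / e) (by
        rw [map_div, div_mul_div_comm, ← hex', div_self'])
      show a ∈ fx S ⊔ P
      rw [show a = (a / dv y) * dv y by simp]
      refine Subgroup.mul_mem_sup ?_ ⟨y, rfl⟩
      rw [mem_fx, map_div, hdv]
      have h4 : dv x = dv (s y) / dv y := by
        rw [← map_div, ← hy, map_div, he', div_one]
      rw [h4, div_eq_div_iff_mul_eq_mul] at hv'
      rw [div_eq_div_iff_mul_eq_mul, hv', mul_comm]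
    have h5 := Subgroup.index_dvd_of_le h2
    rw [Subgroup.index_comap, Subgroup.index_comap, hπ] at h5
    refine h5.trans ?_
    rw [← Subgroup.relIndex_mul_relIndex _ _ _ hle hφ]
    exact dvd_mul_right _ _
  have hPA : P ≤ AA := by
    rintro _ ⟨x, rfl⟩
    exact ⟨s x / x, by simp [hdv]⟩
  have hfxA : fx S ≤ AA := by
    intro a ha
    rw [mem_fx] at ha
    exact ⟨1, by simp [ha]⟩
  have h2 : P.relIndex AA = P.relIndex (fx S) * (fx S ⊔ P).relIndex AA := by
    rw [← Subgroup.relIndex_mul_relIndex P (fx S ⊔ P) AA le_sup_right (sup_le hfxA hPA),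
      Subgroup.relIndex_sup_right]
  -- (3)
  have h3 : ((fx s).map dv).relIndex (P ⊓ fx S) = (E.map (dl s)).relIndex (E ⊓ (nm s).ker) := by
    set Y := E.comap (dl s) with hY
    have hEY : E ≤ Y := by
      intro x hx
      show s x / x ∈ E
      exact div_mem (hsE x hx) hx
    have hfY : fx s ≤ Y := by
      intro x hx
      show s x / x ∈ E
      rw [mem_fx] at hx
      rw [hx, div_self']; exact one_mem _
    have e1 : P ⊓ fx S = Y.map dv := by
      ext a
      constructor
      · rintro ⟨⟨x, rfl⟩, hx⟩
        refine ⟨x, ?_, rfl⟩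
        show dv (s x / x) = 1
        have : S (dv x) = dv x := (mem_fx S).1 hx
        rw [map_div, ← hdv, this, div_self']
      · rintro ⟨x, hx, rfl⟩
        have hx' : dv (s x / x) = 1 := hx
        refine ⟨⟨x, rfl⟩, (mem_fx S).2 ?_⟩
        rw [map_div, div_eq_one] at hx'
        rw [hdv, hx']
    have e2 : Y.map (dl s) = E ⊓ (nm s).ker := by
      ext x
      constructor
      · rintro ⟨y, hy, rfl⟩
        refine ⟨hy, ?_⟩
        show (s y / y) * s (s y / y) = 1
        rw [map_div, hs]; simp
      · rintro ⟨hx, hn⟩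
        obtain ⟨y, rfl⟩ := H90 x hn
        exact ⟨y, hx, rfl⟩
    have e3 : (fx s ⊔ E).map (dl s) = E.map (dl s) := by
      rw [Subgroup.map_sup]
      have : (fx s).map (dl s) = ⊥ := by
        rw [Subgroup.map_eq_bot_iff]; exact le_rfl
      rw [this, bot_sup_eq]
    rw [e1, Subgroup.relIndex_map_map, ← hE, ← e2, ← e3, Subgroup.relIndex_map_map,
      show (dl s).ker = fx s from rfl, sup_eq_left.2 hEY, sup_eq_left.2 hfY,
      sup_right_comm, sup_idem]
  have h4 : ((fx s).map dv).relIndex (P ⊓ fx S) * P.relIndex (fx S) =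
      ((fx s).map dv).relIndex IF * IF.relIndex (fx S) := by
    rw [Subgroup.relIndex_mul_relIndex _ _ _ hPF hIF, ← Subgroup.inf_relIndex_right P (fx S)]
    exact Subgroup.relIndex_mul_relIndex _ _ _
      (le_inf (by rintro _ ⟨x, _, rfl⟩; exact ⟨x, rfl⟩) (hPF.trans hIF)) inf_le_right
  have hNEle : NE ≤ EF ⊓ (nm s).range := by
    rintro _ ⟨e, he, rfl⟩
    refine ⟨⟨mul_mem he (hsE e he), ?_⟩, e, rfl⟩
    show e * s e ∈ fx s
    rw [mem_fx, map_mul, hs, mul_comm]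
  have h6 : NE.relIndex (EF ⊓ (nm s).range) * ((nm s).range).relIndex EF = NE.relIndex EF := by
    rw [← Subgroup.inf_relIndex_left EF]
    exact Subgroup.relIndex_mul_relIndex _ _ _ hNEle inf_le_left
  obtain ⟨c, hc⟩ := h1
  rw [← h4, h3, ← hH, ← h6, h2, hc]
  exact ⟨c, by ring⟩

theorem herbrand_abstract (hs : ∀ x, s (s x) = x) (z : X) (hz : z ^ 2 = 1) (hsz : s z = z)
    (hz1 : ∀ x : X, x ^ 2 ≠ z) (h2 : ∀ x : X, x ^ 2 = 1 → x = 1 ∨ x = z) (n : ℕ)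
    (hE : (sqh X).range.index = 2 ^ (2 * n))
    (hEp : ((fx s).map (sqh X)).relIndex (fx s) = 2 ^ n) :
    2 * ((nm s).range).relIndex (fx s) = ((dl s).range).relIndex (nm s).ker := by
  set Ep := fx s with hEpd
  set Em := (nm s).ker with hEmd
  set H := Ep ⊔ Em with hH
  have mEp : ∀ x, x ∈ Ep ↔ s x = x := fun x => mem_fx s
  have mEm : ∀ x, x ∈ Em ↔ x * s x = 1 := fun x => Iff.rfl
  have zEp : z ∈ Ep := (mEp z).2 hsz
  have zEm : z ∈ Em := (mEm z).2 (by rw [hsz, ← pow_two, hz])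
  have hkdl : (dl s).ker = Ep := rfl
  -- squares
  have e1 : Ep.map (nm s) = Ep.map (sqh X) := by
    ext y; constructor
    · rintro ⟨x, hx, rfl⟩
      exact ⟨x, hx, by simp [(mEp x).1 hx, pow_two]⟩
    · rintro ⟨x, hx, rfl⟩
      exact ⟨x, hx, by simp [(mEp x).1 hx, pow_two]⟩
  have e2 : Em.map (dl s) = Em.map (sqh X) := by
    ext y; constructor
    · rintro ⟨x, hx, rfl⟩
      refine ⟨x⁻¹, inv_mem hx, ?_⟩
      have := eq_inv_of_mul_eq_one_right ((mEm x).1 hx)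
      simp [this, pow_two, div_eq_mul_inv]
    · rintro ⟨x, hx, rfl⟩
      refine ⟨x⁻¹, inv_mem hx, ?_⟩
      have := eq_inv_of_mul_eq_one_right ((mEm x).1 hx)
      simp [this, pow_two]
  have f1 : H.map (nm s) = Ep.map (sqh X) := by
    rw [hH, Subgroup.map_sup, e1, show Em.map (nm s) = ⊥ from (Subgroup.map_eq_bot_iff _).2 le_rfl,
      sup_bot_eq]
  have f2 : H.map (dl s) = Em.map (sqh X) := by
    rw [hH, Subgroup.map_sup, e2, show Ep.map (dl s) = ⊥ from (Subgroup.map_eq_bot_iff _).2 le_rfl,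
      bot_sup_eq]
  have g1 : (Ep.map (sqh X)).relIndex (nm s).range = H.index := by
    rw [← f1, MonoidHom.range_eq_map, Subgroup.relIndex_map_map, top_sup_eq,
      Subgroup.relIndex_top_right, sup_eq_left.2]
    exact le_sup_right
  have g2 : (Em.map (sqh X)).relIndex (dl s).range = H.index := by
    rw [← f2, MonoidHom.range_eq_map, Subgroup.relIndex_map_map, top_sup_eq,
      Subgroup.relIndex_top_right, sup_eq_left.2]
    exact le_sup_left
  have g3 : (H.map (sqh X)).relIndex (sqh X).range = H.index := by
    rw [MonoidHom.range_eq_map, Subgroup.relIndex_map_map, top_sup_eq,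
      Subgroup.relIndex_top_right, sup_eq_left.2]
    intro x hx
    rcases h2 x hx with rfl | rfl
    · exact one_mem _
    · exact Subgroup.mem_sup_left zEp
  have hsq : (sqh X).range ≤ H := by
    rintro _ ⟨x, rfl⟩
    have : sqh X x = (x * s x) * (x / s x) := by
      rw [mul_mul_div_cancel, sqh_apply, pow_two]
    rw [this]
    refine Subgroup.mul_mem_sup ?_ ?_
    · rw [mEp, map_mul, hs, mul_comm]
    · rw [mEm, map_div, hs]; simp
  have hHr : H.map (sqh X) ≤ (sqh X).range := Subgroup.map_le_range _ _
  have hidx : H.index ≠ 0 := by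
    intro h0
    have := Subgroup.index_dvd_of_le hsq
    rw [h0, hE] at this
    simp at this
  have g4 : (H.map (sqh X)).relIndex H = 2 ^ (2 * n) := by
    have a1 := Subgroup.relIndex_mul_index (hHr.trans hsq)
    have a2 := Subgroup.relIndex_mul_index hHr
    rw [g3, hE, ← a1] at a2
    have : H.index * 2 ^ (2 * n) = H.index * (H.map (sqh X)).relIndex H := by rw [a2, mul_comm]
    exact (Nat.eq_of_mul_eq_mul_left (Nat.pos_of_ne_zero hidx) this).symm
  -- Ep²Em² ≤ Ep Em² ≤ Ep Em
  set Em2 := Em.map (sqh X) with hEm2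
  set Ep2 := Ep.map (sqh X) with hEp2
  have hEm2le : Em2 ≤ Em := by rintro _ ⟨x, hx, rfl⟩; exact pow_mem hx 2
  have hEp2le : Ep2 ≤ Ep := by rintro _ ⟨x, hx, rfl⟩; exact pow_mem hx 2
  have hHm : H.map (sqh X) = Ep2 ⊔ Em2 := by rw [hH, Subgroup.map_sup]
  have k0 : (Ep2 ⊔ Em2).relIndex (Ep ⊔ Em2) * (Ep ⊔ Em2).relIndex H = 2 ^ (2 * n) := by
    rw [Subgroup.relIndex_mul_relIndex _ _ _ (sup_le_sup_right hEp2le _) (sup_le_sup_left hEm2le _),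
      ← hHm, g4]
  have hpm : ∀ x, x ∈ Ep → x ∈ Em → x = 1 ∨ x = z := by
    intro x hx hx'
    apply h2
    rw [mEm, (mEp x).1 hx] at hx'
    rw [pow_two, hx']
  have k1 : (Ep2 ⊔ Em2).relIndex (Ep ⊔ Em2) = 2 ^ n := by
    rw [show Ep ⊔ Em2 = (Ep2 ⊔ Em2) ⊔ Ep by
      rw [sup_right_comm, sup_eq_right.2 hEp2le], Subgroup.relIndex_sup_left,
      ← Subgroup.inf_relIndex_right, ← hEp]
    congr 1
    apply le_antisymm
    · rintro x ⟨hx, hx'⟩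
      obtain ⟨c, hc, _, ⟨d, hd, rfl⟩, rfl⟩ := Subgroup.mem_sup.1 hx
      have hdd : sqh X d ∈ Ep := by
        have := Ep.mul_mem (Ep.inv_mem (hEp2le hc)) hx'
        simpa using this
      rcases hpm _ hdd (pow_mem hd 2) with h | h
      · rw [h, mul_one]; exact hc
      · exact absurd h (hz1 d)
    · exact le_inf le_sup_left hEp2le
  have k2 : (Ep ⊔ Em2).relIndex H * 2 = Em2.relIndex Em := by
    have b1 : (Ep ⊔ Em2).relIndex H = (Em2 ⊔ Subgroup.zpowers z).relIndex Em := by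
      rw [show H = (Ep ⊔ Em2) ⊔ Em by rw [sup_assoc, sup_eq_right.2 hEm2le],
        Subgroup.relIndex_sup_left, ← Subgroup.inf_relIndex_right]
      congr 1
      apply le_antisymm
      · rintro x ⟨hx, hx'⟩
        obtain ⟨c, hc, d, hd, rfl⟩ := Subgroup.mem_sup.1 hx
        have hcm : c ∈ Em := by
          have := Em.mul_mem hx' (Em.inv_mem (hEm2le hd))
          simpa using this
        rw [mul_comm]
        refine Subgroup.mul_mem_sup hd ?_
        rcases hpm _ hc hcm with rfl | rfl
        · exact one_mem _
        · exact Subgroup.mem_zpowers _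
      · refine sup_le (le_inf le_sup_right hEm2le) ?_
        rw [Subgroup.zpowers_le]
        exact ⟨Subgroup.mem_sup_left zEp, zEm⟩
    have b2 : Em2.relIndex (Em2 ⊔ Subgroup.zpowers z) = 2 := by
      rw [Subgroup.relIndex_sup_left]
      have : Em2 ⊓ Subgroup.zpowers z = ⊥ := by
        rw [eq_bot_iff]
        rintro x ⟨⟨d, hd, hdx⟩, k, hk⟩
        have : x ^ 2 = 1 := by
          rw [← hk]; simp only; rw [← zpow_natCast, ← zpow_mul, mul_comm, zpow_mul, zpow_natCast, hz,
            one_zpow]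
        rcases h2 x this with rfl | rfl
        · exact one_mem _
        · exact absurd hdx (hz1 d)
      rw [← Subgroup.inf_relIndex_right, this, Subgroup.relIndex_bot_left, Nat.card_zpowers]
      refine orderOf_eq_prime hz ?_
      rintro rfl
      exact hz1 1 (by simp)
    rw [b1, ← b2, mul_comm, Subgroup.relIndex_mul_relIndex _ _ _ le_sup_left]
    exact sup_le hEm2le ((Subgroup.zpowers_le).2 zEm)
  have c1 : Ep2.relIndex (nm s).range * (nm s).range.relIndex Ep = 2 ^ n := by
    rw [← hEp, Subgroup.relIndex_mul_relIndex]
    · rw [← f1]; exact Subgroup.map_le_range _ _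
    · rintro _ ⟨x, rfl⟩
      show x * s x ∈ Ep
      rw [mEp, map_mul, hs, mul_comm]
  have c2 : Em2.relIndex (dl s).range * (dl s).range.relIndex Em = Em2.relIndex Em := by
    rw [Subgroup.relIndex_mul_relIndex]
    · rw [← f2]; exact Subgroup.map_le_range _ _
    · rintro _ ⟨x, rfl⟩
      show s x / x * s (s x / x) = 1
      rw [map_div, hs]; simp
  rw [g1] at c1
  rw [g2, ← k2] at c2
  rw [k1, two_mul, pow_add] at k0
  have k3 := Nat.eq_of_mul_eq_mul_left (by positivity) k0
  rw [k3, ← c1] at c2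
  refine Nat.eq_of_mul_eq_mul_left (Nat.pos_of_ne_zero hidx) ?_
  rw [c2]; ring

end Abstract
end TriQ

namespace TriQ
open NumberField nonZeroDivisors

section JFunctor
variable {F K M : Type*} [Field F] [NumberField F] [Field K] [NumberField K]
  [Field M] [NumberField M]

/-- invertible fractional ideals -/
abbrev J (K : Type*) [Field K] := (FractionalIdeal (𝓞 K)⁰ K)ˣ

/-- ring-of-integers hom -/
abbrev om (f : F →+* K) : 𝓞 F →+* 𝓞 K := RingOfIntegers.mapRingHom f

lemma om_inj (f : F →+* K) : Function.Injective (om f) := by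
  intro x y h
  have : f (x : F) = f (y : F) := congrArg (fun z : 𝓞 K => (z : K)) h
  exact RingOfIntegers.ext (f.injective this)

lemma om_le (f : F →+* K) : (𝓞 F)⁰ ≤ Submonoid.comap (om f) (𝓞 K)⁰ :=
  nonZeroDivisors_le_comap_nonZeroDivisors_of_injective _ (om_inj f)

/-- extension of fractional ideals -/
noncomputable def Jm (f : F →+* K) : J F →* J K :=
  Units.map (FractionalIdeal.extendedHom' (f := om f) K (om_le f)).toMonoidHom

/-- principal ideals -/
noncomputable abbrev dv (K : Type*) [Field K] [NumberField K] : Kˣ →* J K := toPrincipalIdeal (𝓞 K) K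

lemma Jm_val (f : F →+* K) (a : J F) :
    ((Jm f a : J K) : FractionalIdeal (𝓞 K)⁰ K) = FractionalIdeal.extended K (om_le f) a.1 := rfl

lemma Jm_dv (f : F →+* K) (x : Fˣ) : Jm f (dv F x) = dv K (Units.map f.toMonoidHom x) := by
  apply Units.ext
  rw [Jm_val, coe_toPrincipalIdeal, coe_toPrincipalIdeal, FractionalIdeal.extended_spanSingleton]
  congr 1
  obtain ⟨x, y, z, w⟩ := x
  show IsLocalization.map K (om f) (om_le f) x = f x
  have : IsLocalization.map (S := F) K (om f) (om_le f) = f := by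
    apply IsLocalization.ringHom_ext (𝓞 F)⁰
    ext x
    simp
  rw [this]

lemma Jm_comp (f : F →+* K) (g : K →+* M) (a : J F) : Jm g (Jm f a) = Jm (g.comp f) a := by
  apply Units.ext
  rw [Jm_val, Jm_val, Jm_val, FractionalIdeal.extended_extended]
  rfl

lemma Jm_mk (f : F →+* K) (a : J F) (I : Ideal (𝓞 F)) (h : (a : FractionalIdeal (𝓞 F)⁰ F) = I) :
    ((Jm f a : J K) : FractionalIdeal (𝓞 K)⁰ K) = (I.map (om f) : Ideal (𝓞 K)) := by
  rw [Jm_val, h, FractionalIdeal.extended_coeIdeal_eq_map]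

lemma Jm_id (a : J F) : Jm (RingHom.id F) a = a := by
  apply Units.ext
  obtain ⟨a, b, h1, h2⟩ := a
  rw [Jm_val]
  ext x
  simp only [FractionalIdeal.mem_extended_iff]
  have : IsLocalization.map (S := F) F (om (RingHom.id F)) (om_le (RingHom.id F)) = RingHom.id F := by
    apply IsLocalization.ringHom_ext (𝓞 F)⁰
    ext x
    simp
  rw [this]
  simp only [RingHom.coe_id, Set.image_id]
  change x ∈ Submodule.span (𝓞 F) ((a : Submodule (𝓞 F) F) : Set F) ↔ _
  rw [Submodule.span_eq]; rfl

lemma Jm_inj (f : F →+* K) : Function.Injective (Jm f) := by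
  let _ := f.toAlgebra
  intro a b h
  apply Units.ext
  apply FractionalIdeal.extendedHom_injective (𝓞 F) F K (𝓞 K)
  have := congrArg (fun z : J K => (z : FractionalIdeal (𝓞 K)⁰ K)) h
  exact this

/-- class map -/
noncomputable abbrev cl (K : Type*) [Field K] [NumberField K] : J K →* ClassGroup (𝓞 K) := ClassGroup.mk K

lemma cl_surj : Function.Surjective (cl K) := by
  intro x
  obtain ⟨I, rfl⟩ := ClassGroup.mk0_surjective x
  exact ⟨FractionalIdeal.mk0 K I, ClassGroup.mk_mk0 K I⟩

lemma cl_ker : (cl K).ker = (dv K).range := by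
  ext I
  rw [MonoidHom.mem_ker, ClassGroup.mk_eq_one_iff]
  rw [mem_principal_ideals_iff]
  constructor
  · intro h
    obtain ⟨x, hx⟩ := (FractionalIdeal.isPrincipal_iff _).1 h
    exact ⟨x, hx.symm⟩
  · rintro ⟨x, hx⟩
    exact (FractionalIdeal.isPrincipal_iff _).2 ⟨x, hx.symm⟩

lemma cl_ker_le (f : F →+* K) : (cl F).ker ≤ ((cl K).comp (Jm f)).ker := by
  rw [cl_ker]
  rintro _ ⟨x, rfl⟩
  rw [MonoidHom.mem_ker, MonoidHom.comp_apply, Jm_dv, ← MonoidHom.mem_ker, cl_ker]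
  exact ⟨_, rfl⟩

/-- functorial class group map -/
noncomputable def clm (f : F →+* K) : ClassGroup (𝓞 F) →* ClassGroup (𝓞 K) :=
  (cl F).liftOfSurjective cl_surj ⟨(cl K).comp (Jm f), cl_ker_le f⟩

lemma clm_cl (f : F →+* K) (a : J F) : clm f (cl F a) = cl K (Jm f a) := 
  (cl F).liftOfRightInverse_comp_apply _ _ ⟨(cl K).comp (Jm f), cl_ker_le f⟩ a

lemma clm_comp (f : F →+* K) (g : K →+* M) (a) : clm g (clm f a) = clm (g.comp f) a := by
  obtain ⟨a, rfl⟩ := cl_surj a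
  rw [clm_cl, clm_cl, clm_cl, Jm_comp]

lemma clm_id (a) : clm (RingHom.id F) a = a := by
  obtain ⟨a, rfl⟩ := cl_surj a
  rw [clm_cl, Jm_id]

end JFunctor
end TriQ

namespace TriQ
set_option linter.unusedSectionVars false
open NumberField nonZeroDivisors

section Gauss
variable {R : Type*} [CommRing R] [IsDedekindDomain R]

theorem gauss_ideal (α β γ δ : R) :
    Ideal.span {α, β} * Ideal.span {γ, δ} = Ideal.span {α * γ, α * δ + β * γ, β * δ} := by
  have e : Ideal.span {α, β} * Ideal.span {γ, δ} =
      Ideal.span {α * γ, α * δ + β * γ, β * δ} ⊔ Ideal.span {α * δ} := by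
    rw [Ideal.span_pair_mul_span_pair, ← Ideal.span_union]
    apply le_antisymm
    · rw [Ideal.span_le]
      have h1 : ∀ x ∈ ({α * γ, α * δ + β * γ, β * δ} ∪ {α * δ} : Set R),
        x ∈ Ideal.span ({α * γ, α * δ + β * γ, β * δ} ∪ {α * δ} : Set R) :=
        fun x hx => Ideal.subset_span hx
      rintro x (rfl | rfl | rfl | rfl)
      · exact h1 _ (by simp)
      · exact h1 _ (by simp)
      · have := sub_mem (h1 (α * δ + β * γ) (by simp)) (h1 (α * δ) (by simp))
        simpa using this
      · exact h1 _ (by simp)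
    · rw [Ideal.span_le]
      have h1 : ∀ x ∈ ({α * γ, α * δ, β * γ, β * δ} : Set R),
        x ∈ Ideal.span ({α * γ, α * δ, β * γ, β * δ} : Set R) :=
        fun x hx => Ideal.subset_span hx
      rintro x ((rfl | rfl | rfl) | rfl)
      · exact h1 _ (by simp)
      · exact add_mem (h1 _ (by simp)) (h1 _ (by simp))
      · exact h1 _ (by simp)
      · exact h1 _ (by simp)
  set I := Ideal.span {α, β} * Ideal.span {γ, δ} with hI
  set Q := Ideal.span {α * γ, α * δ + β * γ, β * δ} with hQ
  have hQI : Q ≤ I := by rw [e]; exact le_sup_left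
  by_cases hI0 : I = ⊥
  · rw [hI0] at hQI ⊢; exact (le_bot_iff.1 hQI).symm
  have huI : α * δ ∈ I := by
    rw [e]; exact Ideal.mem_sup_right (Ideal.mem_span_singleton_self _)
  have hII : I * I ≤ Q * I := by
    refine Ideal.mul_le.2 fun r hr t ht => ?_
    have hr' := hr
    have ht' := ht
    rw [e] at hr' ht'
    obtain ⟨q1, hq1, w1, hw1, rfl⟩ := Submodule.mem_sup.1 hr'
    obtain ⟨q2, hq2, w2, hw2, rfl⟩ := Submodule.mem_sup.1 ht'
    obtain ⟨c1, rfl⟩ := Ideal.mem_span_singleton'.1 hw1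
    obtain ⟨c2, rfl⟩ := Ideal.mem_span_singleton'.1 hw2
    have hq : β * δ ∈ I := hQI (Ideal.subset_span (by simp))
    have m1 : (α * δ + β * γ) * (α * δ) ∈ Q * I :=
      Ideal.mul_mem_mul (Ideal.subset_span (by simp)) huI
    have m2 : (α * γ) * (β * δ) ∈ Q * I :=
      Ideal.mul_mem_mul (Ideal.subset_span (by simp)) hq
    have m3 := Ideal.mul_mem_mul hq1 ht
    have m4 := Ideal.mul_mem_mul hq2 huI
    have : (q1 + c1 * (α * δ)) * (q2 + c2 * (α * δ)) = q1 * (q2 + c2 * (α * δ)) +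
        c1 * (q2 * (α * δ)) + c1 * c2 * ((α * δ + β * γ) * (α * δ) - (α * γ) * (β * δ)) := by ring
    rw [this]
    exact add_mem (add_mem m3 (Ideal.mul_mem_left _ _ m4)) (Ideal.mul_mem_left _ _ (sub_mem m1 m2))
  have : I * I = Q * I := le_antisymm hII (mul_le_mul_left hQI I)
  exact mul_right_cancel₀ (by rwa [← Ideal.zero_eq_bot] at hI0) this
end Gauss

section Quad
variable {F K : Type*} [Field F] [NumberField F] [Field K] [NumberField K]

/-- quadratic extension data -/
structure Quad (f : F →+* K) (σ : K →+* K) : Prop where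
  inv : ∀ x, σ (σ x) = x
  fix : ∀ x, σ x = x ↔ ∃ a, f a = x
  ne : ∃ θ, σ θ ≠ θ

namespace Quad
variable {f : F →+* K} {σ : K →+* K} (h : Quad f σ)
include h

lemma sf (a : F) : σ (f a) = f a := (h.fix _).2 ⟨a, rfl⟩

lemma ex_int (x : 𝓞 K) (hx : σ x = x) : ∃ a : 𝓞 F, om f a = x := by
  obtain ⟨a, ha⟩ := (h.fix _).1 hx
  have : IsIntegral ℤ a := by
    have h1 : IsIntegral ℤ (f a) := ha ▸ x.2
    exact (isIntegral_algHom_iff (f.toIntAlgHom) f.injective).1 h1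
  exact ⟨⟨a, this⟩, RingOfIntegers.ext ha⟩

lemma om_om (x : 𝓞 K) : om σ (om σ x) = x := RingOfIntegers.ext (h.inv x)

lemma map_map (I : Ideal (𝓞 K)) : (I.map (om σ)).map (om σ) = I := by
  rw [Ideal.map_map]
  have : (om σ).comp (om σ) = RingHom.id _ := by ext x; exact h.inv x
  rw [this, Ideal.map_id]

lemma norm_int (I : Ideal (𝓞 K)) : ∃ b : Ideal (𝓞 F), I * I.map (om σ) = b.map (om f) := by
  by_cases hI : I = ⊥
  · exact ⟨⊥, by simp [hI]⟩
  obtain ⟨x, hx, hx0⟩ := Submodule.exists_mem_ne_zero_of_ne_bot hI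
  obtain ⟨y, rfl⟩ := IsDedekindDomain.exists_eq_span_pair hx hx0
  obtain ⟨a, ha⟩ := h.ex_int (x * om σ x) (by simp [h.inv, mul_comm])
  obtain ⟨b, hb⟩ := h.ex_int (y * om σ y) (by simp [h.inv, mul_comm])
  obtain ⟨c, hc⟩ := h.ex_int (x * om σ y + y * om σ x) (by simp [h.inv]; ring)
  refine ⟨Ideal.span {a, c, b}, ?_⟩
  rw [Ideal.map_span, Ideal.map_span, Set.image_pair, gauss_ideal, Set.image_insert_eq, Set.image_pair,
    ha, hb, hc]

lemma nm_dv (x : Kˣ) : ∃ y : Fˣ, x * Units.map σ.toMonoidHom x = Units.map f.toMonoidHom y := by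
  obtain ⟨a, ha⟩ := (h.fix ((x : K) * σ x)).1 (by simp [h.inv, mul_comm])
  have : a ≠ 0 := by
    rintro rfl
    have := x.ne_zero
    simp_all
  exact ⟨Units.mk0 a this, Units.ext ha.symm⟩

end Quad

/-- unit of `J` from a nonzero integral ideal -/
noncomputable def jmk (I : Ideal (𝓞 K)) (hI : I ≠ ⊥) : J K :=
  FractionalIdeal.mk0 K ⟨I, mem_nonZeroDivisors_iff_ne_zero.2 (by rwa [Ideal.zero_eq_bot])⟩

lemma jmk_val (I : Ideal (𝓞 K)) (hI : I ≠ ⊥) :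
    ((jmk I hI : J K) : FractionalIdeal (𝓞 K)⁰ K) = I := rfl

lemma jmk_mul (I I' : Ideal (𝓞 K)) (hI : I ≠ ⊥) (hI' : I' ≠ ⊥) (hII : I * I' ≠ ⊥):
    jmk (I * I') hII = jmk I hI * jmk I' hI' := by
  apply Units.ext
  simp [jmk_val]

lemma omap_ne_bot (f : F →+* K) {I : Ideal (𝓞 F)} (hI : I ≠ ⊥) : I.map (om f) ≠ ⊥ := by
  rw [Ne, Ideal.map_eq_bot_iff_of_injective (om_inj f)]; exact hI

lemma Jm_jmk (f : F →+* K) (I : Ideal (𝓞 F)) (hI : I ≠ ⊥) :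
    Jm f (jmk I hI) = jmk (I.map (om f)) (omap_ne_bot f hI) := by
  apply Units.ext
  rw [Jm_mk f _ I (jmk_val I hI), jmk_val]

lemma jmk_inj {I I' : Ideal (𝓞 K)} {hI : I ≠ ⊥} {hI' : I' ≠ ⊥} (h : jmk I hI = jmk I' hI') :
    I = I' := by
  have := congrArg (fun z : J K => (z : FractionalIdeal (𝓞 K)⁰ K)) h
  simp only [jmk_val] at this
  exact FractionalIdeal.coeIdeal_injective this

lemma map_om_inj (f : F →+* K) {I I' : Ideal (𝓞 F)} (h : I.map (om f) = I'.map (om f)) : I = I' := by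
  by_cases hI : I = ⊥
  · subst hI
    rw [Ideal.map_bot, eq_comm, Ideal.map_eq_bot_iff_of_injective (om_inj f)] at h
    exact h.symm
  by_cases hI' : I' = ⊥
  · subst hI'
    rw [Ideal.map_bot, Ideal.map_eq_bot_iff_of_injective (om_inj f)] at h
    exact h
  apply jmk_inj (hI := hI) (hI' := hI')
  apply Jm_inj f
  rw [Jm_jmk, Jm_jmk]
  congr 1

lemma map_om_le (f : F →+* K) {I I' : Ideal (𝓞 F)} (h : I.map (om f) ≤ I'.map (om f)) : I ≤ I' := by
  have : (I ⊔ I').map (om f) = I'.map (om f) := by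
    rw [Ideal.map_sup]; exact sup_eq_right.2 h
  rw [← map_om_inj f this]; exact le_sup_left

/-- every ideal is integral up to a principal ideal -/
lemma J_rep (a : J K) : ∃ (I : Ideal (𝓞 K)) (hI : I ≠ ⊥) (x : Kˣ), IsIntegral ℤ (x : K) ∧
    a * dv K x = jmk I hI := by
  obtain ⟨d, I, hd, e⟩ := FractionalIdeal.exists_eq_spanSingleton_mul (a : FractionalIdeal (𝓞 K)⁰ K)
  have hI : I ≠ ⊥ := by
    rintro rfl
    exact a.ne_zero (by rw [e]; simp)
  have hd' : (d : K) ≠ 0 := by simpa using hd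
  refine ⟨I, hI, Units.mk0 (d : K) hd', d.2, Units.ext ?_⟩
  rw [Units.val_mul, e, coe_toPrincipalIdeal, jmk_val, mul_right_comm,
    FractionalIdeal.spanSingleton_mul_spanSingleton]
  simp [hd']

namespace Quad
variable {f : F →+* K} {σ : K →+* K} (h : Quad f σ)
include h

lemma norm_J (a : J K) : ∃ b : J F, a * Jm σ a = Jm f b := by
  obtain ⟨I, hI, x, -, e⟩ := J_rep a
  obtain ⟨b, hb⟩ := h.norm_int I
  obtain ⟨y, hy⟩ := h.nm_dv x
  have hI2 : I * I.map (om σ) ≠ ⊥ := by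
    rw [← Ideal.zero_eq_bot] at hI ⊢
    exact mul_ne_zero hI (omap_ne_bot σ hI)
  have hb0 : b ≠ ⊥ := by
    rintro rfl
    rw [hb] at hI2
    simp at hI2
  have e2 : a = jmk I hI / dv K x := by rw [← e]; simp
  refine ⟨jmk b hb0 / dv F y, ?_⟩
  rw [map_div, Jm_dv, Jm_jmk, ← hy, map_mul, ← Jm_dv, e2, map_div, Jm_jmk]
  have : jmk (b.map (om f)) (omap_ne_bot f hb0) = jmk I hI * jmk (I.map (om σ)) (omap_ne_bot σ hI) := by
    rw [← jmk_mul _ _ _ _ hI2]; congr 1; exact hb.symm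
  rw [this]
  exact div_mul_div_comm _ _ _ _

lemma ex_delta : ∃ δ : K, σ δ = -δ ∧ δ ≠ 0 := by
  obtain ⟨θ, hθ⟩ := h.ne
  exact ⟨θ - σ θ, by rw [map_sub, h.inv]; ring, fun e => hθ (sub_eq_zero.1 e).symm⟩

lemma finrank_two : @Module.finrank F K _ _ (f.toAlgebra).toModule = 2 := by
  let _ := f.toAlgebra
  obtain ⟨δ, hδ, hδ0⟩ := h.ex_delta
  have hf : ∀ a : F, algebraMap F K a = f a := fun a => rfl
  let φ : (F × F) →ₗ[F] K := (LinearMap.toSpanSingleton F K 1).comp (LinearMap.fst F F F) +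
    (LinearMap.toSpanSingleton F K δ).comp (LinearMap.snd F F F)
  have hφ : ∀ a b, φ (a, b) = f a + f b * δ := by
    intro a b
    simp [φ, Algebra.smul_def, hf]
  have hb : Function.Bijective φ := by
    constructor
    · rw [← LinearMap.ker_eq_bot, LinearMap.ker_eq_bot']
      rintro ⟨a, b⟩ hab
      rw [hφ] at hab
      have h2 := congrArg σ hab
      simp only [map_add, map_mul, h.sf, hδ, map_zero] at h2
      have h3 : f a = 0 := by linear_combination (hab + h2) / 2
      have h4 : f b = 0 := by
        rw [h3] at hab; simpa [hδ0] using hab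
      simp at h3 h4
      simp [h3, h4]
    · intro x
      obtain ⟨a, ha⟩ := (h.fix ((x + σ x) / 2)).1 (by
        rw [map_div₀, map_add, h.inv, map_ofNat, add_comm])
      obtain ⟨b, hb⟩ := (h.fix ((x - σ x) / (2 * δ))).1 (by
        rw [map_div₀, map_sub, map_mul, h.inv, hδ, map_ofNat]; field_simp; ring)
      refine ⟨(a, b), ?_⟩
      rw [hφ, ha, hb]; field_simp; ring
  have := (LinearEquiv.ofBijective φ hb).finrank_eq
  rw [← this]; simp

lemma finrank_Q : Module.finrank ℚ K = 2 * Module.finrank ℚ F := by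
  let _ := f.toAlgebra
  have := Module.finrank_mul_finrank ℚ F K
  rw [← this, h.finrank_two, mul_comm]

lemma absNorm_map (I : Ideal (𝓞 F)) : Ideal.absNorm (I.map (om f)) = Ideal.absNorm I ^ 2 := by
  let _ := f.toAlgebra
  have := Ideal.absNorm_algebraMap (𝓞 F) (𝓞 K) I
  rw [← IsFractionRing.finrank_eq (𝓞 F) F (𝓞 K) K, h.finrank_two] at this
  exact this

lemma hilbert90 (x : Kˣ) (hx : x * Units.map σ.toMonoidHom x = 1) :
    ∃ y : Kˣ, x = Units.map σ.toMonoidHom y / y := by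
  have hx' : (x : K) * σ x = 1 := congrArg (fun z : Kˣ => (z : K)) hx
  have key : ∀ w : K, w + σ x * σ w ≠ 0 → ∃ y : Kˣ, x = Units.map σ.toMonoidHom y / y := by
    intro w hw
    refine ⟨Units.mk0 _ hw, Units.ext ?_⟩
    rw [Units.val_div_eq_div_val, eq_div_iff (Units.ne_zero _)]
    simp only [Units.val_mk0, Units.coe_map, RingHom.toMonoidHom_eq_coe, MonoidHom.coe_coe, map_add,
      map_mul, h.inv]
    linear_combination (σ w) * hx'
  by_cases h1 : (1 : K) + σ x * σ 1 = 0
  · obtain ⟨θ, hθ⟩ := h.ne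
    refine key θ ?_
    rw [map_one, mul_one] at h1
    have : σ x = -1 := by linear_combination h1
    rw [this]
    intro e
    exact hθ (by linear_combination -e)
  · exact key 1 h1

end Quad
end Quad
end TriQ

namespace TriQ
set_option linter.unusedSectionVars false
open NumberField nonZeroDivisors

section GroupLemmas
variable {G : Type*} [CommGroup G]

lemma relIndex_sup_zpowers_dvd (H : Subgroup G) (g : G) (hg : g ^ 2 ∈ H) :
    H.relIndex (H ⊔ Subgroup.zpowers g) ∣ 2 := by
  rw [Subgroup.relIndex_sup_left]
  have : (zpowersHom G g).range = Subgroup.zpowers g := by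
    ext x; simp [Subgroup.mem_zpowers_iff, MonoidHom.mem_range]
  rw [← this, ← Subgroup.index_comap]
  have h2 : Subgroup.zpowers (Multiplicative.ofAdd (2 : ℤ)) ≤ H.comap (zpowersHom G g) := by
    rw [Subgroup.zpowers_le, Subgroup.mem_comap]
    have : (zpowersHom G g) (Multiplicative.ofAdd 2) = g ^ 2 := by
      simp
    rwa [this]
  refine (Subgroup.index_dvd_of_le h2).trans ?_
  have := Int.index_zmultiples 2
  rw [← AddSubgroup.index_toSubgroup] at this
  rw [show Subgroup.zpowers (Multiplicative.ofAdd (2 : ℤ)) = AddSubgroup.toSubgroup (AddSubgroup.zmultiples (2:ℤ)) from rfl, this]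
  norm_num

lemma relIndex_closure_dvd {ι : Type*} (H : Subgroup G) (T : Finset ι) (g : ι → G)
    (hg : ∀ i ∈ T, g i ^ 2 ∈ H) :
    H.relIndex (H ⊔ Subgroup.closure (g '' T)) ∣ 2 ^ T.card := by
  classical
  induction T using Finset.induction_on with
  | empty => simp
  | insert a T ha ih =>
    rw [Finset.coe_insert, Set.image_insert_eq, Set.insert_eq, Subgroup.closure_union, Finset.card_insert_of_notMem ha,
      ← Subgroup.zpowers_eq_closure]
    have e : H ⊔ (Subgroup.zpowers (g a) ⊔ Subgroup.closure (g '' T)) =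
      (H ⊔ Subgroup.closure (g '' T)) ⊔ Subgroup.zpowers (g a) := by
      rw [sup_assoc, sup_comm (Subgroup.zpowers _)]
    rw [e, ← Subgroup.relIndex_mul_relIndex H _ _ (le_sup_left : H ≤ H ⊔ Subgroup.closure (g '' T)) le_sup_left, pow_succ]
    refine mul_dvd_mul (ih fun i hi => hg i (Finset.mem_insert_of_mem hi)) ?_
    exact relIndex_sup_zpowers_dvd _ _ (Subgroup.mem_sup_left (hg a (Finset.mem_insert_self _ _)))

lemma relIndex_dvd_closure {ι : Type*} (H L : Subgroup G) (T : Finset ι) (g : ι → G)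
    (hg : ∀ i ∈ T, g i ^ 2 ∈ H) (hHL : H ≤ L) (hL : L ≤ H ⊔ Subgroup.closure (g '' T)) :
    H.relIndex L ∣ 2 ^ T.card :=
  (Dvd.intro _ (Subgroup.relIndex_mul_relIndex H L _ hHL hL)).trans (relIndex_closure_dvd H T g hg)

/-- one nonnorm ⇒ index even -/
lemma two_dvd_relIndex (N E : Subgroup G) (h2 : ∀ x ∈ E, x ^ 2 ∈ N) (u : G) (hu : u ∈ E) (hu' : u ∉ N) :
    2 ∣ N.relIndex E := by
  have hu2 : u ^ 2 ∈ N := h2 u hu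
  have := Subgroup.relIndex_mul_relIndex (N ⊓ E) ((N ⊓ E) ⊔ Subgroup.zpowers u) E le_sup_left
    (sup_le inf_le_right ((Subgroup.zpowers_le).2 hu))
  rw [Subgroup.inf_relIndex_right] at this
  rw [← this]
  refine Dvd.dvd.mul_right ?_ _
  have h3 := relIndex_sup_zpowers_dvd (N ⊓ E) u ⟨hu2, pow_mem hu 2⟩
  rcases (Nat.dvd_prime Nat.prime_two).1 h3 with h | h
  · rw [Subgroup.relIndex_eq_one] at h
    exact absurd (h (Subgroup.mem_sup_right (Subgroup.mem_zpowers u))).1 hu'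
  · rw [h]

lemma four_dvd_relIndex (N E : Subgroup G) (h2 : ∀ x ∈ E, x ^ 2 ∈ N) (u v : G) (hu : u ∈ E) (hv : v ∈ E)
    (hu' : u ∉ N) (hv' : v ∉ N) (huv : u * v ∉ N) :
    4 ∣ N.relIndex E := by
  have hu2 : u ^ 2 ∈ N := h2 u hu
  have := Subgroup.relIndex_mul_relIndex (N ⊓ E) ((N ⊓ E) ⊔ Subgroup.zpowers u) E le_sup_left
    (sup_le inf_le_right ((Subgroup.zpowers_le).2 hu))
  rw [Subgroup.inf_relIndex_right] at this
  rw [← this, show (4 : ℕ) = 2 * 2 from rfl]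
  refine mul_dvd_mul ?_ ?_
  · have h3 := relIndex_sup_zpowers_dvd (N ⊓ E) u ⟨hu2, pow_mem hu 2⟩
    rcases (Nat.dvd_prime Nat.prime_two).1 h3 with h | h
    · rw [Subgroup.relIndex_eq_one] at h
      exact absurd (h (Subgroup.mem_sup_right (Subgroup.mem_zpowers u))).1 hu'
    · rw [h]
  · refine two_dvd_relIndex _ _ (fun x hx => Subgroup.mem_sup_left ⟨h2 x hx, pow_mem hx 2⟩) v hv ?_
    intro hmem
    obtain ⟨n, hn, w, ⟨k, rfl⟩, e⟩ := Subgroup.mem_sup.1 hmem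
    simp only at e
    rcases Int.even_or_odd' k with ⟨m, rfl | rfl⟩
    · rw [zpow_mul] at e
      exact hv' (e ▸ mul_mem hn.1 (zpow_mem (by exact_mod_cast hu2) m))
    · apply huv
      rw [zpow_add, zpow_mul, zpow_one] at e
      rw [← e]
      have : u * (n * ((u ^ (2:ℤ)) ^ m * u)) = n * ((u ^ (2:ℤ)) ^ m * u ^ 2) := by
        rw [pow_two]; simp only [mul_comm, mul_left_comm, mul_assoc]
      rw [this]
      exact mul_mem hn.1 (mul_mem (zpow_mem (by exact_mod_cast hu2) m) hu2)

end GroupLemmas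

section Quad
variable {F K : Type*} [Field F] [NumberField F] [Field K] [NumberField K]
namespace Quad
variable {f : F →+* K} {σ : K →+* K} (h : Quad f σ)
include h

lemma map_mono_iff {I I' : Ideal (𝓞 K)} (hh : I.map (om σ) ≤ I'.map (om σ)) : I ≤ I' := by
  have := Ideal.map_mono (f := om σ) hh
  rwa [h.map_map, h.map_map] at this

lemma map_prime (P : Ideal (𝓞 K)) [hP : P.IsPrime] : (P.map (om σ)).IsPrime := by
  have : P.map (om σ) = P.comap (om σ) := by
    apply le_antisymm
    · rw [Ideal.map_le_iff_le_comap]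
      intro x hx
      simpa [Ideal.mem_comap, h.om_om] using hx
    · intro x hx
      rw [Ideal.mem_comap] at hx
      have := Ideal.mem_map_of_mem (om σ) hx
      rwa [h.om_om] at this
  rw [this]; exact Ideal.comap_isPrime _ _

/-- a σ-stable prime is lifted or ramified -/
lemma stable_prime (P : Ideal (𝓞 K)) [hP : P.IsPrime] (hP0 : P ≠ ⊥) (hσ : P.map (om σ) = P) :
    (∃ p : Ideal (𝓞 F), P = p.map (om f)) ∨ ∀ x, om σ x - x ∈ P := by
  obtain ⟨b, hb⟩ := h.norm_int P
  rw [hσ] at hb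
  set p := P.comap (om f) with hp
  have hpp : p.IsPrime := Ideal.comap_isPrime _ _
  have hpP : p.map (om f) ≤ P := Ideal.map_comap_le
  have hbp : p ^ 2 ≤ b := by
    apply map_om_le f
    rw [← hb, Ideal.map_pow, pow_two]
    exact mul_le_mul' hpP hpP
  have hb0 : b ≠ ⊥ := by
    rintro rfl
    rw [Ideal.map_bot, ← Ideal.zero_eq_bot, mul_self_eq_zero] at hb
    exact hP0 hb
  have hbt : b ≠ ⊤ := by
    rintro rfl
    rw [Ideal.map_top] at hb
    exact hP.ne_top (top_le_iff.1 (hb ▸ Ideal.mul_le_left))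
  have hp0 : p ≠ ⊥ := by
    intro e
    have h1 : b.map (om f) ≤ P := hb ▸ Ideal.mul_le_left
    have h2 : b ≤ p := Ideal.map_le_iff_le_comap.1 h1
    rw [e] at h2
    exact hb0 (le_bot_iff.1 h2)
  have hpr : Prime p := Ideal.prime_of_isPrime hp0 hpp
  obtain ⟨i, hi, e⟩ := (dvd_prime_pow hpr 2).1 (Ideal.dvd_iff_le.2 hbp)
  rw [associated_iff_eq] at e
  interval_cases i
  · rw [pow_zero, Ideal.one_eq_top] at e; exact absurd e hbt
  · right
    rw [pow_one] at e
    rw [e] at hb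
    have hn : Ideal.absNorm P = Ideal.absNorm p := by
      have := congrArg Ideal.absNorm hb
      rw [map_mul, h.absNorm_map, ← pow_two] at this
      exact Nat.pow_left_injective (n := 2) (by norm_num) this
    let φ : (𝓞 F) ⧸ p →+* (𝓞 K) ⧸ P := Ideal.quotientMap P (om f) le_rfl
    have hφ : Function.Injective φ := Ideal.quotientMap_injective
    have hfin : Finite ((𝓞 K) ⧸ P) := Ideal.finiteQuotientOfFreeOfNeBot P hP0
    have hcard : Nat.card ((𝓞 F) ⧸ p) = Nat.card ((𝓞 K) ⧸ P) := by
      have h1 := hn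
      rw [Ideal.absNorm_apply, Ideal.absNorm_apply] at h1
      exact h1.symm
    have hbij : Function.Bijective φ := (Nat.bijective_iff_injective_and_card φ).2 ⟨hφ, hcard⟩
    intro x
    obtain ⟨y, hy⟩ := hbij.2 (Ideal.Quotient.mk P x)
    obtain ⟨a, rfl⟩ := Ideal.Quotient.mk_surjective y
    have h1 : om f a - x ∈ P := by
      rw [← Ideal.Quotient.eq, ← hy]; rfl
    have h2 : om σ (om f a - x) ∈ P := hσ ▸ Ideal.mem_map_of_mem _ h1
    have h3 : om σ (om f a) = om f a := RingOfIntegers.ext (h.sf a)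
    rw [map_sub, h3] at h2
    have := sub_mem h1 h2
    simpa using this
  · left
    refine ⟨p, ?_⟩
    rw [e, Ideal.map_pow, ← pow_two] at hb
    obtain ⟨c, hc⟩ := Ideal.dvd_iff_le.2 hpP
    rw [hc, mul_pow] at hb
    have hP2 : P ^ 2 ≠ 0 := pow_ne_zero 2 (by rwa [Ideal.zero_eq_bot])
    have h1 : c ^ 2 = 1 := by
      have : P ^ 2 * 1 = P ^ 2 * c ^ 2 := by rw [mul_one]; exact hb
      exact (mul_left_cancel₀ hP2 this).symm
    have h2 : c = 1 := by
      rw [← isUnit_iff_eq_one]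
      exact IsUnit.of_mul_eq_one c (by rw [← pow_two]; exact h1)
    rw [hc, h2, mul_one]

end Quad
end Quad
end TriQ

namespace TriQ
set_option linter.unusedSectionVars false
open NumberField nonZeroDivisors

section Units
variable (M : Type*) [Field M] [NumberField M] [IsTotallyReal M]

lemma unit_sq_pm (x : (𝓞 M)ˣ) (h5 : x ^ 2 = 1) : x = 1 ∨ x = -1 := by
  have h6 : ((x : 𝓞 M)) ^ 2 = 1 := by
    have := congrArg Units.val h5
    simpa using this
  have h7 : ((x : 𝓞 M) - 1) * ((x : 𝓞 M) + 1) = 0 := by linear_combination h6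
  rcases mul_eq_zero.1 h7 with h | h
  · left; apply Units.ext; rw [Units.val_one]; linear_combination h
  · right; apply Units.ext; rw [Units.val_neg, Units.val_one]; linear_combination h

lemma tors_pm (x : (𝓞 M)ˣ) (hx : x ∈ Units.torsion M) : x = 1 ∨ x = -1 := by
  apply unit_sq_pm
  by_cases hc : 2 < orderOf x
  · exfalso
    have h0 : orderOf (((x : 𝓞 M)) : M) = orderOf x := by
      rw [← orderOf_units]
      exact orderOf_injective (algebraMap (𝓞 M) M).toMonoidHom RingOfIntegers.coe_injective (x : 𝓞 M)
    rw [← h0] at hc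
    have h1 := NumberField.InfinitePlace.IsPrimitiveRoot.nrRealPlaces_eq_zero_of_two_lt hc (IsPrimitiveRoot.orderOf (x.1 : M))
    have h2 := IsTotallyReal.finrank M
    have h3 : 0 < Module.finrank ℚ M := Module.finrank_pos
    omega
  · have h4 : 0 < orderOf x := by
      rw [Units.torsion, CommGroup.mem_torsion] at hx
      exact hx.orderOf_pos
    rw [← orderOf_dvd_iff_pow_eq_one]
    have h5 : orderOf x = 1 ∨ orderOf x = 2 := by omega
    rcases h5 with h | h <;> rw [h]
    norm_num

lemma card_tors : Nat.card (Units.torsion M) = 2 := by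
  have h1 : (Units.torsion M : Set (𝓞 M)ˣ) = {1, -1} := by
    ext x
    constructor
    · intro hx; simpa using tors_pm M x hx
    · rintro (rfl | rfl)
      · exact one_mem _
      · rw [SetLike.mem_coe, Units.torsion, CommGroup.mem_torsion]
        exact isOfFinOrder_iff_pow_eq_one.2 ⟨2, by norm_num, by simp⟩
  have h2 : (1 : (𝓞 M)ˣ) ≠ -1 := by
    intro h
    have : (1 : 𝓞 M) = -1 := by
      have := congrArg Units.val h
      simpa using this
    have h3 : (2 : 𝓞 M) = 0 := by linear_combination this
    exact two_ne_zero h3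
  rw [← Set.ncard_pair h2, ← h1]
  rfl

theorem unit_sq_index : (sqh (𝓞 M)ˣ).range.index = 2 ^ Module.finrank ℚ M := by
  let r := Units.rank M
  let φ : (Units.torsion M × Multiplicative (Fin r → ℤ)) →* (𝓞 M)ˣ :=
    { toFun := fun z => z.1 * ∏ i, Units.fundSystem M i ^ (z.2.toAdd i)
      map_one' := by simp
      map_mul' := by
        rintro ⟨a, b⟩ ⟨c, d⟩
        simp only [Prod.mk_mul_mk, Subgroup.coe_mul, toAdd_mul, Pi.add_apply, zpow_add,
          Finset.prod_mul_distrib]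
        exact mul_mul_mul_comm _ _ _ _ }
  have hφ : Function.Bijective φ := by
    constructor
    · intro a b hab
      obtain ⟨w, -, hw⟩ := Units.exist_unique_eq_mul_prod M (φ a)
      exact (hw a rfl).trans (hw b hab).symm
    · intro x
      obtain ⟨w, hw, -⟩ := Units.exist_unique_eq_mul_prod M x
      exact ⟨w, hw.symm⟩
  let Q := Units.torsion M × Multiplicative (Fin r → ZMod 2)
  let ρ : (Fin r → ℤ) →+ (Fin r → ZMod 2) :=
    { toFun := fun e i => (e i : ZMod 2), map_zero' := by ext; simp, map_add' := by intros; ext; simp }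
  let ψ : (Units.torsion M × Multiplicative (Fin r → ℤ)) →* Q := MonoidHom.prodMap (MonoidHom.id _) (AddMonoidHom.toMultiplicative ρ)
  have hψ : Function.Surjective ψ := by
    rintro ⟨a, b⟩
    refine ⟨(a, Multiplicative.ofAdd fun i => ((b.toAdd i).val : ℤ)), Prod.ext rfl ?_⟩
    apply Multiplicative.toAdd.injective
    funext i
    show (((b.toAdd i).val : ℤ) : ZMod 2) = b.toAdd i
    simp
  have hker : ψ.ker = (sqh (Units.torsion M × Multiplicative (Fin r → ℤ))).range := by
    ext ⟨a, b⟩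
    rw [MonoidHom.mem_ker, MonoidHom.mem_range]
    constructor
    · intro h
      have h1 : a = 1 := congrArg Prod.fst h
      have h2 : ∀ i, ((b.toAdd i : ℤ) : ZMod 2) = 0 := fun i =>
        congrFun (congrArg (fun z : Q => z.2.toAdd) h) i
      have h3 : ∀ i, ∃ c : ℤ, b.toAdd i = 2 * c := fun i =>
        (ZMod.intCast_zmod_eq_zero_iff_dvd _ 2).1 (h2 i)
      choose c hc using h3
      refine ⟨(1, Multiplicative.ofAdd c), Prod.ext ?_ ?_⟩
      · show (1 : Units.torsion M) ^ 2 = a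
        rw [h1, one_pow]
      · apply Multiplicative.toAdd.injective
        funext i
        show 2 • c i = b.toAdd i
        rw [hc]; simp
    · rintro ⟨⟨c, d⟩, hcd⟩
      rw [← hcd]
      refine Prod.ext ?_ ?_
      · have hc := card_tors M
        have : c ^ 2 = 1 := by rw [← hc]; exact pow_card_eq_one'
        show c ^ 2 = 1
        exact this
      · apply Multiplicative.toAdd.injective
        funext i
        show (((2 • d.toAdd i : ℤ)) : ZMod 2) = 0
        simp
        left; decide
  have h1 : (sqh (𝓞 M)ˣ).range = (sqh (Units.torsion M × Multiplicative (Fin r → ℤ))).range.map φ := by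
    ext x
    constructor
    · rintro ⟨y, rfl⟩
      obtain ⟨z, rfl⟩ := hφ.2 y
      exact ⟨sqh (Units.torsion M × Multiplicative (Fin r → ℤ)) z, ⟨z, rfl⟩, by simp⟩
    · rintro ⟨_, ⟨z, rfl⟩, rfl⟩
      exact ⟨φ z, by simp⟩
  rw [h1, Subgroup.index_map_of_bijective hφ, ← hker, Subgroup.index_ker, MonoidHom.range_eq_top.2 hψ,
    Subgroup.card_top]
  have hr : r + 1 = Module.finrank ℚ M := by
    have h2 := IsTotallyReal.finrank M
    have h3 := InfinitePlace.card_eq_nrRealPlaces_add_nrComplexPlaces (K := M)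
    have h4 := IsTotallyReal.nrComplexPlaces_eq_zero (K := M)
    have h5 : 0 < Fintype.card (InfinitePlace M) := Fintype.card_pos
    have h6 : r = Fintype.card (InfinitePlace M) - 1 := rfl
    omega
  rw [Nat.card_prod, card_tors, ← hr, pow_succ, mul_comm]
  congr 1
  rw [show Nat.card (Multiplicative (Fin r → ZMod 2)) = Nat.card (Fin r → ZMod 2) from rfl, Nat.card_fun]
  simp
end Units

section Quad
variable {F K : Type*} [Field F] [NumberField F] [Field K] [NumberField K]
namespace Quad
variable {f : F →+* K} {σ : K →+* K} (h : Quad f σ)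
include h

lemma Jm_inv (a : J K) : Jm σ (Jm σ a) = a := by
  rw [Jm_comp, show σ.comp σ = RingHom.id K from RingHom.ext h.inv, Jm_id]

lemma Jm_sf (a : J F) : Jm σ (Jm f a) = Jm f a := by
  rw [Jm_comp, show σ.comp f = f from RingHom.ext h.sf]

lemma fixed_int {G0 : Subgroup (J K)} (hIF : (Jm f).range ≤ G0)
    (hG : ∀ (P : Ideal (𝓞 K)) (hP : P ≠ ⊥), P.IsPrime → P.map (om σ) = P →
      (∀ x, om σ x - x ∈ P) → jmk P hP ∈ G0)
    (n : ℕ) : ∀ (I : Ideal (𝓞 K)) (hI : I ≠ ⊥), I.map (om σ) = I → Ideal.absNorm I = n →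
      jmk I hI ∈ G0 := by
  induction n using Nat.strong_induction_on with
  | _ n ih =>
  intro I hI hσ hn
  by_cases hIt : I = ⊤
  · have : jmk I hI = 1 := by
      apply Units.ext; rw [jmk_val, hIt]; simp
    rw [this]; exact one_mem _
  obtain ⟨P, hPm, hIP⟩ := Ideal.exists_le_maximal I hIt
  have hPp := hPm.isPrime
  have hP0 : P ≠ ⊥ := by rintro rfl; exact hI (le_bot_iff.1 hIP)
  have hstep : ∀ (A : Ideal (𝓞 K)) (hA : A ≠ ⊥), A ≠ ⊤ → A.map (om σ) = A → jmk A hA ∈ G0 → A ∣ I →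
      jmk I hI ∈ G0 := by
    rintro A hA hAt hAσ hAG ⟨c, hc⟩
    have hc0 : c ≠ ⊥ := by rintro rfl; exact hI (by rw [hc]; simp)
    have hcσ : c.map (om σ) = c := by
      have h1 := hσ
      rw [hc, Ideal.map_mul, hAσ] at h1
      exact mul_left_cancel₀ (by rwa [Ideal.zero_eq_bot]) h1
    have hlt : Ideal.absNorm c < n := by
      rw [← hn, hc, map_mul]
      have h1 : Ideal.absNorm A ≠ 1 := by rwa [Ne, Ideal.absNorm_eq_one_iff]
      have h2 : Ideal.absNorm A ≠ 0 := by rwa [Ne, Ideal.absNorm_eq_zero_iff]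
      have h3 : Ideal.absNorm c ≠ 0 := by rwa [Ne, Ideal.absNorm_eq_zero_iff]
      have h4 : 2 ≤ Ideal.absNorm A := by omega
      nlinarith [Nat.pos_of_ne_zero h3]
    have := mul_mem hAG (ih _ hlt c hc0 hcσ rfl)
    rw [← jmk_mul _ _ _ _ (by rw [← hc]; exact hI)] at this
    convert this
  by_cases hPσ : P.map (om σ) = P
  · refine hstep P hP0 hPp.ne_top hPσ ?_ (Ideal.dvd_iff_le.2 hIP)
    rcases h.stable_prime P hP0 hPσ with ⟨p, hp⟩ | hr
    · apply hIF
      have hp0 : p ≠ ⊥ := by rintro rfl; exact hP0 (by rw [hp, Ideal.map_bot])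
      refine ⟨jmk p hp0, ?_⟩
      rw [Jm_jmk]; congr 1; exact hp.symm
    · exact hG P hP0 hPp hPσ hr
  · have hσ0 : P.map (om σ) ≠ ⊥ := omap_ne_bot σ hP0
    have hσp := h.map_prime P
    have h1 : P ∣ I := Ideal.dvd_iff_le.2 hIP
    have h2 : P.map (om σ) ∣ I := Ideal.dvd_iff_le.2 (by conv_lhs => rw [← hσ]
                                                         exact Ideal.map_mono hIP)
    have hcop : IsCoprime P (P.map (om σ)) := by
      have hm2 : (P.map (om σ)).IsMaximal := hσp.isMaximal hσ0
      exact Ideal.isCoprime_of_isMaximal (Ne.symm hPσ)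
    have h0 : P * P.map (om σ) ≠ ⊥ := by
      rw [← Ideal.zero_eq_bot] at hP0 hσ0 ⊢
      exact mul_ne_zero hP0 hσ0
    refine hstep _ h0 ?_ ?_ ?_ (hcop.mul_dvd h1 h2)
    · intro e; exact hPp.ne_top (top_le_iff.1 (e ▸ Ideal.mul_le_left))
    · rw [Ideal.map_mul, h.map_map, mul_comm]
    · apply hIF
      obtain ⟨b, hb⟩ := h.norm_J (jmk P hP0)
      refine ⟨b, ?_⟩
      rw [← hb, Jm_jmk, jmk_mul]

theorem fixed_index (T : Finset (Ideal (𝓞 K)))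
    (hT : ∀ P : Ideal (𝓞 K), P.IsPrime → P ≠ ⊥ → (∀ x, om σ x - x ∈ P) → P ∈ T) :
    (Jm f).range.relIndex (fx (Jm σ)) ∣ 2 ^ T.card := by
  classical
  let g : Ideal (𝓞 K) → J K := fun P => if hP : P ≠ ⊥ ∧ P.map (om σ) = P then jmk P hP.1 else 1
  have hle : (Jm f).range ≤ fx (Jm σ) := by
    rintro _ ⟨a, rfl⟩
    rw [mem_fx, h.Jm_sf]
  refine relIndex_dvd_closure _ _ T g ?_ hle ?_
  · intro P _
    by_cases hP : P ≠ ⊥ ∧ P.map (om σ) = P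
    · obtain ⟨b, hb⟩ := h.norm_J (jmk P hP.1)
      refine ⟨b, ?_⟩
      rw [← hb, Jm_jmk]
      simp only [g, dif_pos hP, pow_two]
      congr 2; exact hP.2
    · simp only [g, dif_neg hP, one_pow]; exact one_mem _
  · intro a ha
    rw [mem_fx] at ha
    set G0 := (Jm f).range ⊔ Subgroup.closure (g '' T) with hG0
    obtain ⟨I, hI, x, hx, e⟩ := J_rep a
    obtain ⟨y, hy⟩ := h.nm_dv x
    -- replace x by its norm
    let d : 𝓞 K := ⟨σ x, map_isIntegral_int σ hx⟩
    have hd : d ≠ 0 := by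
      intro h0
      have : σ (x : K) = 0 := congrArg (fun z : 𝓞 K => (z : K)) h0
      simp at this
    have hd0 : Ideal.span {d} ≠ ⊥ := by simpa using hd
    have hId : I * Ideal.span {d} ≠ ⊥ := by
      rw [← Ideal.zero_eq_bot] at hI hd0 ⊢; exact mul_ne_zero hI hd0
    have hdd : dv K (Units.map σ.toMonoidHom x) = jmk (Ideal.span {d}) hd0 := by
      apply Units.ext
      rw [coe_toPrincipalIdeal, jmk_val, FractionalIdeal.coeIdeal_span_singleton]
      rfl
    have e2 : a * Jm f (dv F y) = jmk (I * Ideal.span {d}) hId := by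
      rw [Jm_dv, ← hy, map_mul, ← mul_assoc, e, hdd, jmk_mul]
    have e3 : (I * Ideal.span {d}).map (om σ) = I * Ideal.span {d} := by
      have h1 : Jm σ (a * Jm f (dv F y)) = a * Jm f (dv F y) := by rw [map_mul, ha, h.Jm_sf]
      rw [e2, Jm_jmk] at h1
      exact jmk_inj h1
    have e4 := h.fixed_int (G0 := G0) le_sup_left (by
      intro P hP hPp hPσ hr
      apply Subgroup.mem_sup_right
      apply Subgroup.subset_closure
      refine ⟨P, hT P hPp hP hr, ?_⟩
      simp only [g]; rw [dif_pos ⟨hP, hPσ⟩]) _ _ hId e3 rfl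
    rw [← e2] at e4
    have e5 : Jm f (dv F y) ∈ G0 := Subgroup.mem_sup_left ⟨_, rfl⟩
    have := div_mem e4 e5
    simpa using this
end Quad
end Quad
end TriQ

namespace TriQ
set_option linter.unusedSectionVars false
open NumberField nonZeroDivisors

section
variable {F K : Type*} [Field F] [NumberField F] [Field K] [NumberField K]

/-- action of a field map on units of the field -/
noncomputable abbrev um {F K : Type*} [Field F] [Field K] (f : F →+* K) : Fˣ →* Kˣ := Units.map f.toMonoidHom

/-- inclusion of integral units -/
noncomputable def iou (K : Type*) [Field K] [NumberField K] : (𝓞 K)ˣ →* Kˣ :=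
  Units.map (algebraMap (𝓞 K) K).toMonoidHom

lemma iou_inj : Function.Injective (iou K) :=
  Units.map_injective RingOfIntegers.coe_injective

lemma iou_om (f : F →+* K) (u : (𝓞 F)ˣ) :
    iou K (Units.map (om f).toMonoidHom u) = um f (iou F u) := by
  apply Units.ext; rfl

lemma dv_eq_one_iff (x : Kˣ) : dv K x = 1 ↔ ∃ u, iou K u = x := by
  constructor
  · intro hx
    have h1 : (FractionalIdeal.spanSingleton (𝓞 K)⁰ (x : K)) = 1 := by
      have := congrArg Units.val hx
      simpa [dv] using this
    have h2 : (x : K) ∈ (1 : FractionalIdeal (𝓞 K)⁰ K) := by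
      rw [← h1]; exact FractionalIdeal.mem_spanSingleton_self _ _
    obtain ⟨a, ha⟩ := (FractionalIdeal.mem_one_iff _).1 h2
    have h3 : (1 : K) ∈ FractionalIdeal.spanSingleton (𝓞 K)⁰ (x : K) := by
      rw [h1]; exact FractionalIdeal.one_mem_one _
    obtain ⟨b, hb⟩ := (FractionalIdeal.mem_spanSingleton _).1 h3
    have hab : b * a = 1 := by
      apply RingOfIntegers.coe_injective
      rw [map_mul, ha, ← Algebra.smul_def, hb, map_one]
    exact ⟨⟨a, b, by rw [mul_comm, hab], hab⟩, Units.ext ha⟩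
  · rintro ⟨u, rfl⟩
    apply Units.ext
    rw [coe_toPrincipalIdeal, Units.val_one]
    show FractionalIdeal.spanSingleton (𝓞 K)⁰ (algebraMap (𝓞 K) K u) = 1
    rw [← FractionalIdeal.coeIdeal_span_singleton, Ideal.span_singleton_eq_top.2 u.isUnit]
    simp

lemma relIndex_map_range {A B : Type*} [Group A] [Group B] (g : A →* B) (hg : Function.Injective g)
    (H : Subgroup A) : (H.map g).relIndex g.range = H.index := by
  rw [MonoidHom.range_eq_map, Subgroup.relIndex_map_map_of_injective _ _ hg, Subgroup.relIndex_top_right]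

lemma range_iou : (iou K).range = (dv K).ker := by
  ext x
  rw [MonoidHom.mem_range, MonoidHom.mem_ker, dv_eq_one_iff]

namespace Quad
variable {f : F →+* K} {σ : K →+* K} (h : Quad f σ)
include h

lemma range_uf : (Units.map (om f).toMonoidHom).range = fx (Units.map (om σ).toMonoidHom) := by
  ext x
  rw [mem_fx]
  constructor
  · rintro ⟨y, rfl⟩
    apply Units.ext
    apply RingOfIntegers.ext
    exact h.sf _
  · intro hx
    have h1 : σ (x : 𝓞 K) = (x : 𝓞 K) := congrArg (fun z : (𝓞 K)ˣ => ((z : 𝓞 K) : K)) hx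
    obtain ⟨a, ha⟩ := h.ex_int _ h1
    have h2 : σ (x⁻¹ : (𝓞 K)ˣ) = (x⁻¹ : (𝓞 K)ˣ) := by
      have := congrArg (fun z : (𝓞 K)ˣ => (((z⁻¹ : (𝓞 K)ˣ) : 𝓞 K) : K)) hx
      rw [← map_inv] at this
      exact this
    obtain ⟨b, hb⟩ := h.ex_int _ h2
    have hab : a * b = 1 := by
      apply om_inj f
      rw [map_mul, ha, hb, map_one, Units.mul_inv]
    exact ⟨⟨a, b, hab, by rw [mul_comm, hab]⟩, Units.ext ha⟩

lemma range_um : (um f).range = fx (um σ) := by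
  ext x
  rw [mem_fx]
  constructor
  · rintro ⟨y, rfl⟩
    apply Units.ext
    exact h.sf _
  · intro hx
    have h1 : σ (x : K) = x := congrArg Units.val hx
    obtain ⟨a, ha⟩ := (h.fix _).1 h1
    have ha0 : a ≠ 0 := by rintro rfl; exact x.ne_zero (by rw [← ha, map_zero])
    exact ⟨Units.mk0 a ha0, Units.ext ha⟩

lemma herb [IsTotallyReal F] [IsTotallyReal K] :
    2 * (nm (Units.map (om σ).toMonoidHom)).range.relIndex (fx (Units.map (om σ).toMonoidHom))
      = (dl (Units.map (om σ).toMonoidHom)).range.relIndex (nm (Units.map (om σ).toMonoidHom)).ker := by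
  refine herbrand_abstract _ (fun x => Units.ext (h.om_om _)) (-1) (by simp) ?_ ?_ ?_ (Module.finrank ℚ F) ?_ ?_
  · apply Units.ext; simp
  · intro x hx
    have hc : (-1 : (𝓞 K)ˣ) ≠ 1 := by
      intro h1
      have h2 : (-1 : 𝓞 K) = 1 := by
        have := congrArg Units.val h1
        simpa using this
      have h3 : (2 : 𝓞 K) = 0 := by linear_combination -h2
      exact two_ne_zero h3
    have h4 : x ^ 4 = 1 := by
      rw [show 4 = 2 * 2 from rfl, pow_mul, hx]; simp
    have h5 : x ∈ Units.torsion K := by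
      rw [Units.torsion, CommGroup.mem_torsion]
      exact isOfFinOrder_iff_pow_eq_one.2 ⟨4, by norm_num, h4⟩
    rcases tors_pm K x h5 with rfl | rfl
    · exact hc (by rw [← hx, one_pow])
    · exact hc (by rw [← hx]; simp)
  · intro x hx; exact unit_sq_pm K x hx
  · rw [unit_sq_index, h.finrank_Q]
  · rw [← unit_sq_index F]
    have hinj : Function.Injective (Units.map (om f).toMonoidHom) := Units.map_injective (om_inj f)
    have h1 : (fx (Units.map (om σ).toMonoidHom)).map (sqh (𝓞 K)ˣ)
        = ((sqh (𝓞 F)ˣ).range).map (Units.map (om f).toMonoidHom) := by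
      rw [← h.range_uf]
      ext x
      constructor
      · rintro ⟨_, ⟨y, rfl⟩, rfl⟩; exact ⟨_, ⟨y, rfl⟩, by simp⟩
      · rintro ⟨_, ⟨y, rfl⟩, rfl⟩; exact ⟨_, ⟨y, rfl⟩, by simp⟩
    rw [h1, ← h.range_uf]
    exact relIndex_map_range _ hinj _

theorem ambig [IsTotallyReal F] [IsTotallyReal K] (T : Finset (Ideal (𝓞 K)))
    (hT : ∀ P : Ideal (𝓞 K), P.IsPrime → P ≠ ⊥ → (∀ x, om σ x - x ∈ P) → P ∈ T) :
    2 * Nat.card (fx (clm σ)) * (nm (um σ)).range.relIndex ((dv K).ker ⊓ fx (um σ)) ∣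
      Nat.card (ClassGroup (𝓞 F)) * 2 ^ T.card := by
  have hcomm : ∀ u, iou K (Units.map (om σ).toMonoidHom u) = um σ (iou K u) := fun u => iou_om σ u
  have hker : ∀ x, x ∈ (dv K).ker ↔ ∃ u, iou K u = x := fun x => by
    rw [MonoidHom.mem_ker, dv_eq_one_iff]
  have hPF' : (fx (um σ)).map (dv K) = ((dv F).range).map (Jm f) := by
    rw [← h.range_um]
    ext x
    constructor
    · rintro ⟨_, ⟨y, rfl⟩, rfl⟩; exact ⟨_, ⟨y, rfl⟩, Jm_dv f y⟩
    · rintro ⟨_, ⟨y, rfl⟩, rfl⟩; exact ⟨_, ⟨y, rfl⟩, (Jm_dv f y).symm⟩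
  have key := ambiguous_abstract (um σ) (Jm σ) (dv K) (fun x => Units.ext (h.inv x)) h.Jm_inv
    (fun x => Jm_dv σ x) (fun x hx => h.hilbert90 x hx) (Jm f).range
    (by rintro _ ⟨a, rfl⟩; rw [mem_fx, h.Jm_sf])
    (by rw [hPF']; rintro _ ⟨a, -, rfl⟩; exact ⟨a, rfl⟩) ?_
  · have c1 : (dv K).range.relIndex ((dv K).range.comap (dl (Jm σ))) = Nat.card (fx (clm σ)) := by
      rw [← cl_ker, Subgroup.relIndex_ker]
      have : ((cl K).ker.comap (dl (Jm σ))).map (cl K) = fx (clm σ) := by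
        ext c
        rw [mem_fx]
        constructor
        · rintro ⟨a, ha, rfl⟩
          rw [clm_cl]
          have : cl K (dl (Jm σ) a) = 1 := ha
          rw [dl_apply, map_div, div_eq_one] at this
          exact this
        · intro hc
          obtain ⟨a, rfl⟩ := cl_surj c
          refine ⟨a, ?_, rfl⟩
          show cl K (dl (Jm σ) a) = 1
          rw [dl_apply, map_div, div_eq_one, ← clm_cl, hc]
      rw [this]
    have c2 : ((fx (um σ)).map (dv K)).relIndex (Jm f).range = Nat.card (ClassGroup (𝓞 F)) := by
      rw [hPF', relIndex_map_range _ (Jm_inj f),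
         ← cl_ker, Subgroup.index_ker, MonoidHom.range_eq_top.2 cl_surj, Subgroup.card_top]
    rw [c1, c2] at key
    exact key.trans (mul_dvd_mul_left _ (h.fixed_index T hT))
  · have e1 : (dv K).ker.map (nm (um σ)) = (nm (Units.map (om σ).toMonoidHom)).range.map (iou K) := by
      rw [← range_iou]
      ext x
      constructor
      · rintro ⟨_, ⟨y, rfl⟩, rfl⟩; exact ⟨_, ⟨y, rfl⟩, by rw [nm_apply, nm_apply, map_mul, hcomm]⟩
      · rintro ⟨_, ⟨y, rfl⟩, rfl⟩; exact ⟨_, ⟨y, rfl⟩, by rw [nm_apply, nm_apply, map_mul, hcomm]⟩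
    have e2 : (dv K).ker.map (dl (um σ)) = (dl (Units.map (om σ).toMonoidHom)).range.map (iou K) := by
      rw [← range_iou]
      ext x
      constructor
      · rintro ⟨_, ⟨y, rfl⟩, rfl⟩; exact ⟨_, ⟨y, rfl⟩, by rw [dl_apply, dl_apply, map_div, hcomm]⟩
      · rintro ⟨_, ⟨y, rfl⟩, rfl⟩; exact ⟨_, ⟨y, rfl⟩, by rw [dl_apply, dl_apply, map_div, hcomm]⟩
    have e3 : (dv K).ker ⊓ fx (um σ) = (fx (Units.map (om σ).toMonoidHom)).map (iou K) := by
      rw [← range_iou]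
      ext x
      rw [Subgroup.mem_inf]
      constructor
      · rintro ⟨⟨y, rfl⟩, hy⟩
        refine ⟨y, ?_, rfl⟩
        rw [mem_fx, ← hcomm] at hy
        rw [SetLike.mem_coe, mem_fx]
        exact iou_inj hy
      · rintro ⟨y, hy, rfl⟩
        rw [SetLike.mem_coe, mem_fx] at hy
        refine ⟨⟨y, rfl⟩, ?_⟩
        rw [mem_fx, ← hcomm, hy]
    have e4 : (dv K).ker ⊓ (nm (um σ)).ker = ((nm (Units.map (om σ).toMonoidHom)).ker).map (iou K) := by
      rw [← range_iou]
      ext x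
      rw [Subgroup.mem_inf]
      constructor
      · rintro ⟨⟨y, rfl⟩, hy⟩
        refine ⟨y, ?_, rfl⟩
        rw [MonoidHom.mem_ker, nm_apply, ← hcomm, ← map_mul] at hy
        rw [SetLike.mem_coe, MonoidHom.mem_ker, nm_apply]
        exact iou_inj (by rw [hy, map_one])
      · rintro ⟨y, hy, rfl⟩
        rw [SetLike.mem_coe, MonoidHom.mem_ker, nm_apply] at hy
        refine ⟨⟨y, rfl⟩, ?_⟩
        rw [MonoidHom.mem_ker, nm_apply, ← hcomm, ← map_mul, hy, map_one]
    rw [e1, e2, e3, e4, Subgroup.relIndex_map_map_of_injective _ _ iou_inj,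
      Subgroup.relIndex_map_map_of_injective _ _ iou_inj]
    exact h.herb
end Quad
end
end TriQ

namespace TriQ
set_option linter.unusedSectionVars false
open NumberField nonZeroDivisors

section Grp
variable {G : Type*} [CommGroup G]

/-- the 2-primary part -/
def tw (G : Type*) [CommGroup G] : Subgroup G where
  carrier := {c | ∃ n : ℕ, c ^ 2 ^ n = 1}
  one_mem' := ⟨0, one_pow _⟩
  mul_mem' := by
    rintro a b ⟨n, hn⟩ ⟨m, hm⟩
    refine ⟨n + m, ?_⟩
    rw [mul_pow, pow_add, pow_mul, hn, one_pow, one_mul, mul_comm (2 ^ n), pow_mul, hm, one_pow]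
  inv_mem' := by
    rintro a ⟨n, hn⟩
    exact ⟨n, by rw [inv_pow, hn, inv_one]⟩

lemma mem_tw {c : G} : c ∈ tw G ↔ ∃ n : ℕ, c ^ 2 ^ n = 1 := Iff.rfl

lemma tw_pgroup : IsPGroup 2 (tw G) := by
  rintro ⟨c, n, hn⟩
  exact ⟨n, Subtype.ext hn⟩

lemma tw_eq (P : Sylow 2 G) : (P : Subgroup G) = tw G := by
  symm
  apply P.is_maximal' tw_pgroup
  intro x hx
  obtain ⟨n, hn⟩ := P.isPGroup' ⟨x, hx⟩
  exact ⟨n, congrArg Subtype.val hn⟩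

lemma tw_card [Finite G] : ∃ n, Nat.card (tw G) = 2 ^ n :=
  (IsPGroup.iff_card (p := 2)).1 tw_pgroup

lemma pow_dvd_tw [Finite G] (n : ℕ) (h : 2 ^ n ∣ Nat.card G) : 2 ^ n ∣ Nat.card (tw G) := by
  obtain ⟨P⟩ : Nonempty (Sylow 2 G) := inferInstance
  rw [← tw_eq P]
  have : Fact (Nat.Prime 2) := ⟨Nat.prime_two⟩
  rw [Sylow.card_eq_multiplicity]
  exact pow_dvd_pow _ ((Nat.prime_two.pow_dvd_iff_le_factorization Nat.card_pos.ne').1 h)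

lemma tw_odd [Finite G] (h : Odd (Nat.card G)) (c : G) (hc : c ∈ tw G) : c = 1 := by
  obtain ⟨n, hn⟩ := hc
  have h1 : c ^ Nat.card G = 1 := pow_card_eq_one'
  have h2 : orderOf c ∣ Nat.gcd (2 ^ n) (Nat.card G) :=
    Nat.dvd_gcd (orderOf_dvd_of_pow_eq_one hn) (orderOf_dvd_of_pow_eq_one h1)
  have h3 : Nat.Coprime (2 ^ n) (Nat.card G) := Nat.Coprime.pow_left _ (Nat.coprime_two_left.2 h)
  rw [h3] at h2
  exact orderOf_eq_one_iff.1 (Nat.dvd_one.1 h2)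

lemma odd_of_fx [Finite G] (φ : G →* G) (hφ : ∀ x, φ (φ x) = x) (h : Odd (Nat.card (fx φ))) :
    Odd (Nat.card G) := by
  by_contra hn
  rw [Nat.not_odd_iff_even] at hn
  have : Fact (Nat.Prime 2) := ⟨Nat.prime_two⟩
  obtain ⟨c, hc⟩ := exists_prime_orderOf_dvd_card' 2 hn.two_dvd
  have hc2 : c ^ 2 = 1 := by rw [← hc]; exact pow_orderOf_eq_one c
  have hc1 : c ≠ 1 := by rintro rfl; simp at hc
  have key : ∀ d : G, d ^ 2 = 1 → φ d = d → d = 1 := by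
    intro d hd hf
    have := tw_odd (G := fx φ) h ⟨d, (mem_fx φ).2 hf⟩ ⟨1, Subtype.ext (by simpa using hd)⟩
    exact congrArg Subtype.val this
  have h1 : c * φ c = 1 := by
    apply key
    · rw [mul_pow, ← map_pow, hc2, map_one, one_mul]
    · rw [map_mul, hφ, mul_comm]
  have h2 : φ c = c := by
    rw [eq_inv_of_mul_eq_one_right h1]
    rw [pow_two] at hc2
    exact (eq_inv_of_mul_eq_one_right hc2).symm
  exact hc1 (key c hc2 h2)

/-- 2-torsion bounded by 2 gives cyclic -/
lemma tw_cyclic [Finite G] (h : ∀ H : Subgroup G, (∀ x ∈ H, x ^ 2 = 1) → Nat.card H ≤ 2) :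
    IsCyclic (tw G) := by
  classical
  have key : ∀ k : ℕ, ∀ H : Subgroup G, (∀ x ∈ H, x ^ 2 ^ k = 1) → Nat.card H ≤ 2 ^ k := by
    intro k
    induction k with
    | zero =>
      intro H hH
      have : H = ⊥ := by
        rw [Subgroup.eq_bot_iff_forall]; intro x hx; simpa using hH x hx
      rw [this]; simp
    | succ k ih =>
      intro H hH
      have h1 := ih (H.map (sqh G)) (by
        rintro _ ⟨x, hx, rfl⟩
        rw [sqh_apply, ← pow_mul, ← pow_succ']; exact hH x hx)
      have h2 := h (H ⊓ (sqh G).ker) (fun x hx => hx.2)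
      have h3 : Nat.card H = Nat.card (H.map (sqh G)) * Nat.card (H ⊓ (sqh G).ker : Subgroup G) := by
        rw [← Subgroup.relIndex_ker, mul_comm, ← Subgroup.inf_relIndex_left]
        rw [← Subgroup.relIndex_bot_left, ← Subgroup.relIndex_bot_left]
        exact (Subgroup.relIndex_mul_relIndex _ _ _ bot_le inf_le_left).symm
      rw [h3, pow_succ]
      exact Nat.mul_le_mul h1 h2
  have : Fintype (tw G) := Fintype.ofFinite _
  apply isCyclic_of_card_pow_eq_one_le
  intro n hn
  obtain ⟨k, m, hm, rfl⟩ := Nat.exists_eq_two_pow_mul_odd hn.ne'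
  have h1 := key k (tw G ⊓ (powMonoidHom (2 ^ k) : G →* G).ker) (fun x hx => hx.2)
  have hm0 : 0 < m := hm.pos
  refine le_trans ?_ (h1.trans (Nat.le_mul_of_pos_right _ hm0))
  rw [← Fintype.card_subtype, ← Nat.card_eq_fintype_card]
  have hmem : ∀ a : {a : tw G // a ^ (2 ^ k * m) = 1},
      (a.1 : G) ∈ tw G ⊓ (powMonoidHom (2 ^ k) : G →* G).ker := by
    rintro ⟨⟨a, n, hn⟩, ha⟩
    have ha' : a ^ (2 ^ k * m) = 1 := congrArg Subtype.val ha
    refine Subgroup.mem_inf.2 ⟨⟨n, hn⟩, ?_⟩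
    rw [MonoidHom.mem_ker, powMonoidHom_apply]
    have h2 : orderOf (a ^ 2 ^ k) ∣ Nat.gcd (2 ^ n) m :=
      Nat.dvd_gcd (orderOf_dvd_of_pow_eq_one (by rw [← pow_mul, mul_comm, pow_mul, hn, one_pow]))
        (orderOf_dvd_of_pow_eq_one (by rw [← pow_mul, ha']))
    have h3 : Nat.Coprime (2 ^ n) m := Nat.Coprime.pow_left _ (Nat.coprime_two_left.2 hm)
    rw [h3] at h2
    exact orderOf_eq_one_iff.1 (Nat.dvd_one.1 h2)
  refine Nat.card_le_card_of_injective (fun a => ⟨_, hmem a⟩) ?_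
  intro a b hab
  apply Subtype.ext; apply Subtype.ext
  exact congrArg (fun z : (tw G ⊓ (powMonoidHom (2 ^ k) : G →* G).ker : Subgroup G) => (z : G)) hab

lemma dvd_card_odd {m : ℕ} {n t : ℕ} (hn : Odd n) (h : 2 ^ m ∣ n * 2 ^ t) : m ≤ t := by
  have h3 : Nat.Coprime (2 ^ m) n := Nat.Coprime.pow_left _ (Nat.coprime_two_left.2 hn)
  have := h3.dvd_of_dvd_mul_left h
  exact (Nat.pow_dvd_pow_iff_le_right (by norm_num)).1 this

end Grp

section
variable {F K : Type*} [Field F] [NumberField F] [Field K] [NumberField K]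
namespace Quad
variable {f : F →+* K} {σ : K →+* K} (h : Quad f σ)
include h

lemma clm_inv (c : ClassGroup (𝓞 K)) : clm σ (clm σ c) = c := by
  obtain ⟨a, rfl⟩ := cl_surj c
  rw [clm_cl, clm_cl, h.Jm_inv]

lemma clm_norm (c : ClassGroup (𝓞 K)) : ∃ b, c * clm σ c = clm f b := by
  obtain ⟨a, rfl⟩ := cl_surj c
  obtain ⟨b, hb⟩ := h.norm_J a
  exact ⟨cl F b, by rw [clm_cl, clm_cl, ← map_mul, hb]⟩

/-- if the base has odd class number then the involution inverts 2-primary classes -/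
lemma acts_inv (hF : Odd (Nat.card (ClassGroup (𝓞 F)))) (c : ClassGroup (𝓞 K)) (hc : c ∈ tw _) :
    clm σ c = c⁻¹ := by
  obtain ⟨b, hb⟩ := h.clm_norm c
  obtain ⟨n, hn⟩ := hc
  have h1 : (c * clm σ c) ^ 2 ^ n = 1 := by rw [mul_pow, ← map_pow, hn, map_one, one_mul]
  have h2 : (c * clm σ c) ^ Nat.card (ClassGroup (𝓞 F)) = 1 := by
    rw [hb, ← map_pow, pow_card_eq_one', map_one]
  have h3 : orderOf (c * clm σ c) ∣ Nat.gcd (2 ^ n) (Nat.card (ClassGroup (𝓞 F))) :=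
    Nat.dvd_gcd (orderOf_dvd_of_pow_eq_one h1) (orderOf_dvd_of_pow_eq_one h2)
  have h4 : Nat.Coprime (2 ^ n) (Nat.card (ClassGroup (𝓞 F))) :=
    Nat.Coprime.pow_left _ (Nat.coprime_two_left.2 hF)
  rw [h4] at h3
  exact eq_inv_of_mul_eq_one_right (orderOf_eq_one_iff.1 (Nat.dvd_one.1 h3))

/-- capitulation kernel is killed by 2 -/
lemma capit (c : ClassGroup (𝓞 F)) (hc : clm f c = 1) : c ^ 2 = 1 := by
  obtain ⟨a, rfl⟩ := cl_surj c
  rw [clm_cl] at hc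
  have h1 : Jm f a ∈ (dv K).range := by rw [← cl_ker]; exact hc
  obtain ⟨x, hx⟩ := h1
  obtain ⟨y, hy⟩ := h.nm_dv x
  have h2 : Jm f (a ^ 2) = Jm f (dv F y) := by
    rw [Jm_dv, ← hy, map_mul, hx, ← Jm_dv, hx, h.Jm_sf, map_pow, pow_two]
  have h3 : a ^ 2 ∈ (cl F).ker := by rw [cl_ker]; exact ⟨y, (Jm_inj f h2).symm⟩
  rw [← map_pow]; exact h3

/-- ramification bound -/
def RamLe (σ : K →+* K) (t : ℕ) : Prop := ∃ T : Finset (Ideal (𝓞 K)), T.card ≤ t ∧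
  ∀ P : Ideal (𝓞 K), P.IsPrime → P ≠ ⊥ → (∀ x, om σ x - x ∈ P) → P ∈ T

/-- `u` is not a norm -/
def NN (f : F →+* K) (σ : K →+* K) (u : F) : Prop := ∀ x : K, x * σ x ≠ f u

lemma am0 [IsTotallyReal F] [IsTotallyReal K] {t : ℕ} (ht : RamLe σ t) :
    2 * Nat.card (fx (clm σ)) ∣ Nat.card (ClassGroup (𝓞 F)) * 2 ^ t := by
  obtain ⟨T, hT, hT'⟩ := ht
  exact ((Dvd.intro _ rfl).trans (h.ambig T hT')).trans (mul_dvd_mul_left _ (pow_dvd_pow _ hT))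

lemma sq_mem (x : Kˣ) (hx : x ∈ (dv K).ker ⊓ fx (um σ)) : x ^ 2 ∈ (nm (um σ)).range := by
  have := (mem_fx _).1 (Subgroup.mem_inf.1 hx).2
  exact ⟨x, by rw [nm_apply, this, pow_two]⟩

lemma unit_mem (u : (𝓞 F)ˣ) : um f (iou F u) ∈ (dv K).ker ⊓ fx (um σ) := by
  refine Subgroup.mem_inf.2 ⟨?_, ?_⟩
  · rw [MonoidHom.mem_ker, dv_eq_one_iff]; exact ⟨_, iou_om f u⟩
  · rw [← h.range_um]; exact ⟨_, rfl⟩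

lemma nn_mem (u : (𝓞 F)ˣ) (hu : NN f σ (u : 𝓞 F)) : um f (iou F u) ∉ (nm (um σ)).range := by
  rintro ⟨x, hx⟩
  exact hu x (congrArg Units.val hx)

lemma am1 [IsTotallyReal F] [IsTotallyReal K] {t : ℕ} (ht : RamLe σ t)
    (u : (𝓞 F)ˣ) (hu : NN f σ (u : 𝓞 F)) :
    4 * Nat.card (fx (clm σ)) ∣ Nat.card (ClassGroup (𝓞 F)) * 2 ^ t := by
  obtain ⟨T, hT, hT'⟩ := ht
  have h1 := two_dvd_relIndex _ _ h.sq_mem _ (h.unit_mem u) (h.nn_mem u hu)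
  have h2 := (h.ambig T hT').trans (mul_dvd_mul_left (Nat.card (ClassGroup (𝓞 F))) (pow_dvd_pow 2 hT))
  refine Dvd.dvd.trans ?_ h2
  rw [show 4 * Nat.card (fx (clm σ)) = 2 * Nat.card (fx (clm σ)) * 2 by ring]
  exact mul_dvd_mul_left _ h1

lemma am2 [IsTotallyReal F] [IsTotallyReal K] {t : ℕ} (ht : RamLe σ t)
    (u v : (𝓞 F)ˣ) (hu : NN f σ (u : 𝓞 F)) (hv : NN f σ (v : 𝓞 F)) (huv : NN f σ (u * v : 𝓞 F)) :
    8 * Nat.card (fx (clm σ)) ∣ Nat.card (ClassGroup (𝓞 F)) * 2 ^ t := by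
  obtain ⟨T, hT, hT'⟩ := ht
  have h1 := four_dvd_relIndex _ _ h.sq_mem _ _ (h.unit_mem u) (h.unit_mem v) (h.nn_mem u hu)
    (h.nn_mem v hv) (by rw [← map_mul, ← map_mul]; exact h.nn_mem (u * v) huv)
  have h2 := (h.ambig T hT').trans (mul_dvd_mul_left (Nat.card (ClassGroup (𝓞 F))) (pow_dvd_pow 2 hT))
  refine Dvd.dvd.trans ?_ h2
  rw [show 8 * Nat.card (fx (clm σ)) = 2 * Nat.card (fx (clm σ)) * 4 by ring]
  exact mul_dvd_mul_left _ h1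

lemma odd_of {a : ℕ} (hF : Odd (Nat.card (ClassGroup (𝓞 F))))
    (ha : 2 ^ a * Nat.card (fx (clm σ)) ∣ Nat.card (ClassGroup (𝓞 F)) * 2 ^ a) :
    Odd (Nat.card (ClassGroup (𝓞 K))) := by
  refine odd_of_fx (clm σ) h.clm_inv ?_
  rw [mul_comm] at ha
  exact hF.of_dvd_nat (Nat.dvd_of_mul_dvd_mul_right (by positivity) ha)

lemma cyclic_of {a : ℕ} (hF : Odd (Nat.card (ClassGroup (𝓞 F))))
    (ha : 2 ^ a * Nat.card (fx (clm σ)) ∣ Nat.card (ClassGroup (𝓞 F)) * 2 ^ (a + 1)) :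
    IsCyclic (tw (ClassGroup (𝓞 K))) := by
  have hb : Nat.card (fx (clm σ)) ∣ Nat.card (ClassGroup (𝓞 F)) * 2 ^ 1 := by
    refine Nat.dvd_of_mul_dvd_mul_left (k := 2 ^ a) (by positivity) (ha.trans ?_)
    rw [pow_add]; exact dvd_of_eq (by ring)
  apply tw_cyclic
  intro H hH
  have hle : H ≤ fx (clm σ) := by
    intro c hc
    have h2 := hH c hc
    rw [mem_fx, h.acts_inv hF c ⟨1, by simpa using h2⟩]
    rw [pow_two] at h2
    exact (eq_inv_of_mul_eq_one_right h2).symm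
  have hp : IsPGroup 2 H := fun x => ⟨1, Subtype.ext (by simpa using hH x x.2)⟩
  have : Fact (Nat.Prime 2) := ⟨Nat.prime_two⟩
  obtain ⟨n, hn⟩ := (IsPGroup.iff_card (p := 2)).1 hp
  have h3 := (Subgroup.card_dvd_of_le hle).trans hb
  rw [hn] at h3 ⊢
  have h4 := dvd_card_odd hF h3
  calc 2 ^ n ≤ 2 ^ 1 := Nat.pow_le_pow_right (by norm_num) h4
    _ = 2 := rfl

/-- class number transfer when the involution acts trivially on the 2-part -/
lemma tw_le {a b : ℕ} (htriv : ∀ c ∈ tw (ClassGroup (𝓞 K)), clm σ c = c)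
    (ha : 2 ^ (a + b) * Nat.card (fx (clm σ)) ∣ Nat.card (ClassGroup (𝓞 F)) * 2 ^ a) :
    2 ^ b * Nat.card (tw (ClassGroup (𝓞 K))) ∣ Nat.card (tw (ClassGroup (𝓞 F))) := by
  have hb : 2 ^ b * Nat.card (fx (clm σ)) ∣ Nat.card (ClassGroup (𝓞 F)) := by
    refine Nat.dvd_of_mul_dvd_mul_left (k := 2 ^ a) (by positivity) ?_
    rw [← mul_assoc, ← pow_add, mul_comm (2 ^ a) (Nat.card _)]; exact ha
  have hle : tw (ClassGroup (𝓞 K)) ≤ fx (clm σ) := fun c hc => (mem_fx _).2 (htriv c hc)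
  have h3 := (mul_dvd_mul_left (2 ^ b) (Subgroup.card_dvd_of_le hle)).trans hb
  obtain ⟨n, hn⟩ := tw_card (G := ClassGroup (𝓞 K))
  rw [hn, ← pow_add] at h3 ⊢
  exact pow_dvd_tw _ h3
end Quad
end
end TriQ

namespace TriQ
set_option linter.unusedSectionVars false
open NumberField nonZeroDivisors

/-- `K = F(θ)` with `θ ^ 2 = n` a natural number that is not a square in `F`. -/
structure QS {F K : Type*} [Field F] [Field K] (f : F →+* K) (n : ℕ) (θ : K) : Prop where
  sq : θ ^ 2 = (n : K)
  ns : ∀ a : F, a ^ 2 ≠ (n : F)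
  span : ∀ x : K, ∃ a b : F, x = f a + f b * θ

namespace QS
variable {F K : Type*} [Field F] [Field K] [CharZero F] [CharZero K] {f : F →+* K} {n : ℕ} {θ : K} (h : QS f n θ)
include h

lemma coord {a b c d : F} (e : f a + f b * θ = f c + f d * θ) : a = c ∧ b = d := by
  by_cases hb : b = d
  · subst hb
    exact ⟨f.injective (by linear_combination e), rfl⟩
  · exfalso
    have hb' : f (b - d) ≠ 0 := by
      rw [Ne, map_eq_zero]; exact sub_ne_zero.2 hb
    apply h.ns ((c - a) / (b - d))
    apply f.injective
    rw [map_pow, map_div₀, map_natCast, ← h.sq]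
    congr 1
    rw [div_eq_iff hb', map_sub, map_sub]
    linear_combination -e

lemma lift {R : Type*} [CommRing R] (g : F →+* R) (r : R) (hr : r ^ 2 = (n : R)) :
    ∃ G : K →+* R, (∀ a, G (f a) = g a) ∧ G θ = r := by
  choose A B hAB using h.span
  have key : ∀ x a b, x = f a + f b * θ → A x = a ∧ B x = b := fun x a b e =>
    h.coord ((hAB x).symm.trans e)
  refine ⟨{ toFun := fun x => g (A x) + g (B x) * r, map_one' := ?_, map_mul' := ?_, map_zero' := ?_, map_add' := ?_ }, ?_, ?_⟩
  · obtain ⟨h1, h2⟩ := key 1 1 0 (by simp)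
    rw [h1, h2]; simp
  · intro x y
    obtain ⟨h1, h2⟩ := key (x * y) (A x * A y + n * (B x * B y)) (A x * B y + B x * A y) (by
      simp only [map_mul, map_add, map_natCast]
      rw [← h.sq]
      conv_lhs => rw [hAB x, hAB y]
      ring)
    rw [h1, h2]
    simp only [map_mul, map_add, map_natCast]
    rw [← hr]; ring
  · obtain ⟨h1, h2⟩ := key 0 0 0 (by simp)
    simp only [h1, h2]; simp
  · intro x y
    obtain ⟨h1, h2⟩ := key (x + y) (A x + A y) (B x + B y) (by
      simp only [map_add]
      conv_lhs => rw [hAB x, hAB y]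
      ring)
    simp only [h1, h2, map_add]; ring
  · intro a
    obtain ⟨h1, h2⟩ := key (f a) a 0 (by simp)
    show g (A (f a)) + g (B (f a)) * r = g a
    rw [h1, h2]; simp
  · obtain ⟨h1, h2⟩ := key θ 0 1 (by simp)
    show g (A θ) + g (B θ) * r = r
    rw [h1, h2]; simp

lemma n_ne : (n : F) ≠ 0 := by
  intro h0
  exact h.ns 0 (by rw [h0]; simp)

lemma θ_ne : θ ≠ 0 := by
  intro h0
  have := h.sq
  rw [h0] at this
  have h2 := h.n_ne
  have h3 : (n : K) = 0 := by rw [← this]; simp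
  have h4 : n = 0 := by exact_mod_cast h3
  exact h2 (by rw [h4]; simp)

lemma conj : ∃ σ : K →+* K, (∀ a, σ (f a) = f a) ∧ σ θ = -θ :=
  h.lift f (-θ) (by rw [neg_sq, h.sq])

lemma quad {σ : K →+* K} (hf : ∀ a, σ (f a) = f a) (hθ : σ θ = -θ) : Quad f σ := by
  refine ⟨?_, ?_, ?_⟩
  · intro x
    obtain ⟨a, b, rfl⟩ := h.span x
    simp [hf, hθ]
  · intro x
    constructor
    · intro hx
      obtain ⟨a, b, rfl⟩ := h.span x
      have : f a + f b * θ = f a + f (-b) * θ := by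
        rw [← hx]; simp [hf, hθ]
      have h2 := (h.coord this).2
      have h3 : b = 0 := by
        have : (2 : F) * b = 0 := by linear_combination h2
        simpa using this
      exact ⟨a, by rw [h3]; simp⟩
    · rintro ⟨a, rfl⟩; exact hf a
  · refine ⟨θ, ?_⟩
    rw [hθ]
    intro e
    have : (2 : K) * θ = 0 := by linear_combination -e
    have := h.θ_ne
    simp_all

lemma ns_up (m : ℕ) (h1 : ∀ a : F, a ^ 2 ≠ (m : F)) (h2 : ∀ a : F, a ^ 2 ≠ ((m * n : ℕ) : F)) (x : K) :
    x ^ 2 ≠ (m : K) := by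
  intro hx
  obtain ⟨a, b, rfl⟩ := h.span x
  have e : f (a ^ 2 + n * b ^ 2) + f (2 * a * b) * θ = f m + f 0 * θ := by
    simp only [map_add, map_mul, map_pow, map_natCast, map_zero, map_ofNat]
    rw [← hx, ← h.sq]; ring
  obtain ⟨e1, e2⟩ := h.coord e
  rcases mul_eq_zero.1 e2 with e3 | e3
  · have e4 : a = 0 := by simpa using e3
    apply h2 (n * b)
    rw [e4] at e1
    push_cast
    rw [← e1]; ring
  · rw [e3] at e1
    apply h1 a
    rw [← e1]; ring

lemma norm_form {σ : K →+* K} (hf : ∀ a, σ (f a) = f a) (hθ : σ θ = -θ) (x : K) :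
    ∃ a b : F, x * σ x = f (a ^ 2 - n * b ^ 2) := by
  obtain ⟨a, b, rfl⟩ := h.span x
  refine ⟨a, b, ?_⟩
  simp only [map_add, map_mul, map_pow, map_natCast, map_sub, hf, hθ]
  rw [← h.sq]; ring

lemma totallyReal [hF : IsTotallyReal F] : IsTotallyReal K := by
  refine ⟨fun v => ?_⟩
  rw [← InfinitePlace.mk_embedding v, InfinitePlace.isReal_mk_iff, ComplexEmbedding.isReal_iff]
  set φ := v.embedding
  have h1 : ComplexEmbedding.IsReal (φ.comp f) := by
    rw [← InfinitePlace.isReal_mk_iff]; exact hF.isReal _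
  rw [ComplexEmbedding.isReal_iff] at h1
  have h2 : ∀ a, (starRingEnd ℂ) (φ (f a)) = φ (f a) := fun a => RingHom.congr_fun h1 a
  have h3 : (φ θ) ^ 2 = (n : ℂ) := by rw [← map_pow, h.sq, map_natCast]
  have h4 : (starRingEnd ℂ) (φ θ) = φ θ := by
    have h5 : ((Real.sqrt n : ℝ) : ℂ) ^ 2 = n := by
      rw [← Complex.ofReal_pow, Real.sq_sqrt (Nat.cast_nonneg n)]; simp
    rw [← h5] at h3
    rcases sq_eq_sq_iff_eq_or_eq_neg.1 h3 with h6 | h6 <;> rw [h6] <;> simp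
  ext x
  obtain ⟨a, b, rfl⟩ := h.span x
  show (starRingEnd ℂ) (φ (f a + f b * θ)) = φ (f a + f b * θ)
  simp only [map_add, map_mul, h2, h4]
end QS

lemma qs_mk {F : Type*} [Field F] [CharZero F] (M : IntermediateField ℚ ℂ) (f : F →+* M) (θ : M) (n : ℕ)
    (hθ : θ ^ 2 = (n : M)) (ns : ∀ a : F, a ^ 2 ≠ (n : F))
    (hS : ∀ N : IntermediateField ℚ ℂ, (∀ a, (f a : ℂ) ∈ N) → (θ : ℂ) ∈ N → M ≤ N) : QS f n θ := by
  refine ⟨hθ, ns, ?_⟩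
  have hn : ∀ a b : F, a ^ 2 - n * b ^ 2 = 0 → a = 0 ∧ b = 0 := by
    intro a b e
    by_cases hb : b = 0
    · subst hb; simpa using e
    · exfalso
      apply ns (a / b)
      field_simp
      linear_combination e
  have hs : (θ : ℂ) ^ 2 = (n : ℂ) := by exact_mod_cast congrArg (fun z : M => (z : ℂ)) hθ
  have hfa : ∀ a b, ((f (a + b) : M) : ℂ) = f a + f b := fun a b => by rw [map_add]; rfl
  have hfm : ∀ a b, ((f (a * b) : M) : ℂ) = f a * f b := fun a b => by rw [map_mul]; rfl
  have hfn : ∀ k : ℕ, ((f k : M) : ℂ) = k := fun k => by rw [map_natCast]; rfl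
  let N : IntermediateField ℚ ℂ :=
    { carrier := {x | ∃ a b : F, x = f a + f b * θ}
      mul_mem' := by
        rintro _ _ ⟨a, b, rfl⟩ ⟨c, d, rfl⟩
        refine ⟨a * c + n * (b * d), a * d + b * c, ?_⟩
        simp only [hfa, hfm, hfn]; rw [← hs]; ring
      add_mem' := by
        rintro _ _ ⟨a, b, rfl⟩ ⟨c, d, rfl⟩
        refine ⟨a + c, b + d, ?_⟩
        simp only [hfa]; ring
      algebraMap_mem' := by
        intro r
        refine ⟨(r : F), 0, ?_⟩
        have : ((f (r : F) : M) : ℂ) = r := by rw [map_ratCast]; rfl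
        rw [this]; simp
      inv_mem' := by
        rintro _ ⟨a, b, rfl⟩
        by_cases h0 : a ^ 2 - n * b ^ 2 = 0
        · obtain ⟨rfl, rfl⟩ := hn a b h0
          exact ⟨0, 0, by simp⟩
        · refine ⟨a * (a ^ 2 - n * b ^ 2)⁻¹, (-b) * (a ^ 2 - n * b ^ 2)⁻¹, ?_⟩
          have e1 : ((f ((a ^ 2 - n * b ^ 2)) : M) : ℂ) * ((f ((a ^ 2 - n * b ^ 2)⁻¹) : M) : ℂ) = 1 := by
            rw [← hfm, mul_inv_cancel₀ h0, map_one]; rfl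
          have e2 : ((f ((a ^ 2 - n * b ^ 2)) : M) : ℂ) = (f a : ℂ) ^ 2 - n * (f b : ℂ) ^ 2 := by
            rw [map_sub, map_mul, map_pow, map_pow, map_natCast]; push_cast; rfl
          have e3 : ((f (-b) : M) : ℂ) = -(f b : ℂ) := by rw [map_neg]; rfl
          symm
          apply eq_inv_of_mul_eq_one_left
          rw [e2, ← hs] at e1
          rw [hfm, hfm, e3]
          linear_combination e1 }
  have hN := hS N (fun a => ⟨a, 0, by simp⟩) ⟨0, 1, by simp⟩
  intro x
  obtain ⟨a, b, e⟩ := hN x.2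
  exact ⟨a, b, Subtype.ext e⟩

lemma hom_ext_adjoin {S : Set ℂ} {R : Type*} [Field R] [CharZero R]
    (φ ψ : IntermediateField.adjoin ℚ S →+* R)
    (e : ∀ x (hx : x ∈ S), φ ⟨x, IntermediateField.subset_adjoin ℚ S hx⟩ = ψ ⟨x, IntermediateField.subset_adjoin ℚ S hx⟩) :
    φ = ψ := by
  have := IntermediateField.algHom_ext_of_eq_adjoin ℚ (S := IntermediateField.adjoin ℚ S) rfl
    (φ₁ := φ.toRatAlgHom) (φ₂ := ψ.toRatAlgHom) e
  ext x
  exact DFunLike.congr_fun this x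

end TriQ

namespace TriQ
set_option linter.unusedSectionVars false
open NumberField nonZeroDivisors

section
variable {K : Type*} [Field K] [NumberField K]

lemma absNorm_nat (n : ℕ) : Ideal.absNorm (Ideal.span {(n : 𝓞 K)}) = n ^ Module.finrank ℚ K := by
  rw [Ideal.absNorm_span_singleton, ← map_natCast (algebraMap ℤ (𝓞 K)), Algebra.norm_algebraMap,
    RingOfIntegers.rank]
  simp

lemma absNorm_int (n : ℤ) : Ideal.absNorm (Ideal.span {(n : 𝓞 K)}) = n.natAbs ^ Module.finrank ℚ K := by
  rw [Ideal.absNorm_span_singleton, ← map_intCast (algebraMap ℤ (𝓞 K)), Algebra.norm_algebraMap,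
    RingOfIntegers.rank]
  simp [Int.natAbs_pow]

lemma absNorm_prime_pow {l : ℕ} (hl : l.Prime) (P : Ideal (𝓞 K)) (hP : P.IsPrime) (hlP : (l : 𝓞 K) ∈ P) :
    ∃ k, 1 ≤ k ∧ Ideal.absNorm P = l ^ k := by
  have h1 : Ideal.absNorm P ∣ l ^ Module.finrank ℚ K := by
    rw [← absNorm_nat]
    apply map_dvd
    rw [Ideal.dvd_span_singleton]; exact hlP
  obtain ⟨k, -, hk⟩ := (Nat.dvd_prime_pow hl).1 h1
  refine ⟨k, ?_, hk⟩
  by_contra h0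
  have : k = 0 := by omega
  rw [this, pow_zero, Ideal.absNorm_eq_one_iff] at hk
  exact hP.ne_top hk

lemma norm_w1 {l : ℕ} (hl : l.Prime) (P : Ideal (𝓞 K)) (hP : P.IsPrime) (hlP : (l : 𝓞 K) ∈ P) :
    l ^ 1 ∣ Ideal.absNorm P := by
  obtain ⟨k, hk, e⟩ := absNorm_prime_pow hl P hP hlP
  rw [e]; exact pow_dvd_pow _ hk

lemma norm_w2 {l : ℕ} (hl : l.Prime) (hno : IsEmpty (𝓞 K →+* ZMod l)) (P : Ideal (𝓞 K)) (hP : P.IsPrime)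
    (hlP : (l : 𝓞 K) ∈ P) : l ^ 2 ∣ Ideal.absNorm P := by
  obtain ⟨k, hk, e⟩ := absNorm_prime_pow hl P hP hlP
  rw [e]; apply pow_dvd_pow
  by_contra h0
  have : k = 1 := by omega
  rw [this, pow_one, Ideal.absNorm_apply, Submodule.cardQuot_apply] at e
  have hfin : Finite (𝓞 K ⧸ P) := Nat.finite_of_card_ne_zero (by rw [e]; exact hl.ne_zero)
  have := Fintype.ofFinite (𝓞 K ⧸ P)
  rw [Nat.card_eq_fintype_card] at e
  exact hno.elim (((ZMod.ringEquivOfPrime (𝓞 K ⧸ P) hl e).symm : _ →+* _).comp (Ideal.Quotient.mk P))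

lemma cnt {a : 𝓞 K} (ha : a ≠ 0) {l w : ℕ} (S : Finset (Ideal (𝓞 K)))
    (hS : ∀ P ∈ S, P.IsPrime ∧ a ∈ P ∧ l ^ w ∣ Ideal.absNorm P) :
    l ^ (w * S.card) ∣ Ideal.absNorm (Ideal.span {a}) := by
  have h1 : ∏ P ∈ S, P ∣ Ideal.span {a} := by
    apply Finset.prod_primes_dvd
    · intro P hP
      refine Ideal.prime_of_isPrime ?_ (hS P hP).1
      rintro rfl
      exact ha (by simpa using (hS _ hP).2.1)
    · intro P hP
      rw [Ideal.dvd_span_singleton]; exact (hS P hP).2.1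
  have h2 := map_dvd Ideal.absNorm h1
  refine Dvd.dvd.trans ?_ h2
  rw [map_prod, pow_mul, ← Finset.prod_const]
  exact Finset.prod_dvd_prod_of_dvd _ _ (fun P hP => (hS P hP).2.2)

lemma cnt_le {a : 𝓞 K} (ha : a ≠ 0) {l w j : ℕ}
    (hw : ∀ P : Ideal (𝓞 K), P.IsPrime → (l : 𝓞 K) ∈ P → l ^ w ∣ Ideal.absNorm P)
    (hv : ¬ l ^ (w * (j + 1)) ∣ Ideal.absNorm (Ideal.span {a})) :
    ∃ T : Finset (Ideal (𝓞 K)), T.card ≤ j ∧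
      ∀ P : Ideal (𝓞 K), P.IsPrime → a ∈ P → (l : 𝓞 K) ∈ P → P ∈ T := by
  classical
  have hfin : {P : Ideal (𝓞 K) | P.IsPrime ∧ a ∈ P ∧ (l : 𝓞 K) ∈ P}.Finite := by
    have h0 : Ideal.span {a} ≠ 0 := by
      rw [Ideal.zero_eq_bot, Ne, Ideal.span_singleton_eq_bot]; exact ha
    have := UniqueFactorizationMonoid.fintypeSubtypeDvd _ h0
    have h1 : {P : Ideal (𝓞 K) | P ∣ Ideal.span {a}}.Finite :=
      Set.finite_coe_iff.1 (show Finite {x // x ∣ Ideal.span {a}} from inferInstance)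
    exact h1.subset (fun P hP => by
      show P ∣ _
      rw [Ideal.dvd_span_singleton]; exact hP.2.1)
  refine ⟨hfin.toFinset, ?_, fun P h1 h2 h3 => by simpa using ⟨h1, h2, h3⟩⟩
  by_contra hc
  apply hv
  have := cnt ha (l := l) (w := w) hfin.toFinset (fun P hP => by
    have : P.IsPrime ∧ a ∈ P ∧ (l : 𝓞 K) ∈ P := by simpa using hP
    exact ⟨this.1, this.2.1, hw P this.1 this.2.2⟩)
  exact (pow_dvd_pow _ (Nat.mul_le_mul_left _ (by omega))).trans this

lemma norm_sqrt {a : 𝓞 K} {n : ℕ} (ha : a ^ 2 = n) {d : ℕ} (hd : Module.finrank ℚ K = 2 * d) :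
    Ideal.absNorm (Ideal.span {a}) = n ^ d := by
  have h1 : Ideal.absNorm (Ideal.span {a}) ^ 2 = (n ^ d) ^ 2 := by
    rw [← map_pow, Ideal.span_singleton_pow, ha, absNorm_nat, hd, mul_comm, pow_mul]
  exact Nat.pow_left_injective (by norm_num) h1

lemma norm_conj {σ : K →+* K} (hσ : ∀ x, σ (σ x) = x) (a : 𝓞 K) :
    Ideal.absNorm (Ideal.span {om σ a}) = Ideal.absNorm (Ideal.span {a}) := by
  have hc : (om σ).comp (om σ) = RingHom.id _ := by
    ext x; exact hσ x
  rw [Ideal.absNorm_span_singleton, Ideal.absNorm_span_singleton]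
  congr 1
  exact Algebra.norm_eq_of_algEquiv (RingEquiv.ofRingHom (om σ) (om σ) hc hc).toIntAlgEquiv a

lemma norm_mul_conj {σ : K →+* K} (hσ : ∀ x, σ (σ x) = x) {a : 𝓞 K} {n : ℤ} (ha : a * om σ a = n)
    {d : ℕ} (hd : Module.finrank ℚ K = 2 * d) :
    Ideal.absNorm (Ideal.span {a}) = n.natAbs ^ d := by
  have h1 : Ideal.absNorm (Ideal.span {a}) ^ 2 = (n.natAbs ^ d) ^ 2 := by
    rw [pow_two]
    nth_rewrite 2 [← norm_conj hσ]
    rw [← map_mul, Ideal.span_singleton_mul_span_singleton, ha, absNorm_int, hd, mul_comm, pow_mul]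
  exact Nat.pow_left_injective (by norm_num) h1

lemma half_int (t : 𝓞 K) (n : ℕ) (ht : t ^ 2 = n) (hn : n % 4 = 1) :
    ∃ x : 𝓞 K, 2 * x = 1 + t ∧ x ^ 2 = x + ((n / 4 : ℕ) : 𝓞 K) := by
  obtain ⟨m, hm⟩ : ∃ m, m = n / 4 := ⟨_, rfl⟩
  rw [← hm]
  have hnm : n = 4 * m + 1 := by omega
  have ht' : (t : K) ^ 2 = 4 * (m : K) + 1 := by
    have := congrArg (algebraMap (𝓞 K) K) ht
    rw [map_pow, map_natCast, hnm] at this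
    rw [this]; push_cast; ring
  have hx : IsIntegral ℤ ((1 + (t : K)) / 2) := by
    refine ⟨Polynomial.X ^ 2 - Polynomial.X - Polynomial.C (m : ℤ), ?_, ?_⟩
    · monicity!
    · rw [Polynomial.eval₂_sub, Polynomial.eval₂_sub, Polynomial.eval₂_C, Polynomial.eval₂_X_pow,
        Polynomial.eval₂_X, map_natCast]
      linear_combination ht' / 4
  obtain ⟨y, hy⟩ : ∃ y : 𝓞 K, algebraMap (𝓞 K) K y = ((1 + (t : K)) / 2) := ⟨⟨_, hx⟩, rfl⟩
  refine ⟨y, ?_, ?_⟩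
  · apply RingOfIntegers.coe_injective
    rw [map_mul, map_add, map_one, map_ofNat, hy]
    ring
  · have : ((1 + (t : K)) / 2) ^ 2 = ((1 + (t : K)) / 2) + (m : K) := by
      linear_combination ht' / 4
    apply RingOfIntegers.coe_injective
    rw [map_pow, map_add, map_natCast, hy]
    exact this

lemma sqrt_int (θ : K) (n : ℕ) (ht : θ ^ 2 = n) : ∃ t : 𝓞 K, (t : K) = θ ∧ t ^ 2 = n := by
  have hx : IsIntegral ℤ θ := by
    refine ⟨Polynomial.X ^ 2 - Polynomial.C (n : ℤ), ?_, ?_⟩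
    · monicity!
    · simp [ht]
  obtain ⟨y, hy⟩ : ∃ y : 𝓞 K, algebraMap (𝓞 K) K y = θ := ⟨⟨_, hx⟩, rfl⟩
  refine ⟨y, hy, ?_⟩
  apply RingOfIntegers.coe_injective
  rw [map_pow, map_natCast, hy]
  exact ht

lemma ram2 {σ : K →+* K} {P : Ideal (𝓞 K)} (hr : ∀ x, om σ x - x ∈ P) (t : 𝓞 K) (ht : om σ t = -t) :
    2 * t ∈ P := by
  have := P.neg_mem (hr t)
  rw [ht] at this
  convert this using 1; ring

lemma ram1 {σ : K →+* K} {P : Ideal (𝓞 K)} (hr : ∀ x, om σ x - x ∈ P) (t : 𝓞 K) (ht : om σ t = -t)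
    {n : ℕ} (hn : t ^ 2 = n) (hn4 : n % 4 = 1) : t ∈ P := by
  obtain ⟨x, hx, -⟩ := half_int t n hn hn4
  have h1 : om σ x - x = -t := by
    have h2 : 2 * om σ x = 1 - t := by
      have := congrArg (om σ) hx
      rw [map_mul, map_add, map_one, ht, map_ofNat] at this
      rw [this]; ring
    have h3 : (2 : 𝓞 K) * (om σ x - x + t) = 0 := by linear_combination h2 - hx
    have := (mul_eq_zero.1 h3).resolve_left two_ne_zero
    linear_combination this
  have := P.neg_mem (hr x)
  rwa [h1, neg_neg] at this

lemma noHom2 (t : 𝓞 K) {n : ℕ} (hn : t ^ 2 = n) (hn8 : n % 8 = 5) : IsEmpty (𝓞 K →+* ZMod 2) := by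
  refine ⟨fun φ => ?_⟩
  obtain ⟨x, -, hx⟩ := half_int t n hn (by omega)
  have h1 := congrArg φ hx
  rw [map_pow, map_add, map_natCast] at h1
  have h2 : ((n / 4 : ℕ) : ZMod 2) = 1 := by
    have : n / 4 = 2 * (n / 8) + 1 := by omega
    rw [this]; push_cast
    rw [show (2 : ZMod 2) = 0 from rfl]; simp
  rw [h2] at h1
  generalize φ x = y at h1
  revert y; decide

lemma noHom_ns (t : 𝓞 K) {n l : ℕ} (hn : t ^ 2 = n) (hl : ¬ IsSquare (n : ZMod l)) : IsEmpty (𝓞 K →+* ZMod l) := by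
  refine ⟨fun φ => hl ⟨φ t, ?_⟩⟩
  rw [← map_natCast φ, ← hn, pow_two, map_mul]
end
end TriQ

namespace TriQ
set_option linter.unusedSectionVars false
open NumberField nonZeroDivisors

section padic
variable {l : ℕ} [hl : Fact l.Prime]

lemma toZMod_ne_zero_iff (U : ℤ_[l]) : PadicInt.toZMod U ≠ 0 ↔ ‖U‖ = 1 := by
  rw [Ne, ← RingHom.mem_ker, PadicInt.ker_toZMod, IsLocalRing.mem_maximalIdeal, PadicInt.mem_nonunits]
  have := PadicInt.norm_le_one U
  constructor
  · intro h; exact le_antisymm this (not_lt.1 h)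
  · intro h; rw [h]; exact lt_irrefl _

lemma padic_int_of_norm {x : ℚ_[l]} (h : ‖x‖ ≤ 1) : ∃ X : ℤ_[l], (X : ℚ_[l]) = x := ⟨⟨x, h⟩, rfl⟩

lemma norm_n {n m : ℕ} (hn : n = l * m) (hm : ¬ l ∣ m) : ‖(n : ℚ_[l])‖ = (l : ℝ)⁻¹ := by
  have : ‖(m : ℚ_[l])‖ = 1 := Padic.norm_natCast_eq_one_iff.2 ((Nat.Prime.coprime_iff_not_dvd hl.out).2 hm)
  rw [hn, Nat.cast_mul, norm_mul, this, mul_one, Padic.norm_p]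

lemma local_sq {n m : ℕ} (hn : n = l * m) (hm : ¬ l ∣ m) (U : ℤ_[l]) (x y : ℚ_[l])
    (e : (U : ℚ_[l]) = x ^ 2 - n * y ^ 2) : IsSquare (PadicInt.toZMod U) := by
  have hn1 := norm_n hn hm
  have hl1 : (1 : ℝ) < l := by exact_mod_cast hl.out.one_lt
  have hl0 : (0 : ℝ) < l := by linarith
  have hU : ‖(U : ℚ_[l])‖ ≤ 1 := U.2
  have hne : ∀ hx : x ≠ 0, ‖x ^ 2‖ ≠ ‖-(n * y ^ 2 : ℚ_[l])‖ := by
    intro hx e1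
    rw [norm_neg, norm_mul, hn1, norm_pow, norm_pow] at e1
    have hy : y ≠ 0 := by
      rintro rfl
      simp [hx] at e1
    rw [Padic.norm_eq_zpow_neg_valuation hx, Padic.norm_eq_zpow_neg_valuation hy, ← zpow_neg_one,
      ← zpow_natCast, ← zpow_natCast, ← zpow_mul, ← zpow_mul, ← zpow_add₀ hl0.ne'] at e1
    have := zpow_right_injective₀ hl0 hl1.ne' e1
    push_cast at this
    omega
  have hx : ‖x‖ ≤ 1 := by
    by_contra hc
    have hx0 : x ≠ 0 := by rintro rfl; simp at hc
    have h1 := Padic.add_eq_max_of_ne (hne hx0)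
    rw [← sub_eq_add_neg, ← e] at h1
    have h2 := le_max_left ‖x ^ 2‖ ‖-(n * y ^ 2 : ℚ_[l])‖
    rw [← h1, norm_pow] at h2
    nlinarith
  have hy : ‖y‖ ≤ 1 := by
    have h1 : (n : ℚ_[l]) * y ^ 2 = x ^ 2 + -U := by rw [e]; ring
    have h2 : ‖(n : ℚ_[l]) * y ^ 2‖ ≤ 1 := by
      rw [h1]
      refine (Padic.nonarchimedean _ _).trans (max_le ?_ ?_)
      · rw [norm_pow]; exact pow_le_one₀ (norm_nonneg _) hx
      · rw [norm_neg]; exact hU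
    rw [norm_mul, hn1, norm_pow, inv_mul_le_iff₀ hl0, mul_one] at h2
    have h3 := Padic.norm_le_pow_iff_norm_lt_pow_add_one y 0
    rw [zpow_zero, zero_add, zpow_one] at h3
    rw [h3]
    have := norm_nonneg y
    nlinarith
  obtain ⟨X, rfl⟩ := padic_int_of_norm hx
  obtain ⟨Y, rfl⟩ := padic_int_of_norm hy
  have e2 : U = X ^ 2 - n * Y ^ 2 := by
    apply Subtype.ext
    push_cast
    exact e
  refine ⟨PadicInt.toZMod X, ?_⟩
  rw [e2, map_sub, map_mul, map_natCast, hn]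
  push_cast
  simp [pow_two]

lemma hensel_odd (h2 : l ≠ 2) (U : ℤ_[l]) (hU : IsSquare (PadicInt.toZMod U)) (h0 : PadicInt.toZMod U ≠ 0) :
    ∃ r : ℤ_[l], r ^ 2 = U := by
  obtain ⟨b, hb⟩ := hU
  obtain ⟨a, rfl⟩ : ∃ a : ℕ, (a : ZMod l) = b := ⟨b.val, by simp⟩
  have h20 : (2 : ZMod l) ≠ 0 := by
    intro h
    have h' : ((2 : ℕ) : ZMod l) = 0 := by exact_mod_cast h
    rw [ZMod.natCast_eq_zero_iff] at h'
    exact h2 ((Nat.prime_dvd_prime_iff_eq hl.out Nat.prime_two).1 h')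
  have ha0 : (a : ZMod l) ≠ 0 := by
    intro h; apply h0; rw [hb, h, mul_zero]
  have h1 : ‖(2 * a : ℤ_[l])‖ = 1 := by
    rw [← toZMod_ne_zero_iff, map_mul, map_natCast, map_ofNat]
    exact mul_ne_zero h20 ha0
  have h3 : ‖((a : ℤ_[l]) ^ 2 - U)‖ < 1 := by
    apply lt_of_le_of_ne (PadicInt.norm_le_one _)
    intro h
    rw [← toZMod_ne_zero_iff] at h
    apply h
    rw [map_sub, map_pow, map_natCast, hb]; ring
  obtain ⟨z, hz, -⟩ := hensels_lemma (p := l) (R := ℤ_[l]) (F := Polynomial.X ^ 2 - Polynomial.C U) (a := (a : ℤ_[l]))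
    (by
      rw [norm_mul] at h1
      simp only [Polynomial.derivative_sub, Polynomial.derivative_C, Polynomial.derivative_X_pow, map_sub, map_pow,
        Polynomial.aeval_X, Polynomial.aeval_C, map_mul, sub_zero]
      simp [h1, h3])
  refine ⟨z, ?_⟩
  simp at hz
  linear_combination hz

lemma hensel_nat (h2 : l ≠ 2) (n : ℕ) (hU : IsSquare (n : ZMod l)) (h0 : ¬ l ∣ n) :
    ∃ r : ℤ_[l], r ^ 2 = n := by
  apply hensel_odd h2
  · rwa [map_natCast]
  · rwa [map_natCast, Ne, ZMod.natCast_eq_zero_iff]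

lemma hensel_two (n : ℕ) (hn : n % 8 = 1) : ∃ r : ℤ_[2], r ^ 2 = n := by
  obtain ⟨m, rfl⟩ : ∃ m, n = 8 * m + 1 := ⟨n / 8, by omega⟩
  have h8 : ‖(8 : ℤ_[2])‖ = 1 / 8 := by
    have : (8 : ℤ_[2]) = (2 : ℕ) ^ 3 := by norm_num
    rw [this, norm_pow, PadicInt.norm_p]; norm_num
  have h2 : ‖(2 : ℤ_[2])‖ = 1 / 2 := by
    have : (2 : ℤ_[2]) = (2 : ℕ) := by norm_num
    rw [this, PadicInt.norm_p]; norm_num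
  obtain ⟨z, hz, -⟩ := hensels_lemma (p := 2) (R := ℤ_[2])
    (F := Polynomial.X ^ 2 - Polynomial.C ((8 * m + 1 : ℕ) : ℤ_[2])) (a := 1) (by
      have e1 : Polynomial.aeval (1 : ℤ_[2]) (Polynomial.X ^ 2 - Polynomial.C ((8 * m + 1 : ℕ) : ℤ_[2])) = -(8 * (m : ℤ_[2])) := by
        rw [map_sub, map_pow, Polynomial.aeval_X, Polynomial.aeval_C]
        simp
      have e2 : Polynomial.aeval (1 : ℤ_[2]) (Polynomial.derivative (Polynomial.X ^ 2 - Polynomial.C ((8 * m + 1 : ℕ) : ℤ_[2]))) = 2 := by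
        rw [Polynomial.derivative_sub, Polynomial.derivative_C, Polynomial.derivative_X_pow]
        simp
      rw [e1, e2, norm_neg, norm_mul, h8, h2]
      have := PadicInt.norm_le_one (m : ℤ_[2])
      nlinarith)
  refine ⟨z, ?_⟩
  rw [map_sub, map_pow, Polynomial.aeval_X, Polynomial.aeval_C] at hz
  simp only [Algebra.algebraMap_self, RingHom.id_apply] at hz
  linear_combination hz

lemma two_adic {q : ℕ} (hq : q % 4 = 3) (X Y : ℚ_[2]) (e : X ^ 2 - q * Y ^ 2 = -1) : False := by
  have hq1 : ‖(q : ℚ_[2])‖ = 1 := by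
    rw [Padic.norm_natCast_eq_one_iff, Nat.Prime.coprime_iff_not_dvd Nat.prime_two]
    omega
  have hq4 : ((q : ℕ) : ZMod (2 ^ 2)) = 3 := by
    have : q = 4 * (q / 4) + 3 := by omega
    rw [this]; push_cast
    rw [show (4 : ZMod (2 ^ 2)) = 0 from rfl]; simp
  by_cases hY : ‖Y‖ ≤ 1
  · have hX : ‖X‖ ≤ 1 := by
      have : ‖X ^ 2‖ ≤ 1 := by
        have h1 : X ^ 2 = q * Y ^ 2 + -1 := by linear_combination e
        rw [h1]
        refine (Padic.nonarchimedean _ _).trans (max_le ?_ ?_)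
        · rw [norm_mul, hq1, one_mul, norm_pow]; exact pow_le_one₀ (norm_nonneg _) hY
        · simp
      rw [norm_pow] at this
      exact (pow_le_one_iff_of_nonneg (norm_nonneg _) two_ne_zero).1 this
    obtain ⟨X, rfl⟩ := padic_int_of_norm hX
    obtain ⟨Y, rfl⟩ := padic_int_of_norm hY
    have e2 : X ^ 2 - q * Y ^ 2 = -1 := by
      apply Subtype.ext
      push_cast
      exact e
    have e3 := congrArg (PadicInt.toZModPow 2) e2
    rw [map_sub, map_mul, map_natCast, map_pow, map_pow, map_neg, map_one, hq4] at e3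
    generalize (PadicInt.toZModPow 2) X = a at e3
    generalize (PadicInt.toZModPow 2) Y = b at e3
    revert a b; decide
  · have hY0 : Y ≠ 0 := by rintro rfl; simp at hY
    have hi : ‖Y⁻¹‖ ≤ 1 := by
      rw [norm_inv]; exact inv_le_one_of_one_le₀ (not_le.1 hY).le
    have e1 : (X * Y⁻¹) ^ 2 = q + -(Y⁻¹) ^ 2 := by
      field_simp
      linear_combination e
    have hX : ‖X * Y⁻¹‖ ≤ 1 := by
      have : ‖(X * Y⁻¹) ^ 2‖ ≤ 1 := by
        rw [e1]
        refine (Padic.nonarchimedean _ _).trans (max_le hq1.le ?_)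
        rw [norm_neg, norm_pow]; exact pow_le_one₀ (norm_nonneg _) hi
      rw [norm_pow] at this
      exact (pow_le_one_iff_of_nonneg (norm_nonneg _) two_ne_zero).1 this
    obtain ⟨Z, hZ⟩ := padic_int_of_norm hX
    obtain ⟨W, hW⟩ := padic_int_of_norm hi
    rw [← hZ, ← hW] at e1
    have e2 : Z ^ 2 = q + - W ^ 2 := by
      apply Subtype.ext
      push_cast
      exact e1
    have e3 := congrArg (PadicInt.toZModPow 2) e2
    rw [map_add, map_natCast, map_neg, map_pow, map_pow, hq4] at e3
    generalize (PadicInt.toZModPow 2) Z = a at e3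
    generalize (PadicInt.toZModPow 2) W = b at e3
    revert a b; decide

lemma sq_mul_ns {a b : ZMod l} (h : ¬ IsSquare (a * b)) :
    (IsSquare a ∧ ¬ IsSquare b) ∨ (¬ IsSquare a ∧ IsSquare b) := by
  by_cases ha : IsSquare a
  · left; refine ⟨ha, fun hb => h (ha.mul hb)⟩
  · right; refine ⟨ha, ?_⟩
    by_contra hb
    apply h
    have h1 := quadraticChar_neg_one_iff_not_isSquare.2 ha
    have h2 := quadraticChar_neg_one_iff_not_isSquare.2 hb
    have h3 : quadraticChar (ZMod l) (a * b) = 1 := by rw [map_mul, h1, h2]; norm_num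
    have h0 : a * b ≠ 0 := by
      intro h0; rw [h0] at h3; simp at h3
    exact (quadraticChar_one_iff_isSquare h0).1 h3

lemma ns_mul_sq {a b : ZMod l} (ha : ¬ IsSquare a) (hb : IsSquare b) (hb0 : b ≠ 0) : ¬ IsSquare (a * b) := by
  intro h
  apply ha
  have := h.div hb
  rwa [mul_div_cancel_right₀ _ hb0] at this
end padic

section nn
variable {F K : Type*} [Field F] [Field K] [CharZero F] [CharZero K] [NumberField F] [NumberField K]
  {f : F →+* K} {σ : K →+* K}

lemma nn_of {l : ℕ} [hl : Fact l.Prime] {n m : ℕ} {θ : K} (h : QS f n θ) (hf : ∀ a, σ (f a) = f a) (hθ : σ θ = -θ)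
    (hn : n = l * m) (hm : ¬ l ∣ m) (g : F →+* ℚ_[l]) (u : F) (U : ℤ_[l]) (hu : g u = U)
    (hU : ¬ IsSquare (PadicInt.toZMod U)) : Quad.NN f σ u := by
  intro x e
  obtain ⟨a, b, hab⟩ := h.norm_form hf hθ x
  rw [e] at hab
  have h1 := congrArg g (f.injective hab)
  rw [hu, map_sub, map_mul, map_pow, map_pow, map_natCast] at h1
  exact hU (local_sq hn hm U _ _ h1)
end nn

section elem
lemma sq_of_cop {a b c : ℤ} (h : IsCoprime a b) (e : a * b = c ^ 2) : ∃ x, a = x ^ 2 ∨ a = -x ^ 2 :=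
  Int.sq_of_gcd_eq_one (Int.isCoprime_iff_gcd_eq_one.1 h) e

lemma sq_of_cop' {a b c : ℤ} (h : IsCoprime a b) (ha : 0 ≤ a) (e : a * b = c ^ 2) : ∃ x, a = x ^ 2 := by
  obtain ⟨x, hx | hx⟩ := sq_of_cop h e
  · exact ⟨x, hx⟩
  · exact ⟨0, by nlinarith [sq_nonneg x]⟩

lemma strip {q : ℕ} (hq : q.Prime) {a b c : ℤ} (e : a * b = q * c) :
    (∃ a', a = q * a' ∧ a' * b = c) ∨ (∃ b', b = q * b' ∧ a * b' = c) := by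
  have hq' : Prime (q : ℤ) := Nat.prime_iff_prime_int.1 hq
  have hd : (q : ℤ) ∣ a * b := ⟨c, e⟩
  rcases hq'.dvd_or_dvd hd with ⟨a', rfl⟩ | ⟨b', rfl⟩
  · left; exact ⟨a', rfl, mul_left_cancel₀ hq'.ne_zero (by linear_combination e)⟩
  · right; exact ⟨b', rfl, mul_left_cancel₀ hq'.ne_zero (by linear_combination e)⟩

lemma pell_small {d : ℕ} (hd : d.Prime) (h2 : d ≠ 2) :
    ∃ a b : ℤ, a ^ 2 - d * b ^ 2 = -1 ∨ a ^ 2 - d * b ^ 2 = 2 ∨ a ^ 2 - d * b ^ 2 = -2 := by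
  have hd' : Prime (d : ℤ) := Nat.prime_iff_prime_int.1 hd
  have hodd : d % 2 = 1 := by
    rcases hd.eq_two_or_odd with h | h
    · exact absurd h h2
    · exact h
  obtain ⟨s, hx1, hy0, hmin⟩ := Pell.IsFundamental.exists_of_not_isSquare (d := d)
    (by exact_mod_cast hd.pos) (fun h => hd'.irreducible.not_isSquare h)
  have hs := s.prop
  set x := s.x
  set y := s.y
  rcases Int.even_or_odd' x with ⟨k, hk | hk⟩
  · have hc : IsCoprime (x - 1) (x + 1) := ⟨k, 1 - k, by rw [hk]; ring⟩
    have e : (x - 1) * (x + 1) = d * y ^ 2 := by linear_combination hs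
    rcases strip hd e with ⟨a', h1, h2⟩ | ⟨b', h1, h2⟩
    · rw [h1] at hc
      have hc' := hc.of_mul_left_right
      have ha : 0 ≤ a' := by
        have : 0 < d * a' := by rw [← h1]; linarith
        exact (pos_of_mul_pos_right this (by positivity)).le
      obtain ⟨v, hv⟩ := sq_of_cop' hc' ha h2
      obtain ⟨u, hu⟩ := sq_of_cop' hc'.symm (by linarith) (by rw [mul_comm]; exact h2)
      exact ⟨u, v, Or.inr (Or.inl (by rw [← hu, ← hv]; linear_combination h1))⟩
    · rw [h1] at hc
      have hc' := hc.of_mul_right_right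
      have ha : 0 ≤ b' := by
        have : 0 < d * b' := by rw [← h1]; linarith
        exact (pos_of_mul_pos_right this (by positivity)).le
      obtain ⟨u, hu⟩ := sq_of_cop' hc' (by linarith) h2
      obtain ⟨v, hv⟩ := sq_of_cop' hc'.symm ha (by rw [mul_comm]; exact h2)
      exact ⟨u, v, Or.inr (Or.inr (by rw [← hu, ← hv]; linear_combination h1))⟩
  · have hy2 : Even y := by
      have h3 : Even ((d : ℤ) * y ^ 2) := ⟨2 * k * (k + 1), by
        have : (d : ℤ) * y ^ 2 = x ^ 2 - 1 := by linear_combination -hs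
        rw [this, hk]; ring⟩
      rw [Int.even_mul] at h3
      rcases h3 with h3 | h3
      · exfalso
        have : Even d := by exact_mod_cast h3
        rw [Nat.even_iff] at this; omega
      · exact (Int.even_pow.1 h3).1
    obtain ⟨z, hz⟩ := hy2
    have e : k * (k + 1) = d * z ^ 2 := by
      rw [hk, hz] at hs
      have : 4 * (k * (k + 1)) = 4 * (d * z ^ 2) := by linear_combination hs
      linarith
    have hc : IsCoprime k (k + 1) := ⟨-1, 1, by ring⟩
    rcases strip hd e with ⟨a', h1, h2⟩ | ⟨b', h1, h2⟩
    · exfalso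
      have hc' : IsCoprime a' (k + 1) := by
        have hc2 : IsCoprime (d * a') (k + 1) := by rw [← h1]; exact hc
        exact hc2.of_mul_left_right
      have ha : 0 ≤ a' := by
        have : 0 < d * a' := by rw [← h1]; linarith
        exact (pos_of_mul_pos_right this (by positivity)).le
      obtain ⟨v, hv⟩ := sq_of_cop' hc' ha h2
      obtain ⟨u, hu⟩ := sq_of_cop' hc'.symm (by linarith) (by rw [mul_comm]; exact h2)
      have h5 : |u| ^ 2 - d * v ^ 2 = 1 := by
        rw [sq_abs, ← hu, ← hv]; linear_combination h1
      have h6 := hmin (b := Pell.Solution₁.mk |u| v h5)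
      have h7 : (Pell.Solution₁.mk |u| v h5).x = |u| := rfl
      rw [h7] at h6
      have h8 : |u| ^ 2 = k + 1 := by rw [sq_abs, hu]
      have h9 := abs_nonneg u
      have h10 : 1 < |u| := by nlinarith
      have h11 := h6 h10
      nlinarith
    · have hc2 : IsCoprime k (d * b') := by rw [← h1]; exact hc
      have hc' := hc2.of_mul_right_right
      have ha : 0 ≤ b' := by
        have : 0 < d * b' := by rw [← h1]; linarith
        exact (pos_of_mul_pos_right this (by positivity)).le
      obtain ⟨u, hu⟩ := sq_of_cop' hc' (by linarith) h2
      obtain ⟨v, hv⟩ := sq_of_cop' hc'.symm ha (by rw [mul_comm]; exact h2)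
      exact ⟨u, v, Or.inl (by rw [← hu, ← hv]; linear_combination h1)⟩

lemma sq_mod4 (a : ℤ) : a ^ 2 % 4 = 0 ∨ a ^ 2 % 4 = 1 := by
  rcases Int.even_or_odd' a with ⟨k, rfl | rfl⟩
  · left; ring_nf; omega
  · right; ring_nf; omega

lemma pell1 {d : ℕ} (hd : d.Prime) (h4 : d % 4 = 1) : ∃ a b : ℤ, a ^ 2 - d * b ^ 2 = -1 := by
  obtain ⟨a, b, h⟩ := pell_small hd (by omega)
  refine ⟨a, b, ?_⟩
  have hd' : (d : ℤ) = 4 * (d / 4 : ℕ) + 1 := by omega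
  rcases h with h | h | h
  · exact h
  all_goals
    exfalso
    rw [hd', add_mul, mul_assoc, one_mul] at h
    generalize ((d / 4 : ℕ) : ℤ) * b ^ 2 = c at h
    have h1 := sq_mod4 a
    have h2 := sq_mod4 b
    omega

lemma pell3 {d : ℕ} (hd : d.Prime) (h4 : d % 4 = 3) :
    ∃ a b e : ℤ, a ^ 2 - d * b ^ 2 = 2 * e ∧ (e = 1 ∨ e = -1) := by
  obtain ⟨a, b, h⟩ := pell_small hd (by omega)
  have hd' : (d : ℤ) = 4 * (d / 4 : ℕ) + 3 := by omega
  rcases h with h | h | h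
  · exfalso
    rw [hd', add_mul, mul_assoc] at h
    generalize ((d / 4 : ℕ) : ℤ) * b ^ 2 = c at h
    have h1 := sq_mod4 a
    have h2 := sq_mod4 b
    omega
  · exact ⟨a, b, 1, by linarith, Or.inl rfl⟩
  · exact ⟨a, b, -1, by linarith, Or.inr rfl⟩

/-- coprime factors of `q s y ^ 2` -/
lemma two_strip {q s : ℕ} (hq : q.Prime) (hs : s.Prime) {X Y y : ℤ} (hc : IsCoprime X Y)
    (e : X * Y = q * (s * y ^ 2)) :
    ∃ x : ℤ, ∃ c : ℤ, (c = 1 ∨ c = -1) ∧ ∃ d : ℤ, (d = 1 ∨ d = q ∨ d = s ∨ d = q * s) ∧ X = c * d * x ^ 2 := by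
  have fin : ∀ {A B : ℤ}, IsCoprime A B → A * B = y ^ 2 → ∃ x : ℤ, ∃ c : ℤ, (c = 1 ∨ c = -1) ∧ A = c * x ^ 2 := by
    intro A B h1 h2
    obtain ⟨x, hx | hx⟩ := sq_of_cop h1 h2
    · exact ⟨x, 1, Or.inl rfl, by rw [hx]; ring⟩
    · exact ⟨x, -1, Or.inr rfl, by rw [hx]; ring⟩
  rcases strip hq e with ⟨A, rfl, e1⟩ | ⟨B, rfl, e1⟩
  · have hc1 := hc.of_mul_left_right
    rcases strip hs e1 with ⟨A', rfl, e2⟩ | ⟨B', rfl, e2⟩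
    · obtain ⟨x, c, hc', rfl⟩ := fin hc1.of_mul_left_right e2
      exact ⟨x, c, hc', q * s, by simp, by ring⟩
    · obtain ⟨x, c, hc', rfl⟩ := fin hc1.of_mul_right_right e2
      exact ⟨x, c, hc', q, by simp, by ring⟩
  · have hc1 := hc.of_mul_right_right
    rcases strip hs e1 with ⟨A', rfl, e2⟩ | ⟨B', rfl, e2⟩
    · obtain ⟨x, c, hc', rfl⟩ := fin hc1.of_mul_left_right e2
      exact ⟨x, c, hc', s, by simp, by ring⟩
    · obtain ⟨x, c, hc', rfl⟩ := fin hc1.of_mul_right_right e2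
      exact ⟨x, c, hc', 1, by simp, by ring⟩
end elem
end TriQ

namespace TriQ
set_option linter.unusedSectionVars false
open NumberField nonZeroDivisors

section cov
variable {K : Type*} [Field K] [NumberField K]

/-- at most `j` primes satisfy `C` -/
def Cov (C : Ideal (𝓞 K) → Prop) (j : ℕ) : Prop := ∃ T : Finset (Ideal (𝓞 K)), T.card ≤ j ∧
  ∀ P : Ideal (𝓞 K), P.IsPrime → C P → P ∈ T

lemma Cov.or {C D : Ideal (𝓞 K) → Prop} {i j : ℕ} (h1 : Cov C i) (h2 : Cov D j) :
    Cov (fun P => C P ∨ D P) (i + j) := by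
  classical
  obtain ⟨T, hT, hT'⟩ := h1
  obtain ⟨S, hS, hS'⟩ := h2
  refine ⟨T ∪ S, (Finset.card_union_le _ _).trans (add_le_add hT hS), fun P hP h => ?_⟩
  rw [Finset.mem_union]
  rcases h with h | h
  · left; exact hT' P hP h
  · right; exact hS' P hP h

lemma Cov.ram {C : Ideal (𝓞 K) → Prop} {j : ℕ} (h : Cov C j) {σ : K →+* K}
    (hσ : ∀ P : Ideal (𝓞 K), P.IsPrime → (∀ x, om σ x - x ∈ P) → C P) : Quad.RamLe σ j := by
  obtain ⟨T, hT, hT'⟩ := h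
  exact ⟨T, hT, fun P hP _ h => hT' P hP (hσ P hP h)⟩

lemma cov {a : 𝓞 K} {l m w j : ℕ} (hl : l.Prime) (hm : ¬ l ∣ m) (hw0 : 1 ≤ w)
    (hN : Ideal.absNorm (Ideal.span {a}) = (l * m) ^ (w * j))
    (hw : ∀ P : Ideal (𝓞 K), P.IsPrime → (l : 𝓞 K) ∈ P → l ^ w ∣ Ideal.absNorm P) :
    Cov (fun P => a ∈ P ∧ (l : 𝓞 K) ∈ P) j := by
  have hm0 : m ≠ 0 := by rintro rfl; simp at hm
  have ha : a ≠ 0 := by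
    rintro rfl
    have h1 : (l * m) ^ (w * j) ≠ 0 := pow_ne_zero _ (mul_ne_zero hl.ne_zero hm0)
    rw [← hN] at h1
    simp at h1
  obtain ⟨T, hT, hT'⟩ := cnt_le ha (l := l) (w := w) (j := j) hw (by
    rw [hN, mul_pow, mul_add, pow_add, Nat.mul_dvd_mul_iff_left (pow_pos hl.pos _)]
    intro h
    exact hm (hl.dvd_of_dvd_pow ((dvd_pow_self l (by omega)).trans h)))
  exact ⟨T, hT, fun P hP h => hT' P hP h.1 h.2⟩

lemma cov_sqrt {t : 𝓞 K} {n l m d : ℕ} (ht : t ^ 2 = n) (hd : Module.finrank ℚ K = 2 * d) (hl : l.Prime)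
    (hn : n = l * m) (hm : ¬ l ∣ m) : Cov (fun P => t ∈ P ∧ (l : 𝓞 K) ∈ P) d :=
  cov hl hm le_rfl (by rw [norm_sqrt ht hd, hn, one_mul]) (fun P hP h => norm_w1 hl P hP h)

lemma mem_of_sqrt {t : 𝓞 K} {n : ℕ} (ht : t ^ 2 = n) {P : Ideal (𝓞 K)} (h : t ∈ P) : (n : 𝓞 K) ∈ P := by
  rw [← ht]; exact P.pow_mem_of_mem h 2 (by norm_num)

lemma mem_mul {l m : ℕ} {P : Ideal (𝓞 K)} (hP : P.IsPrime) (h : ((l * m : ℕ) : 𝓞 K) ∈ P) :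
    (l : 𝓞 K) ∈ P ∨ (m : 𝓞 K) ∈ P := by
  rw [Nat.cast_mul] at h; exact hP.mem_or_mem h

lemma not_cop {l m : ℕ} (h : Nat.Coprime l m) {P : Ideal (𝓞 K)} (hP : P.IsPrime) (h1 : (l : 𝓞 K) ∈ P)
    (h2 : (m : 𝓞 K) ∈ P) : False := by
  apply hP.ne_top
  rw [Ideal.eq_top_iff_one]
  obtain ⟨a, b, e⟩ := Nat.isCoprime_iff_coprime.2 h
  have e' := congrArg (Int.cast : ℤ → 𝓞 K) e
  push_cast at e'
  rw [← e']
  exact P.add_mem (P.mul_mem_left _ h1) (P.mul_mem_left _ h2)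
end cov

section
variable {F K : Type*} [Field F] [Field K] [NumberField F] [NumberField K]
  {f : F →+* K} {σ : K →+* K} {n : ℕ} {θ : K}

lemma QS.fin (h : QS f n θ) : Module.finrank ℚ K = 2 * Module.finrank ℚ F := by
  obtain ⟨σ, h1, h2⟩ := h.conj
  exact (h.quad h1 h2).finrank_Q

lemma om_coe (x : 𝓞 K) : ((om σ x : 𝓞 K) : K) = σ x := rfl

lemma om_neg {t : 𝓞 K} (h : σ (t : K) = -(t : K)) : om σ t = -t := by
  apply RingOfIntegers.coe_injective
  rw [map_neg]; exact h

lemma om_fix {t : 𝓞 K} (h : σ (t : K) = (t : K)) : om σ t = t := by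
  apply RingOfIntegers.coe_injective
  exact h

lemma cov_two {t : 𝓞 K} {q w j : ℕ} (ht : t ^ 2 = q) (hq : q % 4 = 3) (hσ : ∀ x, σ (σ x) = x)
    (hst : om σ t = -t) (hd : Module.finrank ℚ K = 2 * (w * j)) (hw0 : 1 ≤ w)
    (hw : ∀ P : Ideal (𝓞 K), P.IsPrime → ((2 : ℕ) : 𝓞 K) ∈ P → 2 ^ w ∣ Ideal.absNorm P) :
    Cov (fun P => ((2 : ℕ) : 𝓞 K) ∈ P) j := by
  have hN : Ideal.absNorm (Ideal.span {1 + t}) = (1 - q : ℤ).natAbs ^ (w * j) := by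
    apply norm_mul_conj hσ _ hd
    rw [map_add, map_one, hst]
    push_cast
    linear_combination -ht
  have hN' : (1 - q : ℤ).natAbs = 2 * ((q - 1) / 2) := by omega
  rw [hN'] at hN
  obtain ⟨T, hT, hT'⟩ := cov Nat.prime_two (by omega) hw0 hN hw
  refine ⟨T, hT, fun P hP h => hT' P hP ⟨?_, h⟩⟩
  apply hP.mem_of_pow_mem 2
  have h3 : (1 + t) ^ 2 = ((2 : ℕ) : 𝓞 K) * (t + ((q + 1) / 2 : ℕ)) := by
    have : q = 2 * ((q + 1) / 2) - 1 := by omega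
    have h4 : 2 * ((q + 1) / 2) = q + 1 := by omega
    have h5 := congrArg (Nat.cast : ℕ → 𝓞 K) h4
    push_cast at h5 ⊢
    linear_combination ht - h5
  rw [h3]
  exact P.mul_mem_right _ h

lemma ram_two_sqrt {t : 𝓞 K} {q w j : ℕ} (hqp : q.Prime) (ht : t ^ 2 = q) (hq : q % 4 = 3) (hσ : ∀ x, σ (σ x) = x)
    (hst : om σ t = -t) (hd : Module.finrank ℚ K = 2 * (w * j)) (hw0 : 1 ≤ w)
    (hw : ∀ P : Ideal (𝓞 K), P.IsPrime → ((2 : ℕ) : 𝓞 K) ∈ P → 2 ^ w ∣ Ideal.absNorm P) :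
    Quad.RamLe σ (j + w * j) := by
  refine ((cov_two ht hq hσ hst hd hw0 hw).or
    (cov_sqrt ht hd hqp (mul_one q).symm (by simpa using hqp.one_lt.ne'))).ram ?_
  intro P hP hr
  rcases hP.mem_or_mem (ram2 hr t hst) with h | h
  · left; exact_mod_cast h
  · right; exact ⟨h, mem_of_sqrt ht h⟩

lemma cardQ : Nat.card (ClassGroup (𝓞 ℚ)) = 1 := by
  have : IsPrincipalIdealRing (𝓞 ℚ) :=
    IsPrincipalIdealRing.of_surjective (Rat.ringOfIntegersEquiv.symm : ℤ →+* 𝓞 ℚ) Rat.ringOfIntegersEquiv.symm.surjective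
  rw [Nat.card_eq_fintype_card]; convert card_classGroup_eq_one (R := 𝓞 ℚ)

lemma oddQ : Odd (Nat.card (ClassGroup (𝓞 ℚ))) := by rw [cardQ]; exact odd_one

lemma nn_neg_one {q m : ℕ} (hq : q.Prime) (hq4 : q % 4 = 3) (h : QS f n θ) (hn : n = q * m) (hm : ¬ q ∣ m)
    (h1 : ∀ a, σ (f a) = f a) (h2 : σ θ = -θ) (g : ∀ [Fact q.Prime], F →+* ℚ_[q]) :
    Quad.NN f σ (((-1 : (𝓞 F)ˣ) : 𝓞 F) : F) := by
  have : Fact q.Prime := ⟨hq⟩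
  refine nn_of (l := q) h h1 h2 hn hm g _ (-1) (by simp) ?_
  rw [map_neg, map_one, ZMod.exists_sq_eq_neg_one_iff]
  omega
end

section base
variable {K : Type*} [Field K] [NumberField K] {θ : K}

lemma finQ {n : ℕ} (h : QS (algebraMap ℚ K) n θ) : Module.finrank ℚ K = 2 * 1 := by
  rw [h.fin, Module.finrank_self]

lemma odd1 {p : ℕ} (hp : p.Prime) (hp4 : p % 4 = 1) (h : QS (algebraMap ℚ K) p θ) :
    Odd (Nat.card (ClassGroup (𝓞 K))) := by
  have := h.totallyReal
  obtain ⟨σ, h1, h2⟩ := h.conj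
  have hQ := h.quad h1 h2
  obtain ⟨t, htθ, ht⟩ := sqrt_int θ p h.sq
  have hst : om σ t = -t := om_neg (by rw [htθ, h2])
  refine hQ.odd_of (a := 1) oddQ (hQ.am0 ?_)
  refine (cov_sqrt ht (finQ h) hp (mul_one p).symm (by simpa using hp.one_lt.ne')).ram ?_
  intro P hP hr
  have := ram1 hr t hst ht hp4
  exact ⟨this, mem_of_sqrt ht this⟩

lemma odd2 {q s : ℕ} (hq : q.Prime) (hs : s.Prime) (hqs : q ≠ s) (hq4 : q % 4 = 3) (hs4 : s % 4 = 3)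
    (h : QS (algebraMap ℚ K) (q * s) θ) : Odd (Nat.card (ClassGroup (𝓞 K))) := by
  have := h.totallyReal
  obtain ⟨σ, h1, h2⟩ := h.conj
  have hQ := h.quad h1 h2
  obtain ⟨t, htθ, ht⟩ := sqrt_int θ (q * s) h.sq
  have hst : om σ t = -t := om_neg (by rw [htθ, h2])
  have hnd : ¬ q ∣ s := fun hh => hqs ((Nat.prime_dvd_prime_iff_eq hq hs).1 hh)
  have hnd' : ¬ s ∣ q := fun hh => hqs ((Nat.prime_dvd_prime_iff_eq hs hq).1 hh).symm
  refine hQ.odd_of (a := 2) oddQ (hQ.am1 ?_ (-1) (nn_neg_one hq hq4 h rfl hnd h1 h2 (algebraMap ℚ _)))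
  refine ((cov_sqrt ht (finQ h) hq rfl hnd).or (cov_sqrt ht (finQ h) hs (mul_comm q s) hnd')).ram ?_
  intro P hP hr
  have hm := ram1 hr t hst ht (by rw [Nat.mul_mod, hq4, hs4])
  rcases mem_mul hP (mem_of_sqrt ht hm) with h | h
  · left; exact ⟨hm, h⟩
  · right; exact ⟨hm, h⟩

lemma odd2' {q : ℕ} (hq : q.Prime) (hq4 : q % 4 = 3) (h : QS (algebraMap ℚ K) q θ) :
    Odd (Nat.card (ClassGroup (𝓞 K))) := by
  have := h.totallyReal
  obtain ⟨σ, h1, h2⟩ := h.conj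
  have hQ := h.quad h1 h2
  obtain ⟨t, htθ, ht⟩ := sqrt_int θ q h.sq
  have hst : om σ t = -t := om_neg (by rw [htθ, h2])
  have hnd : ¬ q ∣ 1 := by simpa using hq.one_lt.ne'
  refine hQ.odd_of (a := 2) oddQ (hQ.am1 ?_ (-1) (nn_neg_one hq hq4 h (mul_one q).symm hnd h1 h2 (algebraMap ℚ _)))
  exact ram_two_sqrt (w := 1) (j := 1) hq ht hq4 hQ.inv hst (by rw [finQ h]) le_rfl
    (fun P hP h => norm_w1 Nat.prime_two P hP h)

lemma cyc8 {p q s : ℕ} (hp : p.Prime) (hq : q.Prime) (hs : s.Prime) (hpq : p ≠ q) (hps : p ≠ s) (hqs : q ≠ s)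
    (hp4 : p % 4 = 1) (hq4 : q % 4 = 3) (hs4 : s % 4 = 3)
    (h : QS (algebraMap ℚ K) (p * q * s) θ) : IsCyclic (tw (ClassGroup (𝓞 K))) := by
  have := h.totallyReal
  obtain ⟨σ, h1, h2⟩ := h.conj
  have hQ := h.quad h1 h2
  obtain ⟨t, htθ, ht⟩ := sqrt_int θ (p * q * s) h.sq
  have hst : om σ t = -t := om_neg (by rw [htθ, h2])
  have nd : ∀ {a b c : ℕ}, a.Prime → b.Prime → c.Prime → a ≠ b → a ≠ c → ¬ a ∣ b * c := by
    intro a b c ha hb hc hab hac hd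
    rcases ha.dvd_mul.1 hd with h | h
    · exact hab ((Nat.prime_dvd_prime_iff_eq ha hb).1 h)
    · exact hac ((Nat.prime_dvd_prime_iff_eq ha hc).1 h)
  have e1 : p * q * s = q * (p * s) := by ring
  have e2 : p * q * s = s * (p * q) := by ring
  have e3 : p * q * s = p * (q * s) := by ring
  refine hQ.cyclic_of (a := 2) oddQ (hQ.am1 ?_ (-1) (nn_neg_one hq hq4 h e1 (nd hq hp hs hpq.symm hqs) h1 h2 (algebraMap ℚ _)))
  refine (((cov_sqrt ht (finQ h) hp e3 (nd hp hq hs hpq hps)).or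
    (cov_sqrt ht (finQ h) hq e1 (nd hq hp hs hpq.symm hqs))).or
    (cov_sqrt ht (finQ h) hs e2 (nd hs hp hq hps.symm hqs.symm))).ram ?_
  intro P hP hr
  have hm := ram1 hr t hst ht (by rw [Nat.mul_mod, Nat.mul_mod p q, hp4, hq4, hs4])
  rcases mem_mul hP (mem_of_sqrt ht hm) with h | h
  · rcases mem_mul hP h with h | h
    · left; left; exact ⟨hm, h⟩
    · left; right; exact ⟨hm, h⟩
  · right; exact ⟨hm, h⟩
end base
end TriQ

namespace TriQ
set_option linter.unusedSectionVars false
open NumberField nonZeroDivisors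

lemma nn_of2 {F K : Type*} [Field F] [Field K] [NumberField F] [NumberField K]
    {f : F →+* K} {σ : K →+* K} {l : ℕ} [hl : Fact l.Prime] {n m : ℕ} {θ : K} (h : QS f n θ)
    (hf : ∀ a, σ (f a) = f a) (hθ : σ θ = -θ) (hn : n = l * m) (hm : ¬ l ∣ m) (g g' : F →+* ℚ_[l]) (u : F)
    (U U' : ℤ_[l]) (hu : g u = U) (hu' : g' u = U')
    (hU : ¬ IsSquare (PadicInt.toZMod U * PadicInt.toZMod U')) : Quad.NN f σ u := by
  rcases sq_mul_ns hU with ⟨-, h1⟩ | ⟨h1, -⟩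
  · exact nn_of h hf hθ hn hm g' u U' hu' h1
  · exact nn_of h hf hθ hn hm g u U hu h1

section
variable {F K : Type*} [Field F] [Field K] [NumberField F] [NumberField K] {f : F →+* K} {a : F} {b : K}

lemma odd3 {p q : ℕ} (hp : p.Prime) (hq : q.Prime) (hpq : p ≠ q) (hp8 : p % 8 = 5) (hq4 : q % 4 = 3)
    (hsq : IsSquare (p : ZMod q)) (hF : QS (algebraMap ℚ F) p a) (h : QS f q b) :
    Odd (Nat.card (ClassGroup (𝓞 K))) := by
  have hFr := hF.totallyReal
  have hKr := h.totallyReal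
  have : Fact q.Prime := ⟨hq⟩
  obtain ⟨σ, h1, h2⟩ := h.conj
  have hQ := h.quad h1 h2
  obtain ⟨t, htb, ht⟩ := sqrt_int b q h.sq
  obtain ⟨z, hza, hz⟩ := sqrt_int a p hF.sq
  have hst : om σ t = -t := om_neg (by rw [htb, h2])
  have hd : Module.finrank ℚ K = 2 * (2 * 1) := by rw [h.fin, finQ hF]
  have hodd := odd1 hp (by omega) hF
  obtain ⟨r, hr⟩ := hensel_nat (l := q) (by rintro rfl; omega) p hsq
    (fun hh => hpq ((Nat.prime_dvd_prime_iff_eq hq hp).1 hh).symm)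
  have hrQ : (r : ℚ_[q]) ^ 2 = (p : ℚ_[q]) := by
    rw [← PadicInt.coe_pow, hr]; simp
  obtain ⟨g, -, hg⟩ := hF.lift (algebraMap ℚ ℚ_[q]) (r : ℚ_[q]) hrQ
  obtain ⟨g', -, hg'⟩ := hF.lift (algebraMap ℚ ℚ_[q]) (-(r : ℚ_[q])) (by rw [neg_sq, hrQ])
  obtain ⟨x, y, hxy⟩ := pell1 hp (by omega)
  have hxyF : (x : 𝓞 F) ^ 2 - p * y ^ 2 = -1 := by exact_mod_cast congrArg (Int.cast : ℤ → 𝓞 F) hxy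
  have hxyp : (x : ℤ_[q]) ^ 2 - p * y ^ 2 = -1 := by exact_mod_cast congrArg (Int.cast : ℤ → ℤ_[q]) hxy
  let e : (𝓞 F)ˣ := Units.mkOfMulEqOne (x + y * z) (-(x - y * z)) (by linear_combination -hxyF + y ^ 2 * hz)
  have he : ((e : 𝓞 F) : F) = x + y * a := by
    show algebraMap (𝓞 F) F (x + y * z) = _
    rw [map_add, map_mul, map_intCast, map_intCast]
    exact congrArg (fun w => (x : F) + y * w) hza
  have hnd : ¬ q ∣ 1 := by simpa using hq.one_lt.ne'
  have hns : ¬ IsSquare (-1 : ZMod q) := by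
    rw [ZMod.exists_sq_eq_neg_one_iff]; omega
  have hnn : ∀ c : ℤ, (c = 1 ∨ c = -1) → ∀ u : F, u = c * (x + y * a) → Quad.NN f σ u := by
    intro c hc u hu
    refine nn_of2 h h1 h2 (mul_one q).symm hnd g g' u (c * (x + y * r)) (c * (x - y * r)) ?_ ?_ ?_
    · rw [hu, map_mul, map_add, map_mul, hg]; simp
    · rw [hu, map_mul, map_add, map_mul, hg']
      push_cast; rw [map_intCast, map_intCast, map_intCast]; ring
    · rw [← map_mul]
      have : (c * (x + y * r)) * (c * (x - y * r)) = -1 := by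
        have hc2 : (c : ℤ_[q]) ^ 2 = 1 := by rcases hc with rfl | rfl <;> simp
        linear_combination hc2 * (x ^ 2 - y ^ 2 * r ^ 2) + hxyp - y ^ 2 * hr
      rw [this, map_neg, map_one]; exact hns
  refine hQ.odd_of (a := 3) hodd (hQ.am2 ?_ (-1) e (nn_neg_one hq hq4 h (mul_one q).symm hnd h1 h2 g)
    (hnn 1 (by simp) _ (by rw [he]; simp)) (hnn (-1) (by simp) _ (by
      show algebraMap (𝓞 F) F (-1 * (e : 𝓞 F)) = _
      rw [neg_one_mul, map_neg]; push_cast; rw [neg_one_mul]; exact congrArg Neg.neg he)))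
  exact ram_two_sqrt (w := 2) (j := 1) hq ht hq4 hQ.inv hst hd (by norm_num)
    (fun P hP hh => norm_w2 Nat.prime_two (noHom2 (om f z) (n := p) (by rw [← map_pow, hz, map_natCast]) hp8) P hP hh)

lemma odd4 {q s : ℕ} (hq : q.Prime) (hs : s.Prime) (hqs : q ≠ s) (hq4 : q % 4 = 3) (hs4 : s % 4 = 3)
    (hF : QS (algebraMap ℚ F) q a) (h : QS f s b) :
    Odd (Nat.card (ClassGroup (𝓞 K))) := by
  have hFr := hF.totallyReal
  have hKr := h.totallyReal
  obtain ⟨σ, h1, h2⟩ := h.conj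
  have hQ := h.quad h1 h2
  obtain ⟨t, htb, ht⟩ := sqrt_int b s h.sq
  obtain ⟨z, hza, hz⟩ := sqrt_int a q hF.sq
  have hz' : om f z ^ 2 = q := by rw [← map_pow, hz, map_natCast]
  have hst : om σ t = -t := om_neg (by rw [htb, h2])
  have hd : Module.finrank ℚ K = 2 * 2 := by rw [h.fin, finQ hF]
  have hodd := odd2' hq hq4 hF
  have hnd : ¬ s ∣ 1 := by simpa using hs.one_lt.ne'
  have hsz : om σ (om f z) = om f z := om_fix (h1 _)
  have key : ∀ P : Ideal (𝓞 K), P.IsPrime → (∀ x, om σ x - x ∈ P) → t ∈ P ∧ (s : 𝓞 K) ∈ P := by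
    intro P hP hr
    have h3 : om f z * t ∈ P := by
      refine ram1 (n := q * s) hr _ ?_ ?_ (by rw [Nat.mul_mod, hq4, hs4])
      · rw [map_mul, hst, hsz, mul_neg]
      · rw [mul_pow, hz', ht]; push_cast; ring
    have h4 : t ∈ P := by
      rcases hP.mem_or_mem (ram2 hr t hst) with h | h
      · exfalso
        have h5 : ((q * s : ℕ) : 𝓞 K) ∈ P := mem_of_sqrt (t := om f z * t) (by rw [mul_pow, hz', ht]; push_cast; ring) h3
        refine not_cop (l := 2) (m := q * s) ?_ hP (by exact_mod_cast h) h5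
        rw [Nat.coprime_two_left, Nat.odd_mul, Nat.odd_iff, Nat.odd_iff]; omega
      · exact h
    exact ⟨h4, mem_of_sqrt ht h4⟩
  by_cases hsq : IsSquare (q : ZMod s)
  · have : Fact s.Prime := ⟨hs⟩
    obtain ⟨r, hr⟩ := hensel_nat (l := s) (by rintro rfl; omega) q hsq
      (fun hh => hqs ((Nat.prime_dvd_prime_iff_eq hs hq).1 hh).symm)
    have hrQ : (r : ℚ_[s]) ^ 2 = (q : ℚ_[s]) := by
      rw [← PadicInt.coe_pow, hr]; simp
    obtain ⟨g, -, hg⟩ := hF.lift (algebraMap ℚ ℚ_[s]) (r : ℚ_[s]) hrQ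
    refine hQ.odd_of (a := 2) hodd (hQ.am1 ?_ (-1) (nn_neg_one hs hs4 h (mul_one s).symm hnd h1 h2 g))
    exact (cov_sqrt ht hd hs (mul_one s).symm hnd).ram key
  · refine hQ.odd_of (a := 1) hodd (hQ.am0 ?_)
    refine (cov (l := s) (m := 1) (w := 2) (j := 1) hs hnd (by norm_num) ?_ ?_).ram key
    · rw [norm_sqrt ht hd, mul_one, mul_one]
    · exact fun P hP hh => norm_w2 hs (noHom_ns (om f z) hz' hsq) P hP hh
end
end TriQ

namespace TriQ
set_option linter.unusedSectionVars false
open NumberField nonZeroDivisors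

section
variable {A B K : Type*} [Field A] [Field B] [Field K] [NumberField A] [NumberField B] [NumberField K]
  {f1 : A →+* B} {f2 : B →+* K} {a : A} {b : B} {c : K}

lemma cast_eq {R : Type*} [CommRing R] {x y e : ℤ} {n : ℕ} (h : x ^ 2 - n * y ^ 2 = 2 * e) :
    (x : R) ^ 2 - n * y ^ 2 = 2 * e := by exact_mod_cast congrArg (Int.cast : ℤ → R) h

lemma cyc5 {p q s : ℕ} (hp : p.Prime) (hq : q.Prime) (hs : s.Prime) (hpq : p ≠ q) (hps : p ≠ s) (hqs : q ≠ s)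
    (hp8 : p % 8 = 5) (hq4 : q % 4 = 3) (hs4 : s % 4 = 3)
    (hsq : IsSquare (q : ZMod p)) (hss : IsSquare (s : ZMod p))
    (hA : QS (algebraMap ℚ A) q a) (hB : QS f1 s b) (h : QS f2 p c) :
    IsCyclic (tw (ClassGroup (𝓞 K))) := by
  have hAr := hA.totallyReal
  have hBr := hB.totallyReal
  have hKr := h.totallyReal
  have : Fact p.Prime := ⟨hp⟩
  obtain ⟨σ, h1, h2⟩ := h.conj
  have hQ := h.quad h1 h2
  have hodd := odd4 hq hs hqs hq4 hs4 hA hB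
  obtain ⟨t, htc, ht⟩ := sqrt_int c p h.sq
  have hst : om σ t = -t := om_neg (by rw [htc, h2])
  have hd : Module.finrank ℚ K = 2 * 4 := by rw [h.fin, hB.fin, finQ hA]
  have hnd : ¬ p ∣ 1 := by simpa using hp.one_lt.ne'
  have hp2 : p ≠ 2 := by rintro rfl; omega
  obtain ⟨rq, hrq⟩ := hensel_nat (l := p) hp2 q hsq
    (fun hh => hpq ((Nat.prime_dvd_prime_iff_eq hp hq).1 hh))
  obtain ⟨rs, hrs⟩ := hensel_nat (l := p) hp2 s hss
    (fun hh => hps ((Nat.prime_dvd_prime_iff_eq hp hs).1 hh))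
  have hrqQ : (rq : ℚ_[p]) ^ 2 = (q : ℚ_[p]) := by rw [← PadicInt.coe_pow, hrq]; simp
  have hrsQ : (rs : ℚ_[p]) ^ 2 = (s : ℚ_[p]) := by rw [← PadicInt.coe_pow, hrs]; simp
  obtain ⟨g0, -, hg0⟩ := hA.lift (algebraMap ℚ ℚ_[p]) (rq : ℚ_[p]) hrqQ
  obtain ⟨g, hgA, hg⟩ := hB.lift g0 (rs : ℚ_[p]) hrsQ
  obtain ⟨g', hgA', hg'⟩ := hB.lift g0 (-(rs : ℚ_[p])) (by rw [neg_sq, hrsQ])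
  have hgq : g (f1 a) = rq := by rw [hgA, hg0]
  have hgq' : g' (f1 a) = rq := by rw [hgA', hg0]
  -- the units
  obtain ⟨x1, y1, e1, hx1, he1⟩ := pell3 hq hq4
  obtain ⟨x2, y2, e2, hx2, he2⟩ := pell3 hs hs4
  have hfa : (f1 a) ^ 2 = q := by rw [← map_pow, hA.sq, map_natCast]
  obtain ⟨zq, hzqa, hzq⟩ := sqrt_int (f1 a) q hfa
  obtain ⟨zs, hzsb, hzs⟩ := sqrt_int b s hB.sq
  have hee1 : ∀ {R : Type _} [CommRing R], (e1 : R) ^ 2 = 1 := by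
    intro R _; rcases he1 with rfl | rfl <;> simp
  have hee2 : ∀ {R : Type _} [CommRing R], (e2 : R) ^ 2 = 1 := by
    intro R _; rcases he2 with rfl | rfl <;> simp
  let u1 : (𝓞 B)ˣ := Units.mkOfMulEqOne ((x1 ^ 2 - e1) + x1 * y1 * zq) ((x1 ^ 2 - e1) - x1 * y1 * zq) (by
    have := cast_eq (R := 𝓞 B) hx1
    linear_combination -(x1 : 𝓞 B) ^ 2 * y1 ^ 2 * hzq + (x1 : 𝓞 B) ^ 2 * this + hee1 (R := 𝓞 B))
  let u1' : (𝓞 B)ˣ := Units.mkOfMulEqOne ((x2 ^ 2 - e2) + x2 * y2 * zs) ((x2 ^ 2 - e2) - x2 * y2 * zs) (by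
    have := cast_eq (R := 𝓞 B) hx2
    linear_combination -(x2 : 𝓞 B) ^ 2 * y2 ^ 2 * hzs + (x2 : 𝓞 B) ^ 2 * this + hee2 (R := 𝓞 B))
  have hu1 : algebraMap (𝓞 B) B u1 = (x1 ^ 2 - e1) + x1 * y1 * f1 a := by
    show algebraMap (𝓞 B) B ((x1 ^ 2 - e1) + x1 * y1 * zq) = _
    simp only [map_add, map_sub, map_mul, map_pow, map_intCast]
    exact congrArg (fun w => ((x1 : B) ^ 2 - e1) + x1 * y1 * w) hzqa
  have hu1' : algebraMap (𝓞 B) B u1' = (x2 ^ 2 - e2) + x2 * y2 * b := by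
    show algebraMap (𝓞 B) B ((x2 ^ 2 - e2) + x2 * y2 * zs) = _
    simp only [map_add, map_sub, map_mul, map_pow, map_intCast]
    exact congrArg (fun w => ((x2 : B) ^ 2 - e2) + x2 * y2 * w) hzsb
  have hsqv : ((x1 + y1 * f1 a) * (x2 + y2 * b) / 2) ^ 2 = algebraMap (𝓞 B) B (u1 * u1' : 𝓞 B) := by
    have E1 := cast_eq (R := B) hx1
    have E2 := cast_eq (R := B) hx2
    have F1 : (x1 + y1 * f1 a) ^ 2 = 2 * ((x1 ^ 2 - e1) + x1 * y1 * f1 a) := by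
      linear_combination (y1 : B) ^ 2 * hfa - E1
    have F2 : (x2 + y2 * b) ^ 2 = 2 * ((x2 ^ 2 - e2) + x2 * y2 * b) := by
      linear_combination (y2 : B) ^ 2 * hB.sq - E2
    rw [map_mul, hu1, hu1', div_pow, mul_pow, F1, F2]; ring
  obtain ⟨v, hv⟩ : ∃ v : 𝓞 B, algebraMap (𝓞 B) B v = (x1 + y1 * f1 a) * (x2 + y2 * b) / 2 := by
    have : IsIntegral ℤ ((x1 + y1 * f1 a) * (x2 + y2 * b) / 2) := by
      apply IsIntegral.of_pow (n := 2) (by norm_num)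
      rw [hsqv]; exact RingOfIntegers.isIntegral_coe _
    exact ⟨⟨_, this⟩, rfl⟩
  have hvv : v ^ 2 = u1 * u1' := by
    apply RingOfIntegers.coe_injective
    rw [map_pow, hv, hsqv]
  let u2 : (𝓞 B)ˣ := Units.mkOfMulEqOne v (v * ((u1 * u1')⁻¹ : (𝓞 B)ˣ)) (by
    rw [← mul_assoc, ← pow_two, hvv, ← Units.val_mul, Units.mul_inv])
  have hu2 : algebraMap (𝓞 B) B u2 = (x1 + y1 * f1 a) * (x2 + y2 * b) / 2 := hv
  -- local computations
  have E1 := cast_eq (R := ℤ_[p]) hx1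
  have E2 := cast_eq (R := ℤ_[p]) hx2
  have hn2 : ¬ IsSquare (2 : ZMod p) := by rw [ZMod.exists_sq_eq_two_iff hp2]; omega
  have h20 : (2 : ZMod p) ≠ 0 := by
    intro h; apply hn2; rw [h]; exact ⟨0, by simp⟩
  have hn1 : IsSquare (-1 : ZMod p) := by rw [ZMod.exists_sq_eq_neg_one_iff]; omega
  obtain ⟨hf, hhf⟩ : ∃ k : ℤ_[p], 2 * k = 1 := by
    have : IsUnit (2 : ℤ_[p]) := by
      rw [PadicInt.isUnit_iff, ← toZMod_ne_zero_iff, map_ofNat]; exact h20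
    obtain ⟨k, hk⟩ := this.exists_right_inv
    exact ⟨k, hk⟩
  have hhfQ : (2 : ℚ_[p]) * hf = 1 := by exact_mod_cast congrArg (Subtype.val) hhf
  have hne2 : ∀ {e : ℤ}, (e = 1 ∨ e = -1) → IsSquare (e : ZMod p) ∧ (e : ZMod p) ≠ 0 := by
    rintro e (rfl | rfl)
    · simp
    · constructor
      · simpa using hn1
      · simp
  set U1 : ℤ_[p] := (x1 ^ 2 - e1) + x1 * y1 * rq with hU1
  set U2 : ℤ_[p] := (x1 + y1 * rq) * (x2 + y2 * rs) * hf with hU2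
  set U2' : ℤ_[p] := (x1 + y1 * rq) * (x2 - y2 * rs) * hf with hU2'
  have hgu1 : g (algebraMap (𝓞 B) B u1) = U1 := by
    rw [hu1, hU1]; simp only [map_add, map_sub, map_mul, map_pow, map_intCast, hgq]; push_cast; ring
  have hgu1' : g' (algebraMap (𝓞 B) B u1) = U1 := by
    rw [hu1, hU1]; simp only [map_add, map_sub, map_mul, map_pow, map_intCast, hgq']; push_cast; ring
  have hgu2 : g (algebraMap (𝓞 B) B u2) = U2 := by
    rw [hu2, hU2]; simp only [map_add, map_sub, map_mul, map_pow, map_div₀, map_intCast, map_ofNat, hgq, hg]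
    push_cast
    field_simp
    linear_combination -((x1 : ℚ_[p]) + y1 * rq) * (x2 + y2 * rs) * hhfQ
  have hgu2' : g' (algebraMap (𝓞 B) B u2) = U2' := by
    rw [hu2, hU2']; simp only [map_add, map_sub, map_mul, map_pow, map_div₀, map_intCast, map_ofNat, hgq', hg']
    push_cast
    field_simp
    linear_combination -((x1 : ℚ_[p]) + y1 * rq) * (x2 - y2 * rs) * hhfQ
  have k1 : 2 * U1 = (x1 + y1 * rq) ^ 2 := by
    rw [hU1]; linear_combination E1 - (y1 : ℤ_[p]) ^ 2 * hrq
  have k2 : (x1 + y1 * rq) * (x1 - y1 * rq) = 2 * (e1 : ℤ_[p]) := by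
    linear_combination E1 - (y1 : ℤ_[p]) ^ 2 * hrq
  have k3 : U2 * U2' = 2 * e2 * ((x1 + y1 * rq) * hf) ^ 2 := by
    rw [hU2, hU2']; linear_combination ((x1 + y1 * rq) * hf) ^ 2 * (E2 - (y2 : ℤ_[p]) ^ 2 * hrs)
  set φ := PadicInt.toZMod (p := p) with hφ
  have kπ : φ (x1 + y1 * rq) ≠ 0 := by
    intro h0
    have := congrArg φ k2
    rw [map_mul, h0, zero_mul, map_mul, map_ofNat, map_intCast] at this
    exact mul_ne_zero h20 (hne2 he1).2 this.symm
  have kh : φ hf ≠ 0 := by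
    intro h0
    have := congrArg φ hhf
    rw [map_mul, h0, mul_zero, map_one] at this
    exact zero_ne_one this
  have n1 : ¬ IsSquare (φ U1) := by
    intro hh
    have hU10 : φ U1 ≠ 0 := by
      intro h0
      have := congrArg φ k1
      rw [map_mul, h0, mul_zero, map_pow] at this
      exact pow_ne_zero 2 kπ this.symm
    refine ns_mul_sq hn2 hh hU10 ?_
    have := congrArg φ k1
    rw [map_mul, map_ofNat, map_pow] at this
    rw [this]; exact IsSquare.sq _
  have n2 : ¬ IsSquare (φ U2 * φ U2') := by
    rw [← map_mul, k3, map_mul, map_mul, map_ofNat, map_intCast, map_pow, map_mul]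
    exact ns_mul_sq (ns_mul_sq hn2 (hne2 he2).1 (hne2 he2).2) (IsSquare.sq _) (pow_ne_zero 2 (mul_ne_zero kπ kh))
  have n3 : ¬ IsSquare (φ (U1 * U2) * φ (U1 * U2')) := by
    have : φ (U1 * U2) * φ (U1 * U2') = (φ U2 * φ U2') * (φ U1) ^ 2 := by
      rw [φ.map_mul U1 U2, φ.map_mul U1 U2']; ring
    rw [this]
    refine ns_mul_sq n2 (IsSquare.sq _) (pow_ne_zero 2 ?_)
    intro h0; apply n1; rw [h0]; exact ⟨0, by simp⟩
  refine hQ.cyclic_of (a := 3) hodd (hQ.am2 ?_ u1 u2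
    (nn_of h h1 h2 (mul_one p).symm hnd g _ U1 hgu1 n1)
    (nn_of2 h h1 h2 (mul_one p).symm hnd g g' _ U2 U2' hgu2 hgu2' n2)
    (nn_of2 h h1 h2 (mul_one p).symm hnd g g' _ (U1 * U2) (U1 * U2') ?_ ?_ n3))
  · refine (cov_sqrt ht hd hp (mul_one p).symm hnd).ram ?_
    intro P hP hr
    have := ram1 hr t hst ht (by omega)
    exact ⟨this, mem_of_sqrt ht this⟩
  · show g (algebraMap (𝓞 B) B _) = _
    rw [map_mul, map_mul, hgu1, hgu2]; push_cast; rfl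
  · show g' (algebraMap (𝓞 B) B _) = _
    rw [map_mul, map_mul, hgu1', hgu2']; push_cast; rfl
end
end TriQ

namespace TriQ
set_option linter.unusedSectionVars false
open NumberField nonZeroDivisors

section
variable {k L M1 M2 : Type*} [Field k] [Field L] [Field M1] [Field M2]
  [NumberField k] [NumberField L] [NumberField M1] [NumberField M2]
  {f : k →+* L} {σ ρ1 ρ2 : L →+* L} {i1 : M1 →+* L} {i2 : M2 →+* L} {c : L}

lemma triv_of (hρ1 : Quad i1 ρ1) (hρ2 : Quad i2 ρ2)
    (ho1 : Odd (Nat.card (ClassGroup (𝓞 M1)))) (ho2 : Odd (Nat.card (ClassGroup (𝓞 M2))))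
    (hc : σ = ρ1.comp ρ2) (x : ClassGroup (𝓞 L)) (hx : x ∈ tw (ClassGroup (𝓞 L))) : clm σ x = x := by
  rw [hc, ← clm_comp, hρ2.acts_inv ho2 x hx, map_inv, hρ1.acts_inv ho1 x hx, inv_inv]

lemma le7 {p n : ℕ} (hpn : Nat.Coprime p n) (hp4 : p % 4 = 1) (hn4 : n % 4 = 1) (hkr : IsTotallyReal k)
    (h : QS f p c) (h1 : ∀ a, σ (f a) = f a) (h2 : σ c = -c) {b : L} (hb : b ^ 2 = n) (hσb : σ b = -b)
    (hρ1 : Quad i1 ρ1) (hρ2 : Quad i2 ρ2)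
    (ho1 : Odd (Nat.card (ClassGroup (𝓞 M1)))) (ho2 : Odd (Nat.card (ClassGroup (𝓞 M2))))
    (hc : σ = ρ1.comp ρ2) :
    2 * Nat.card (tw (ClassGroup (𝓞 L))) ∣ Nat.card (tw (ClassGroup (𝓞 k))) := by
  have hLr := h.totallyReal
  have hQ := h.quad h1 h2
  have := hQ.tw_le (a := 0) (b := 1) (triv_of hρ1 hρ2 ho1 ho2 hc) (hQ.am0 ?_)
  · rwa [pow_one] at this
  refine ⟨∅, le_rfl, fun P hP _ hr => ?_⟩
  exfalso
  obtain ⟨t, htc, ht⟩ := sqrt_int c p h.sq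
  obtain ⟨u, hub, hu⟩ := sqrt_int b n hb
  have e1 := mem_of_sqrt ht (ram1 hr t (om_neg (by rw [htc, h2])) ht hp4)
  have e2 := mem_of_sqrt hu (ram1 hr u (om_neg (by rw [hub, hσb])) hu hn4)
  exact not_cop hpn hP e1 e2
end

section
variable {L K M1 M2 D : Type*} [Field L] [Field K] [Field M1] [Field M2] [Field D]
  [NumberField L] [NumberField K] [NumberField M1] [NumberField M2] [NumberField D]
  {f : L →+* K} {σ ρ1 ρ2 : K →+* K} {i1 : M1 →+* K} {i2 : M2 →+* K} {c : K} {i : D →+* L} {e : L}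

lemma le6 {p q s : ℕ} (hp : p.Prime) (hqs : Nat.Coprime q s) (hp8 : p % 8 = 5) (hq4 : q % 4 = 3)
    (hLr : IsTotallyReal L) (hLd : Module.finrank ℚ L = 4)
    (h : QS f q c) (h1 : ∀ a, σ (f a) = f a) (h2 : σ c = -c) {b : K} (hb : b ^ 2 = s) (hσb : σ b = -b)
    (hρ1 : Quad i1 ρ1) (hρ2 : Quad i2 ρ2)
    (ho1 : Odd (Nat.card (ClassGroup (𝓞 M1)))) (ho2 : Odd (Nat.card (ClassGroup (𝓞 M2))))
    (hc : σ = ρ1.comp ρ2) (hD : QS i p e) (γ : D →+* ℚ_[2]) :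
    Nat.card (tw (ClassGroup (𝓞 K))) ∣ Nat.card (tw (ClassGroup (𝓞 L))) := by
  have hKr := h.totallyReal
  have hQ := h.quad h1 h2
  obtain ⟨z, hze, hz⟩ := sqrt_int e p hD.sq
  obtain ⟨x, y, hxy⟩ := pell1 hp (by omega)
  have hxyL : (x : 𝓞 L) ^ 2 - p * y ^ 2 = -1 := by exact_mod_cast congrArg (Int.cast : ℤ → 𝓞 L) hxy
  have hxyl : (x : L) ^ 2 - p * y ^ 2 = -1 := by exact_mod_cast congrArg (Int.cast : ℤ → L) hxy
  let ε : (𝓞 L)ˣ := Units.mkOfMulEqOne (x + y * z) (-(x - y * z)) (by linear_combination -hxyL + y ^ 2 * hz)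
  have hε : algebraMap (𝓞 L) L ε = x + y * e := by
    show algebraMap (𝓞 L) L (x + y * z) = _
    rw [map_add, map_mul, map_intCast, map_intCast]
    exact congrArg (fun w => (x : L) + y * w) hze
  have hnn : Quad.NN f σ (ε : 𝓞 L) := by
    intro w hw
    obtain ⟨u, v, huv⟩ := h.norm_form h1 h2 w
    rw [hw] at huv
    have huv1 : algebraMap (𝓞 L) L ε = u ^ 2 - q * v ^ 2 := f.injective huv
    rw [hε] at huv1
    obtain ⟨β, hβ1, hβ2⟩ := hD.conj
    have hβ := hD.quad hβ1 hβ2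
    have huv2 := congrArg β huv1
    rw [map_add, map_sub, map_mul, map_mul, map_pow, map_pow, map_intCast, map_intCast, map_natCast, hβ2] at huv2
    obtain ⟨X, hX⟩ := (hβ.fix (u * β u + q * (v * β v))).1 (by
      simp only [map_add, map_mul, map_natCast, hβ.inv]; ring)
    obtain ⟨Y, hY⟩ := (hβ.fix (u * β v + β u * v)).1 (by
      simp only [map_add, map_mul, map_natCast, hβ.inv]; ring)
    have key : X ^ 2 - q * Y ^ 2 = -1 := by
      apply i.injective
      rw [map_sub, map_mul, map_pow, map_pow, map_natCast, map_neg, map_one, hX, hY]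
      have := hD.sq
      linear_combination (-(x - y * e : L)) * huv1 - (u ^ 2 - q * v ^ 2) * huv2 + hxyl - y ^ 2 * this
    have := congrArg γ key
    rw [map_sub, map_mul, map_pow, map_pow, map_natCast, map_neg, map_one] at this
    exact two_adic hq4 _ _ this
  have := hQ.tw_le (a := 2) (b := 0) (triv_of hρ1 hρ2 ho1 ho2 hc) (hQ.am1 ?_ ε hnn)
  · rwa [pow_zero, one_mul] at this
  obtain ⟨t, htc, ht⟩ := sqrt_int c q h.sq
  obtain ⟨r, hrb, hr'⟩ := sqrt_int b s hb
  have hst : om σ t = -t := om_neg (by rw [htc, h2])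
  have hsr : om σ r = -r := om_neg (by rw [hrb, hσb])
  refine (cov_two (w := 2) (j := 2) ht hq4 hQ.inv hst (by rw [h.fin, hLd]) (by norm_num) ?_).ram ?_
  · exact fun P hP hh => norm_w2 Nat.prime_two
      (noHom2 (om f z) (n := p) (by rw [← map_pow, hz, map_natCast]) hp8) P hP hh
  · intro P hP hr
    rcases hP.mem_or_mem (ram2 hr t hst) with h | h
    · exact_mod_cast h
    rcases hP.mem_or_mem (ram2 hr r hsr) with h' | h'
    · exact_mod_cast h'
    exact (not_cop hqs hP (mem_of_sqrt ht h) (mem_of_sqrt hr' h')).elim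
end
end TriQ

namespace TriQ
set_option linter.unusedSectionVars false
open NumberField nonZeroDivisors

lemma padic_neg_one {p : ℕ} [hp : Fact p.Prime] (hp4 : p % 4 = 1) : ∃ r : ℤ_[p], r ^ 2 = -1 := by
  apply hensel_odd (by omega)
  · rw [map_neg, map_one, ZMod.exists_sq_eq_neg_one_iff]; omega
  · rw [map_neg, map_one]; simp

lemma padic_T {p q s : ℕ} [hp : Fact p.Prime] (hq : q.Prime) (hs : s.Prime) (hpq : p ≠ q) (hps : p ≠ s)
    (hp4 : p % 4 = 1) (hq4 : q % 4 = 3) (hs4 : s % 4 = 3)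
    (hsq : IsSquare (q : ZMod p)) (hss : IsSquare (s : ZMod p)) {T r : ℤ}
    (e : (T + 2) * (T - 2) = q * (s * r ^ 2)) : ∃ w : ℚ_[p], w ^ 2 = ((T + 2 : ℤ) : ℚ_[p]) := by
  obtain ⟨i, hi⟩ := padic_neg_one (p := p) hp4
  have nd : ∀ {l : ℕ}, l.Prime → p ≠ l → ¬ p ∣ l := fun hl h h' => h ((Nat.prime_dvd_prime_iff_eq hp.out hl).1 h')
  obtain ⟨a, ha⟩ := hensel_nat (l := p) (by omega) q hsq (nd hq hpq)
  obtain ⟨b, hb⟩ := hensel_nat (l := p) (by omega) s hss (nd hs hps)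
  have fin : ∀ X Y y : ℤ, IsCoprime X Y → X * Y = q * (s * y ^ 2) → ∃ w : ℤ_[p], w ^ 2 = (X : ℤ_[p]) := by
    intro X Y y hc e
    obtain ⟨x, c, hc', d, hd, rfl⟩ := two_strip hq hs hc e
    have h1 : ∃ w : ℤ_[p], w ^ 2 = (c : ℤ_[p]) := by
      rcases hc' with rfl | rfl
      · exact ⟨1, by simp⟩
      · exact ⟨i, by rw [hi]; simp⟩
    have h2 : ∃ w : ℤ_[p], w ^ 2 = (d : ℤ_[p]) := by
      rcases hd with rfl | rfl | rfl | rfl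
      · exact ⟨1, by simp⟩
      · exact ⟨a, by rw [ha]; simp⟩
      · exact ⟨b, by rw [hb]; simp⟩
      · exact ⟨a * b, by rw [mul_pow, ha, hb]; simp⟩
    obtain ⟨w1, h1⟩ := h1
    obtain ⟨w2, h2⟩ := h2
    exact ⟨w1 * w2 * x, by push_cast; rw [mul_pow, mul_pow, h1, h2]⟩
  have hqs1 : ∃ j : ℤ, (q : ℤ) * s = 4 * j + 1 := by
    have : (q * s) % 4 = 1 := by rw [Nat.mul_mod, hq4, hs4]
    exact ⟨((q * s / 4 : ℕ) : ℤ), by have := Nat.div_add_mod (q * s) 4; zify at this ⊢; grind⟩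
  obtain ⟨j, hj⟩ := hqs1
  rcases Int.even_or_odd' T with ⟨t, rfl | rfl⟩
  · rcases Int.even_or_odd' r with ⟨y, rfl | rfl⟩
    · have e1 : (t + 1) * (t - 1) = q * s * y ^ 2 := by nlinarith
      rcases Int.even_or_odd' t with ⟨m, rfl | rfl⟩
      · exfalso
        rw [hj] at e1
        have h4 := sq_mod4 y
        have : (4 * (m * m - j * y ^ 2) : ℤ) = y ^ 2 + 1 := by linear_combination e1
        omega
      · rcases Int.even_or_odd' y with ⟨z, rfl | rfl⟩
        · obtain ⟨w, hw⟩ := fin (m + 1) m z ⟨1, -1, by ring⟩ (by nlinarith)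
          refine ⟨2 * w, ?_⟩
          have := congrArg (fun z : ℤ_[p] => (z : ℚ_[p])) hw
          simp only [PadicInt.coe_pow, PadicInt.coe_intCast] at this
          rw [mul_pow, this]; push_cast; ring
        · exfalso
          rw [hj] at e1
          have : (4 * ((m+1)*m - j * (2*z+1)^2 - z^2 - z)) = 1 := by linear_combination e1
          omega
    · exfalso
      rw [← mul_assoc, hj] at e
      have : 4 * ((t+1)*(t-1) - j * (2*y+1)^2 - y^2 - y) = 1 := by linear_combination e
      omega
  · obtain ⟨w, hw⟩ := fin _ _ r ⟨(2*t+3) - (t^2+3*t+2), t^2+3*t+2, by ring⟩ e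
    refine ⟨w, ?_⟩
    have := congrArg (fun z : ℤ_[p] => (z : ℚ_[p])) hw
    simpa only [PadicInt.coe_pow, PadicInt.coe_intCast] using this

section
variable {B : Type*} [Field B] [NumberField B] {θ : B}

lemma fixed_rat {n : ℕ} (h : QS (algebraMap ℚ B) n θ) {σ : B →+* B} (h1 : ∀ a, σ (algebraMap ℚ B a) = algebraMap ℚ B a)
    (h2 : σ θ = -θ) (x : 𝓞 B) (hx : σ x = x) : ∃ m : ℤ, (x : B) = m := by
  obtain ⟨a, ha⟩ := (h.quad h1 h2).ex_int x hx
  refine ⟨Rat.ringOfIntegersEquiv a, ?_⟩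
  have e : ((Rat.ringOfIntegersEquiv a : ℤ) : 𝓞 ℚ) = a := by
    apply Rat.ringOfIntegersEquiv.injective
    rw [map_intCast]; rfl
  rw [← ha, ← e, map_intCast, map_intCast]; simp

lemma unit_sq {p q s : ℕ} [hp : Fact p.Prime] (hq : q.Prime) (hs : s.Prime) (hpq : p ≠ q) (hps : p ≠ s)
    (hqs : q ≠ s) (hp4 : p % 4 = 1) (hq4 : q % 4 = 3) (hs4 : s % 4 = 3)
    (hsq : IsSquare (q : ZMod p)) (hss : IsSquare (s : ZMod p)) (h : QS (algebraMap ℚ B) (q * s) θ)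
    (u : (𝓞 B)ˣ) (φ : B →+* ℚ_[p]) : ∃ w : ℚ_[p], w ^ 2 = φ ((u : 𝓞 B) : B) := by
  obtain ⟨σ, h1, h2⟩ := h.conj
  have hQ := h.quad h1 h2
  have hqs' : ¬ q ∣ s := fun h' => hqs ((Nat.prime_dvd_prime_iff_eq hq hs).1 h')
  have hnn := nn_neg_one hq hq4 h rfl hqs' h1 h2 (algebraMap ℚ _)
  obtain ⟨t, ht, ht2⟩ := sqrt_int θ (q * s) h.sq
  set v : 𝓞 B := om σ (u : 𝓞 B) with hv
  have hvc : (v : B) = σ ((u : 𝓞 B) : B) := om_coe _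
  obtain ⟨N, hN⟩ := fixed_rat h h1 h2 (u * v) (by
    show σ (algebraMap (𝓞 B) B (u * v)) = algebraMap (𝓞 B) B (u * v)
    rw [map_mul, map_mul]
    show σ ((u : 𝓞 B) : B) * σ (v : B) = _ * (v : B)
    rw [hvc, hQ.inv, mul_comm])
  obtain ⟨T, hT⟩ := fixed_rat h h1 h2 (u + v) (by
    show σ (algebraMap (𝓞 B) B (u + v)) = algebraMap (𝓞 B) B (u + v)
    rw [map_add, map_add]
    show σ ((u : 𝓞 B) : B) + σ (v : B) = _ + (v : B)
    rw [hvc, hQ.inv, add_comm])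
  obtain ⟨R, hR⟩ := fixed_rat h h1 h2 ((u - v) * t) (by
    show σ (algebraMap (𝓞 B) B ((u - v) * t)) = algebraMap (𝓞 B) B ((u - v) * t)
    rw [map_mul, map_mul, map_sub, map_sub]
    show (σ ((u : 𝓞 B) : B) - σ (v : B)) * σ (t : B) = (_ - (v : B)) * (t : B)
    rw [hvc, hQ.inv, ht, h2]; ring)
  have hNu : IsUnit N := by
    have : ((u : 𝓞 B) * v) = algebraMap ℤ (𝓞 B) N := RingOfIntegers.coe_injective (hN.trans (by simp))
    have hu : IsUnit (algebraMap ℤ (𝓞 B) N) := by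
      rw [← this]; exact u.isUnit.mul (u.isUnit.map (om σ))
    exact isUnit_of_map_unit (algebraMap ℤ (𝓞 B)) N hu
  have hN1 : N = 1 := by
    rcases Int.isUnit_iff.1 hNu with h | h
    · exact h
    · exfalso
      subst h
      apply hnn ((u : 𝓞 B) : B)
      rw [← hvc]
      show algebraMap (𝓞 B) B u * algebraMap (𝓞 B) B v = _
      rw [← map_mul]
      refine hN.trans ?_
      simp
  subst hN1
  set U : B := ((u : 𝓞 B) : B) with hU
  have eN : U * (v : B) = 1 := by
    have := hN
    simpa using this
  have eT : U + (v : B) = T := by rw [← hT]; simp [hU]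
  have eR : (U - (v : B)) * θ = R := by rw [← hR, ← ht]; simp [hU]
  have eRT : R ^ 2 = q * (s * (T ^ 2 - 4)) := by
    have : ((R ^ 2 : ℤ) : B) = ((q * (s * (T ^ 2 - 4)) : ℤ) : B) := by
      push_cast
      rw [← eR, ← eT, mul_pow, h.sq]
      push_cast
      linear_combination (-4 * (q : B) * s) * eN
    exact_mod_cast this
  have hqR : (q : ℤ) ∣ R := (Nat.prime_iff_prime_int.1 hq).dvd_of_dvd_pow (n := 2) ⟨_, eRT⟩
  have hsR : (s : ℤ) ∣ R := (Nat.prime_iff_prime_int.1 hs).dvd_of_dvd_pow (n := 2) ⟨q * (T ^ 2 - 4), by rw [eRT]; ring⟩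
  have hcop : IsCoprime (q : ℤ) s := Nat.isCoprime_iff_coprime.2 ((Nat.coprime_primes hq hs).2 hqs)
  obtain ⟨r, rfl⟩ := hcop.mul_dvd hqR hsR
  have hq0 : (q : ℤ) ≠ 0 := by exact_mod_cast hq.ne_zero
  have hs0 : (s : ℤ) ≠ 0 := by exact_mod_cast hs.ne_zero
  have e : (T + 2) * (T - 2) = q * (s * r ^ 2) := by
    apply mul_left_cancel₀ (mul_ne_zero hq0 hs0)
    linear_combination -eRT
  obtain ⟨w, hw⟩ := padic_T hq hs hpq hps hp4 hq4 hs4 hsq hss e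
  have key : U * ((T + 2 : ℤ) : B) = (1 + U) ^ 2 := by
    push_cast; rw [← eT]; linear_combination eN
  by_cases hT0 : T + 2 = 0
  · rw [hT0, Int.cast_zero, mul_zero, eq_comm, sq_eq_zero_iff] at key
    have : U = -1 := by linear_combination key
    obtain ⟨i, hi⟩ := padic_neg_one (p := p) hp4
    refine ⟨i, ?_⟩
    rw [this, map_neg, map_one]
    have := congrArg (fun z : ℤ_[p] => (z : ℚ_[p])) hi
    simpa using this
  · have hw0 : w ≠ 0 := by
      rintro rfl
      rw [zero_pow two_ne_zero, eq_comm, Int.cast_eq_zero] at hw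
      exact hT0 hw
    refine ⟨φ (1 + U) / w, ?_⟩
    rw [div_pow, ← map_pow, ← key, map_mul, map_intCast, hw]
    rw [mul_div_assoc, div_self, mul_one]
    rw [← hw]; exact pow_ne_zero 2 hw0
end
end TriQ

namespace TriQ
set_option linter.unusedSectionVars false
open NumberField nonZeroDivisors

lemma ideal_split {R : Type*} [CommRing R] (I : Ideal R) (x y : R) (hxy : x * y ∈ I)
    (hc : ∃ i ∈ I, ∃ v w : R, i + v * x + w * y = 1) : (I ⊔ Ideal.span {x}) * (I ⊔ Ideal.span {y}) = I := by
  obtain ⟨i, hi, v, w, e⟩ := hc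
  have h1 : IsCoprime (I ⊔ Ideal.span {x}) (I ⊔ Ideal.span {y}) := by
    rw [Ideal.isCoprime_iff_exists]
    refine ⟨i + v * x, ?_, w * y, ?_, e⟩
    · exact Ideal.add_mem _ (Ideal.mem_sup_left hi)
        (Ideal.mem_sup_right (Ideal.mul_mem_left _ _ (Ideal.mem_span_singleton_self x)))
    · exact Ideal.mem_sup_right (Ideal.mul_mem_left _ _ (Ideal.mem_span_singleton_self y))
  apply le_antisymm
  · rw [Ideal.sup_mul, Ideal.mul_sup]
    refine sup_le (sup_le Ideal.mul_le_left Ideal.mul_le_left) ?_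
    rw [Ideal.mul_sup]
    refine sup_le Ideal.mul_le_right ?_
    rw [Ideal.span_singleton_mul_span_singleton, Ideal.span_singleton_le_iff_mem]
    exact hxy
  · rw [Ideal.mul_eq_inf_of_coprime h1.sup_eq]
    exact le_inf le_sup_left le_sup_left

section
variable {K : Type*} [Field K] [NumberField K] {σ τ : K →+* K}

lemma dv_jmk (x : 𝓞 K) (y : Kˣ) (h : (y : K) = x) (hx : Ideal.span {x} ≠ ⊥) : dv K y = jmk (Ideal.span {x}) hx := by
  apply Units.ext
  rw [jmk_val, coe_toPrincipalIdeal, h, FractionalIdeal.coeIdeal_span_singleton]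

lemma cop_aux {R : Type*} [CommRing R] (l c : ℕ) (h : Nat.Coprime l (2 * c)) (I : Ideal R) (hl : (l : R) ∈ I) (x : R) :
    ∃ i ∈ I, ∃ v w : R, i + v * (x - c) + w * (-x - c) = 1 := by
  obtain ⟨a, b, e⟩ := Nat.isCoprime_iff_coprime.2 h
  have e' := congrArg (fun z : ℤ => (z : R)) e
  push_cast at e'
  refine ⟨a * l, Ideal.mul_mem_left _ _ hl, -b, -b, ?_⟩
  linear_combination e'

lemma sq_aux {R : Type*} [CommRing R] (l c n : ℕ) (h : (l : ℤ) ∣ n - c ^ 2) (I : Ideal R) (hl : (l : R) ∈ I) (x : R)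
    (hx : x ^ 2 = n) : (x - c) * (-x - c) ∈ I := by
  obtain ⟨z, hz⟩ := h
  have e' := congrArg (fun z : ℤ => (z : R)) hz
  push_cast at e'
  have : (x - c) * (-x - c) = -z * l := by linear_combination -hx - e'
  rw [this]
  exact Ideal.mul_mem_left _ _ hl

lemma exL {l c d A B : ℕ} (hl0 : l ≠ 0) (hc : Nat.Coprime l (2 * c)) (hd : Nat.Coprime l (2 * d))
    (hA : (l : ℤ) ∣ A - c ^ 2) (hB : (l : ℤ) ∣ B - d ^ 2) (α β : K) (hα : α ^ 2 = A) (hβ : β ^ 2 = B)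
    (hσα : σ α = α) (hσβ : σ β = -β) (hτα : τ α = -α) (y : Kˣ) (hy : (y : K) = l) :
    ∃ I : J K, (I * Jm σ I) * Jm τ (I * Jm σ I) = dv K y := by
  obtain ⟨x, rfl, hx⟩ := sqrt_int α A hα
  obtain ⟨z, rfl, hz⟩ := sqrt_int β B hβ
  have l0 : Ideal.span {(l : 𝓞 K)} ≠ ⊥ := by
    rw [Ne, Ideal.span_singleton_eq_bot]; exact_mod_cast hl0
  set I0 : Ideal (𝓞 K) := Ideal.span {(l : 𝓞 K)} with hI0
  set I1 := I0 ⊔ Ideal.span {x - c} with hI1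
  set I1' := I0 ⊔ Ideal.span {-x - (c : 𝓞 K)} with hI1'
  set I2 := I1 ⊔ Ideal.span {z - d} with hI2
  set I2' := I1 ⊔ Ideal.span {-z - (d : 𝓞 K)} with hI2'
  have n1 : I1 ≠ ⊥ := fun h => l0 (le_bot_iff.1 (h ▸ le_sup_left))
  have n2 : I2 ≠ ⊥ := fun h => n1 (le_bot_iff.1 (h ▸ le_sup_left))
  have m0 : (l : 𝓞 K) ∈ I0 := Ideal.mem_span_singleton_self _
  have m1 : (l : 𝓞 K) ∈ I1 := Ideal.mem_sup_left m0
  have e1 : I1 * I1' = I0 := ideal_split _ _ _ (sq_aux l c A hA _ m0 x hx) (cop_aux l c hc _ m0 x)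
  have e2 : I2 * I2' = I1 := ideal_split _ _ _ (sq_aux l d B hB _ m1 z hz) (cop_aux l d hd _ m1 z)
  have s0 : I0.map (om σ) = I0 := by rw [hI0, Ideal.map_span, Set.image_singleton, map_natCast]
  have t0 : I0.map (om τ) = I0 := by rw [hI0, Ideal.map_span, Set.image_singleton, map_natCast]
  have s1 : I1.map (om σ) = I1 := by
    rw [hI1, Ideal.map_sup, s0, Ideal.map_span, Set.image_singleton, map_sub, map_natCast, om_fix hσα]
  have t1 : I1.map (om τ) = I1' := by
    rw [hI1, Ideal.map_sup, t0, Ideal.map_span, Set.image_singleton, map_sub, map_natCast, om_neg hτα]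
  have s2 : I2.map (om σ) = I2' := by
    rw [hI2, Ideal.map_sup, s1, Ideal.map_span, Set.image_singleton, map_sub, map_natCast, om_neg hσβ]
  have k1 : jmk I2 n2 * Jm σ (jmk I2 n2) = jmk I1 n1 := by
    rw [Jm_jmk, ← jmk_mul _ _ _ _ (by rw [s2, e2]; exact n1)]
    congr 1
    rw [s2, e2]
  refine ⟨jmk I2 n2, ?_⟩
  rw [k1, dv_jmk (l : 𝓞 K) y (by rw [hy]; simp) l0, Jm_jmk, ← jmk_mul _ _ _ _ (by rw [t1, e1]; exact l0)]
  congr 1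
  rw [t1, e1]
end

section
variable {B L K k : Type*} [Field B] [Field L] [Field K] [Field k]
  [NumberField B] [NumberField L] [NumberField K] [NumberField k]
  {i : B →+* L} {f : L →+* K} {g : k →+* L} {b : B} {c : L} {e : K} {d : k}

lemma not_surj {p q s l x y : ℕ} (hp : p.Prime) (hq : q.Prime) (hs : s.Prime) (hpq : p ≠ q) (hps : p ≠ s)
    (hqs : q ≠ s) (hp4 : p % 4 = 1) (hq4 : q % 4 = 3) (hs4 : s % 4 = 3)
    (hsq : IsSquare (q : ZMod p)) (hss : IsSquare (s : ZMod p))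
    (hB : QS (algebraMap ℚ B) (q * s) b) (hL : QS i p c) (hK : QS f q e)
    (hk : QS (algebraMap ℚ k) (p * q * s) d) (hg : g d = c * i b)
    (hl0 : l ≠ 0) (hx : Nat.Coprime l (2 * x)) (hy : Nat.Coprime l (2 * y))
    (hA : (l : ℤ) ∣ q - x ^ 2) (hA' : (l : ℤ) ∣ (p * q * s : ℕ) - y ^ 2) (hlp : ¬ IsSquare (l : ZMod p)) :
    ∃ I : J K, ∀ m, Odd m → ∀ a : J k, cl K (I ^ m) ≠ clm (f.comp g) (cl k a) := by
  have : Fact p.Prime := ⟨hp⟩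
  obtain ⟨τ, t1, t2⟩ := hK.conj
  obtain ⟨ρ, r1, r2⟩ := hL.conj
  obtain ⟨κ, k1, k2⟩ := hk.conj
  obtain ⟨σ, s1, s2⟩ := hK.lift (f.comp ρ) e hK.sq
  simp only [RingHom.comp_apply] at s1
  have hρg : ∀ x, ρ (g x) = g (κ x) := by
    intro x
    obtain ⟨a, a', rfl⟩ := hk.span x
    simp [hg, k2, r1, r2]
  have hστ : ∀ x, σ (τ x) = τ (σ x) := by
    intro x
    obtain ⟨a, a', rfl⟩ := hK.span x
    simp [s1, s2, t1, t2]
  have hd2 : (f (g d)) ^ 2 = ((p * q * s : ℕ) : K) := by rw [← map_pow, ← map_pow, hk.sq]; simp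
  have l0K : (l : K) ≠ 0 := by exact_mod_cast hl0
  obtain ⟨I, hI⟩ := exL (σ := σ) (τ := τ) hl0 hx hy hA hA' e (f (g d)) hK.sq hd2 s2
    (by rw [s1, hρg, k2]; simp) t2 (Units.mk0 (l : K) l0K) rfl
  refine ⟨I, fun m hm a ha => hlp ?_⟩
  -- 
  rw [clm_cl] at ha
  have h1 : I ^ m / Jm (f.comp g) a ∈ (cl K).ker := by
    rw [MonoidHom.mem_ker, map_div, ha, div_self']
  rw [cl_ker] at h1
  obtain ⟨X, hX⟩ := h1
  have hX' : I ^ m = Jm (f.comp g) a * dv K X := by rw [hX]; simp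
  have hQk := hk.quad k1 k2
  obtain ⟨b0, hb0⟩ := hQk.norm_J a
  obtain ⟨n, rfl⟩ : ∃ n, dv ℚ n = b0 := by
    have : b0 ∈ (cl ℚ).ker := by
      have h2 : Subsingleton (ClassGroup (𝓞 ℚ)) := (Nat.card_eq_one_iff_unique.1 cardQ).1
      exact Subsingleton.elim _ _
    rw [cl_ker] at this; exact this
  have hσfg : ∀ a : J k, Jm σ (Jm (f.comp g) a) = Jm (f.comp g) (Jm κ a) := by
    intro a
    rw [Jm_comp, Jm_comp]
    congr 2
    ext x
    simp [s1, hρg]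
  set N : Kˣ := Units.map (algebraMap ℚ K).toMonoidHom n with hN
  have hA1 : Jm (f.comp g) a * Jm σ (Jm (f.comp g) a) = dv K N := by
    rw [hσfg, ← map_mul, hb0, Jm_comp, Jm_dv, hN]
    congr 1
    apply Units.ext
    simp
  have hτN : Jm τ (dv K N) = dv K N := by
    rw [Jm_dv]; congr 1; apply Units.ext; simp [hN]
  -- x part
  obtain ⟨Y, hY⟩ := (hK.quad t1 t2).nm_dv X
  obtain ⟨a0, b0, hz⟩ := hL.norm_form r1 r2 (Y : L)
  have hz0 : a0 ^ 2 - p * b0 ^ 2 ≠ 0 := by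
    intro h0
    rw [h0, map_zero, mul_eq_zero, map_eq_zero, or_self] at hz
    exact Y.ne_zero hz
  set Z : Bˣ := Units.mk0 _ hz0 with hZ
  have hY' : (X : K) * τ X = f Y := congrArg Units.val hY
  have hXZ : (X * Units.map σ.toMonoidHom X) * Units.map τ.toMonoidHom (X * Units.map σ.toMonoidHom X)
      = Units.map (f.comp i).toMonoidHom Z := by
    apply Units.ext
    show ((X : K) * σ X) * τ ((X : K) * σ X) = f (i (a0 ^ 2 - p * b0 ^ 2))
    rw [← hz, map_mul, map_mul f, ← s1, ← hY', map_mul σ, hστ]; ring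
  have hXd : (dv K X * Jm σ (dv K X)) * Jm τ (dv K X * Jm σ (dv K X)) = dv K (Units.map (f.comp i).toMonoidHom Z) := by
    rw [← hXZ, map_mul (dv K), map_mul (dv K), map_mul (Jm τ), Jm_dv, Jm_dv, Jm_dv, map_mul (Units.map τ.toMonoidHom), map_mul (dv K) (Units.map τ.toMonoidHom X)]
  have lB : (l : B) ≠ 0 := by exact_mod_cast hl0
  set NB : Bˣ := Units.map (algebraMap ℚ B).toMonoidHom n with hNB
  have main : dv K (Units.map (f.comp i).toMonoidHom (Units.mk0 (l : B) lB ^ m)) =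
      dv K (Units.map (f.comp i).toMonoidHom (NB ^ 2 * Z)) := by
    have c1 : Units.map (f.comp i).toMonoidHom (Units.mk0 (l : B) lB) = Units.mk0 (l : K) l0K := by
      apply Units.ext; simp
    have c2 : Units.map (f.comp i).toMonoidHom NB = N := by
      apply Units.ext; simp [hN, hNB]
    rw [map_pow, c1, map_mul, map_pow _ NB, c2, map_pow (dv K), ← hI, map_mul (dv K), ← hXd]
    have : ((I * Jm σ I) * Jm τ (I * Jm σ I)) ^ m = (I ^ m * Jm σ (I ^ m)) * Jm τ (I ^ m * Jm σ (I ^ m)) := by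
      simp only [map_mul, map_pow, mul_pow]
    rw [this, hX']
    have : Jm (f.comp g) a * dv K X * Jm σ (Jm (f.comp g) a * dv K X) =
      dv K N * (dv K X * Jm σ (dv K X)) := by
      rw [← hA1, map_mul]; exact mul_mul_mul_comm _ _ _ _
    rw [this, map_mul (Jm τ), hτN, map_pow (dv K), sq]; exact mul_mul_mul_comm _ _ _ _
  rw [← Jm_dv, ← Jm_dv] at main
  have main2 := Jm_inj _ main
  have h3 : dv B (Units.mk0 (l : B) lB ^ m / (NB ^ 2 * Z)) = 1 := by
    rw [map_div, main2, div_self']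
  obtain ⟨u, hu⟩ := (dv_eq_one_iff _).1 h3
  have hu2 : Units.mk0 (l : B) lB ^ m = iou B u * (NB ^ 2 * Z) := by rw [hu]; simp
  have hu3 : (l : B) ^ m = ((u : 𝓞 B) : B) * ((algebraMap ℚ B n) ^ 2 * (a0 ^ 2 - p * b0 ^ 2)) :=
    congrArg Units.val hu2
  -- local
  have nd : ∀ {l : ℕ}, l.Prime → p ≠ l → ¬ p ∣ l := fun hl h h' => h ((Nat.prime_dvd_prime_iff_eq hp hl).1 h')
  obtain ⟨r, hr⟩ := hensel_nat (l := p) (by omega) (q * s) (by push_cast; exact hsq.mul hss)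
    (fun h => (hp.dvd_mul.1 h).elim (nd hq hpq) (nd hs hps))
  obtain ⟨φ, -, -⟩ := hB.lift (algebraMap ℚ ℚ_[p]) (r : ℚ_[p]) (by
    have := congrArg (fun z : ℤ_[p] => (z : ℚ_[p])) hr
    simpa using this)
  obtain ⟨w, hw⟩ := unit_sq hq hs hpq hps hqs hp4 hq4 hs4 hsq hss hB u φ
  have h4 := local_sq (l := p) (n := p) (m := 1) (mul_one p).symm (by simpa using hp.one_lt.ne') ((l : ℤ_[p]) ^ m)
    (w * φ (algebraMap ℚ B n) * φ a0) (w * φ (algebraMap ℚ B n) * φ b0) (by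
      have h5 := congrArg φ hu3
      rw [map_mul, ← hw] at h5
      simp only [map_pow, map_mul, map_sub, map_natCast] at h5
      push_cast
      rw [h5]; ring)
  rw [map_pow, map_natCast] at h4
  obtain ⟨j, rfl⟩ := hm
  obtain ⟨v, hv⟩ := h4
  by_cases hlz : (l : ZMod p) = 0
  · exact ⟨0, by rw [hlz, mul_zero]⟩
  refine ⟨v / (l : ZMod p) ^ j, ?_⟩
  field_simp
  rw [sq v, ← hv]; ring
end
end TriQ

namespace TriQ
set_option linter.unusedSectionVars false
open NumberField nonZeroDivisors

lemma ex_ns {p : ℕ} (hp : p.Prime) (h2 : p ≠ 2) : ∃ a : ℕ, ¬ IsSquare (a : ZMod p) ∧ Nat.Coprime a p := by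
  have : Fact p.Prime := ⟨hp⟩
  obtain ⟨a, ha⟩ := FiniteField.exists_nonsquare (F := ZMod p) (by rwa [ZMod.ringChar_zmod_n])
  refine ⟨a.val, by simpa using ha, ?_⟩
  rw [Nat.coprime_comm, hp.coprime_iff_not_dvd, ← ZMod.natCast_eq_zero_iff]
  intro h
  rw [ZMod.natCast_val, ZMod.cast_id'] at h
  simp only [id] at h
  exact ha ⟨0, by rw [h, mul_zero]⟩

lemma ex_l {p q s : ℕ} (hp : p.Prime) (hq : q.Prime) (hs : s.Prime) (hpq : p ≠ q) (hps : p ≠ s)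
    (hqs : q ≠ s) (hp2 : p ≠ 2) (hq2 : q ≠ 2) (hs2 : s ≠ 2) :
    ∃ l : ℕ, l.Prime ∧ l % 4 = 1 ∧ ¬ IsSquare (l : ZMod p) ∧ ¬ IsSquare (l : ZMod s) ∧ IsSquare (l : ZMod q) ∧
      p * q * s < l := by
  obtain ⟨a, ha, ha'⟩ := ex_ns hp hp2
  obtain ⟨b, hb, hb'⟩ := ex_ns hs hs2
  have cop : ∀ {x y : ℕ}, x.Prime → y.Prime → x ≠ y → Nat.Coprime x y := fun hx hy h => (Nat.coprime_primes hx hy).2 h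
  have c4 : ∀ {x : ℕ}, x.Prime → x ≠ 2 → Nat.Coprime 4 x := fun hx h =>
    Nat.Coprime.pow_left 2 (cop Nat.prime_two hx h.symm)
  obtain ⟨u, hu1, hu2⟩ := Nat.chineseRemainder (cop hp hs hps) a b
  obtain ⟨v, hv1, hv2⟩ := Nat.chineseRemainder
    (show Nat.Coprime (p * s) (4 * q) from Nat.Coprime.mul_left (Nat.Coprime.mul_right (c4 hp hp2).symm (cop hp hq hpq))
     (Nat.Coprime.mul_right (c4 hs hs2).symm (cop hs hq hqs.symm))) u 1
  have hvp : v ≡ a [MOD p] := (hv1.of_mul_right s).trans hu1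
  have hvs : v ≡ b [MOD s] := (hv1.of_mul_left p).trans hu2
  have hvc : Nat.Coprime v ((p * s) * (4 * q)) := by
    refine Nat.Coprime.mul_right (Nat.Coprime.mul_right ?_ ?_) ?_
    · rw [Nat.Coprime, hvp.gcd_eq]; exact ha'
    · rw [Nat.Coprime, hvs.gcd_eq]; exact hb'
    · rw [Nat.Coprime, hv2.gcd_eq]; simp
  have : NeZero ((p * s) * (4 * q)) := ⟨by
    have := hp.ne_zero; have := hq.ne_zero; have := hs.ne_zero; positivity⟩
  obtain ⟨l, hl1, hl2, hl3⟩ := Nat.forall_exists_prime_gt_and_eq_mod ((ZMod.isUnit_iff_coprime v _).2 hvc) (p * q * s)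
  rw [ZMod.natCast_eq_natCast_iff] at hl3
  have m1 := hl3.of_mul_right (4 * q)
  have m2 := (hl3.of_mul_left (p * s)).trans hv2
  refine ⟨l, hl2, m2.of_mul_right q, ?_, ?_, ?_, hl1⟩
  · rw [(ZMod.natCast_eq_natCast_iff _ _ _).2 ((m1.of_mul_right s).trans hvp)]; exact ha
  · rw [(ZMod.natCast_eq_natCast_iff _ _ _).2 ((m1.of_mul_left p).trans hvs)]; exact hb
  · rw [(ZMod.natCast_eq_natCast_iff _ _ _).2 (m2.of_mul_left 4)]; simp

lemma ex_root {l n : ℕ} (hl : l.Prime) (h2 : l ≠ 2) (h : IsSquare (n : ZMod l)) (hn : ¬ l ∣ n) :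
    ∃ x : ℕ, Nat.Coprime l (2 * x) ∧ (l : ℤ) ∣ n - x ^ 2 := by
  have : Fact l.Prime := ⟨hl⟩
  obtain ⟨z, hz⟩ := h
  have e : (l : ℤ) ∣ n - (z.val : ℤ) ^ 2 := by
    rw [← ZMod.intCast_zmod_eq_zero_iff_dvd]
    push_cast
    rw [hz]; simp; ring
  refine ⟨z.val, ?_, e⟩
  rw [hl.coprime_iff_not_dvd, hl.dvd_mul]
  rintro (h | h)
  · exact h2 ((Nat.prime_dvd_prime_iff_eq hl Nat.prime_two).1 h)
  · apply hn
    have h' : (l : ℤ) ∣ (z.val : ℤ) ^ 2 := dvd_pow (by exact_mod_cast h) two_ne_zero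
    have := (dvd_add e h')
    rw [sub_add_cancel] at this
    exact_mod_cast this

lemma ex_data {p q s : ℕ} (hp : p.Prime) (hq : q.Prime) (hs : s.Prime) (hpq : p ≠ q) (hps : p ≠ s)
    (hqs : q ≠ s) (hp2 : p ≠ 2) (hq2 : q ≠ 2) (hs2 : s ≠ 2) :
    ∃ l x y : ℕ, l ≠ 0 ∧ Nat.Coprime l (2 * x) ∧ Nat.Coprime l (2 * y) ∧ (l : ℤ) ∣ q - x ^ 2 ∧
      (l : ℤ) ∣ (p * q * s : ℕ) - y ^ 2 ∧ ¬ IsSquare (l : ZMod p) := by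
  obtain ⟨l, hl, hl4, h1, h2, h3, h4⟩ := ex_l hp hq hs hpq hps hqs hp2 hq2 hs2
  have : Fact l.Prime := ⟨hl⟩
  have : Fact p.Prime := ⟨hp⟩
  have : Fact q.Prime := ⟨hq⟩
  have : Fact s.Prime := ⟨hs⟩
  have hpos : 0 < p * q * s := by have := hp.pos; have := hq.pos; have := hs.pos; positivity
  have hnd : ¬ l ∣ p * q * s := fun h => absurd (Nat.le_of_dvd hpos h) (by omega)
  have r1 : ¬ IsSquare (p : ZMod l) := fun h => h1 ((ZMod.exists_sq_eq_prime_iff_of_mod_four_eq_one hl4 hp2).1 h)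
  have r2 : ¬ IsSquare (s : ZMod l) := fun h => h2 ((ZMod.exists_sq_eq_prime_iff_of_mod_four_eq_one hl4 hs2).1 h)
  have r3 : IsSquare (q : ZMod l) := (ZMod.exists_sq_eq_prime_iff_of_mod_four_eq_one hl4 hq2).2 h3
  have r4 : IsSquare ((p * q * s : ℕ) : ZMod l) := by
    push_cast
    rw [mul_right_comm]
    refine IsSquare.mul ?_ r3
    have hr : ringChar (ZMod l) ≠ 2 := by rw [ZMod.ringChar_zmod_n]; omega
    have q1 := (quadraticChar_neg_one_iff_not_isSquare (F := ZMod l)).2 r1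
    have q2 := (quadraticChar_neg_one_iff_not_isSquare (F := ZMod l)).2 r2
    by_contra h
    have q3 := (quadraticChar_neg_one_iff_not_isSquare (F := ZMod l)).2 h
    rw [map_mul, q1, q2] at q3
    norm_num at q3
  obtain ⟨x, hx, hx'⟩ := ex_root hl (by omega) r3 (fun h => hnd ((h.mul_left p).mul_right s))
  obtain ⟨y, hy, hy'⟩ := ex_root hl (by omega) r4 hnd
  exact ⟨l, x, y, hl.ne_zero, hx, hy, hx', hy', h1⟩

section
variable {L K k : Type*} [Field L] [Field K] [Field k]
  [NumberField L] [NumberField K] [NumberField k]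
  {f : L →+* K} {g : k →+* L} {κ : L →+* L} {τ : K →+* K}

lemma lower (h1 : Quad g κ) (h2 : Quad f τ) (hc : IsCyclic (tw (ClassGroup (𝓞 k))))
    (hI : ∃ I : J K, ∀ m, Odd m → ∀ a : J k, cl K (I ^ m) ≠ clm (f.comp g) (cl k a)) :
    Nat.card (tw (ClassGroup (𝓞 k))) ≤ 2 * Nat.card (tw (ClassGroup (𝓞 K))) := by
  obtain ⟨I, hI⟩ := hI
  set j : tw (ClassGroup (𝓞 k)) →* ClassGroup (𝓞 K) := (clm (f.comp g)).comp (tw _).subtype with hj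
  have hle : j.range ≤ tw _ := by
    rintro _ ⟨⟨x, n, hn⟩, rfl⟩
    refine ⟨n, ?_⟩
    show (clm (f.comp g) x) ^ 2 ^ n = 1
    rw [← map_pow, hn, map_one]
  have hne : j.range ≠ tw _ := by
    intro h
    obtain ⟨n, m, hm, e⟩ := Nat.exists_eq_two_pow_mul_odd (n := Nat.card (ClassGroup (𝓞 K))) Nat.card_pos.ne'
    have : cl K (I ^ m) ∈ j.range := by
      rw [h]
      refine ⟨n, ?_⟩
      rw [map_pow, ← pow_mul, mul_comm, ← e, pow_card_eq_one']
    obtain ⟨⟨x, hx⟩, hxe⟩ := this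
    obtain ⟨a, rfl⟩ := cl_surj x
    exact hI m hm a hxe.symm
  have hdv : 2 * Nat.card j.range ≤ Nat.card (tw (ClassGroup (𝓞 K))) := by
    obtain ⟨t, ht⟩ := Subgroup.card_dvd_of_le hle
    have ht0 : t ≠ 0 := by
      rintro rfl
      exact Nat.card_pos.ne' ht
    have ht1 : t ≠ 1 := by
      rintro rfl
      apply hne
      exact Subgroup.eq_of_le_of_card_ge hle (by rw [ht, mul_one])
    rw [ht, mul_comm]
    exact Nat.mul_le_mul_left _ (by omega)
  have hker : Nat.card j.ker ≤ 4 := by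
    rw [← IsCyclic.exponent_eq_card]
    apply Nat.le_of_dvd (by norm_num)
    apply Monoid.exponent_dvd_of_forall_pow_eq_one
    rintro ⟨⟨x, hx⟩, hxk⟩
    have e1 : clm f (clm g x) = 1 := by rw [clm_comp]; exact hxk
    have e2 := h2.capit _ e1
    rw [← map_pow] at e2
    have e3 := h1.capit _ e2
    rw [← pow_mul] at e3
    exact Subtype.ext (Subtype.ext e3)
  have hcard : Nat.card (tw (ClassGroup (𝓞 k))) = Nat.card j.ker * Nat.card j.range := by
    rw [Subgroup.card_eq_card_quotient_mul_card_subgroup j.ker, mul_comm]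
    congr 1
    exact Nat.card_congr (QuotientGroup.quotientKerEquivRange j).toEquiv
  rw [hcard]
  nlinarith [Nat.mul_le_mul_right (Nat.card j.range) hker]
end
end TriQ

namespace TriQ
set_option linter.unusedSectionVars false
open NumberField nonZeroDivisors

noncomputable def rt (n : ℕ) : ℂ := ((Real.sqrt n : ℝ) : ℂ)

lemma rt_sq (n : ℕ) : rt n ^ 2 = n := by
  rw [rt, ← Complex.ofReal_pow, Real.sq_sqrt (Nat.cast_nonneg n)]; simp

lemma rt_mul (m n : ℕ) : rt (m * n) = rt m * rt n := by
  rw [rt, rt, rt, Nat.cast_mul, Real.sqrt_mul (Nat.cast_nonneg m), Complex.ofReal_mul]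

noncomputable abbrev X1 (n : ℕ) : IntermediateField ℚ ℂ := IntermediateField.adjoin ℚ {rt n}
noncomputable abbrev X2 (m n : ℕ) : IntermediateField ℚ ℂ := IntermediateField.adjoin ℚ {rt m, rt n}
noncomputable abbrev X3 (m n l : ℕ) : IntermediateField ℚ ℂ := IntermediateField.adjoin ℚ {rt m, rt n, rt l}

lemma rt_int (n : ℕ) : IsIntegral ℚ (rt n) := by
  refine IsIntegral.of_pow (n := 2) (by norm_num) ?_
  rw [rt_sq]
  have := isIntegral_algebraMap (R := ℚ) (A := ℂ) (x := (n : ℚ))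
  rwa [map_natCast] at this

lemma nf_adjoin (S : Set ℂ) (hS : S.Finite) (h : ∀ x ∈ S, IsIntegral ℚ x) : NumberField (IntermediateField.adjoin ℚ S) := by
  have := hS.to_subtype
  have := IntermediateField.finiteDimensional_adjoin (K := ℚ) (S := S) h
  exact { to_charZero := inferInstance, to_finiteDimensional := this }

instance nf1 (n : ℕ) : NumberField (X1 n) := nf_adjoin _ (by simp) (by simp [rt_int])
instance nf2 (m n : ℕ) : NumberField (X2 m n) := nf_adjoin _ (by simp) (by simp [rt_int])
instance nf3 (m n l : ℕ) : NumberField (X3 m n l) := nf_adjoin _ (by simp) (by simp [rt_int])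

lemma nsQ {r m : ℕ} (hr : r.Prime) (hm : ¬ r ∣ m) (n : ℕ) (hn : n = r * m) (a : ℚ) : a ^ 2 ≠ (n : ℚ) := by
  intro e
  have : Fact r.Prime := ⟨hr⟩
  have hm0 : m ≠ 0 := by rintro rfl; exact hm (dvd_zero r)
  have h1 := congrArg (padicValRat r) e
  have ha : a ≠ 0 := by
    rintro rfl
    rw [hn] at e
    have : ((r * m : ℕ) : ℚ) ≠ 0 := by exact_mod_cast mul_ne_zero hr.ne_zero hm0
    apply this; rw [← e]; norm_num
  rw [padicValRat.pow, padicValRat.of_nat, hn, padicValNat.mul hr.ne_zero hm0, padicValNat_self,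
    padicValNat.eq_zero_of_not_dvd hm] at h1
  push_cast at h1
  omega

/-- inclusion as a ring hom -/
noncomputable abbrev inc {M N : IntermediateField ℚ ℂ} (h : M ≤ N) : M →+* N := (IntermediateField.inclusion h).toRingHom

lemma inc_coe {M N : IntermediateField ℚ ℂ} (h : M ≤ N) (x : M) : ((inc h x : N) : ℂ) = x := rfl

lemma qs1 (n : ℕ) (ns : ∀ a : ℚ, a ^ 2 ≠ (n : ℚ)) (θ : X1 n) (hθ : (θ : ℂ) = rt n) : QS (algebraMap ℚ (X1 n)) n θ := by
  refine qs_mk _ _ _ _ (Subtype.ext ?_) ns ?_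
  · show (θ : ℂ) ^ 2 = _
    rw [hθ, rt_sq]; simp
  · intro N _ h2
    rw [hθ] at h2
    exact IntermediateField.adjoin_le_iff.2 (by simpa using h2)

lemma qs2 {M N : IntermediateField ℚ ℂ} (h : M ≤ N) (n : ℕ) (ns : ∀ a : M, a ^ 2 ≠ (n : M)) (θ : N) (hθ : (θ : ℂ) = rt n)
    (hN : ∀ N' : IntermediateField ℚ ℂ, M ≤ N' → rt n ∈ N' → N ≤ N') : QS (inc h) n θ := by
  refine qs_mk _ _ _ _ (Subtype.ext ?_) ns ?_
  · show (θ : ℂ) ^ 2 = _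
    rw [hθ, rt_sq]; simp
  · intro N' h1 h2
    rw [hθ] at h2
    exact hN N' (fun x hx => h1 ⟨x, hx⟩) h2

lemma fin_final {a b c : ℕ} (h1 : a ∣ b) (h2 : 2 * b ∣ c) (h3 : c ≤ 2 * a) (hc : 0 < c) : 2 * a = c :=
  le_antisymm (Nat.le_of_dvd hc ((Nat.mul_dvd_mul_left 2 h1).trans h2)) h3

theorem main {p q s : ℕ} (hp : p.Prime) (hq : q.Prime) (hs : s.Prime)
    (hpq : p ≠ q) (hps : p ≠ s) (hqs : q ≠ s)
    (hp8 : p % 8 = 5) (hq8 : q % 8 = 3) (hs4 : s % 4 = 3)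
    (hQRq : IsSquare (p : ZMod q)) (hQRs : IsSquare (p : ZMod s)) :
    IsCyclic (tw (ClassGroup (𝓞 (X3 p q s)))) ∧
      2 * Nat.card (tw (ClassGroup (𝓞 (X3 p q s)))) = Nat.card (tw (ClassGroup (𝓞 (X1 (p * q * s))))) := by
  have : Fact p.Prime := ⟨hp⟩
  have : Fact q.Prime := ⟨hq⟩
  have : Fact s.Prime := ⟨hs⟩
  have hp4 : p % 4 = 1 := by omega
  have hq4 : q % 4 = 3 := by omega
  have hsq : IsSquare (q : ZMod p) := (ZMod.exists_sq_eq_prime_iff_of_mod_four_eq_one hp4 (by omega)).2 hQRq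
  have hss : IsSquare (s : ZMod p) := (ZMod.exists_sq_eq_prime_iff_of_mod_four_eq_one hp4 (by omega)).2 hQRs
  -- nonsquares
  have d1 : ¬ p ∣ q := fun h => hpq ((Nat.prime_dvd_prime_iff_eq hp hq).1 h)
  have d2 : ¬ p ∣ s := fun h => hps ((Nat.prime_dvd_prime_iff_eq hp hs).1 h)
  have d3 : ¬ q ∣ s := fun h => hqs ((Nat.prime_dvd_prime_iff_eq hq hs).1 h)
  have d4 : ¬ q ∣ p := fun h => hpq ((Nat.prime_dvd_prime_iff_eq hq hp).1 h).symm
  have d5 : ¬ s ∣ p := fun h => hps ((Nat.prime_dvd_prime_iff_eq hs hp).1 h).symm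
  have d6 : ¬ s ∣ q := fun h => hqs ((Nat.prime_dvd_prime_iff_eq hs hq).1 h).symm
  have p1 : ∀ {r a b : ℕ}, r.Prime → ¬ r ∣ a → ¬ r ∣ b → ¬ r ∣ a * b := fun hr ha hb h => (hr.dvd_mul.1 h).elim ha hb
  have o1 : ¬ p ∣ 1 := hp.one_lt.ne' ∘ Nat.dvd_one.1
  have o2 : ¬ q ∣ 1 := hq.one_lt.ne' ∘ Nat.dvd_one.1
  have o3 : ¬ s ∣ 1 := hs.one_lt.ne' ∘ Nat.dvd_one.1
  have nP := nsQ hp o1 p (by ring)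
  have nQ := nsQ hq o2 q (by ring)
  have nS := nsQ hs o3 s (by ring)
  have nPQ := nsQ hp d1 (p * q) rfl
  have nPS := nsQ hp d2 (p * s) rfl
  have nQS := nsQ hq d3 (q * s) rfl
  have nPQS := nsQ hp (p1 hp d1 d2) (p * q * s) (by ring)
  -- memberships
  have mem : ∀ {S : Set ℂ} {x : ℂ}, x ∈ S → x ∈ IntermediateField.adjoin ℚ S := fun h =>
    IntermediateField.subset_adjoin ℚ _ h
  have Kp : rt p ∈ X3 p q s := mem (by simp)
  have Kq : rt q ∈ X3 p q s := mem (by simp)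
  have Ks : rt s ∈ X3 p q s := mem (by simp)
  have Lp : rt p ∈ X2 p (q * s) := mem (by simp)
  have Lqs : rt (q * s) ∈ X2 p (q * s) := mem (by simp)
  have le1 : ∀ {n : ℕ} {N : IntermediateField ℚ ℂ}, rt n ∈ N → X1 n ≤ N := fun h =>
    IntermediateField.adjoin_le_iff.2 (by simpa using h)
  have le2 : ∀ {m n : ℕ} {N : IntermediateField ℚ ℂ}, rt m ∈ N → rt n ∈ N → X2 m n ≤ N := fun h h' =>
    IntermediateField.adjoin_le_iff.2 (by
      rintro x (rfl | rfl)
      · exact h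
      · exact h')
  have le3 : ∀ {N : IntermediateField ℚ ℂ}, rt p ∈ N → rt q ∈ N → rt s ∈ N → X3 p q s ≤ N := fun h h' h'' =>
    IntermediateField.adjoin_le_iff.2 (by
      rintro x (rfl | rfl | rfl)
      · exact h
      · exact h'
      · exact h'')
  have self1 : ∀ n, rt n ∈ X1 n := fun n => mem (by simp)
  have self2 : ∀ m n, rt m ∈ X2 m n := fun m n => mem (by simp)
  have self2' : ∀ m n, rt n ∈ X2 m n := fun m n => mem (by simp)
  have rt0 : ∀ {n : ℕ}, n ≠ 0 → rt n ≠ 0 := fun {n} hn h => hn (by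
    have := rt_sq n
    rw [h] at this
    have h' : (n : ℂ) = 0 := by rw [← this]; norm_num
    exact_mod_cast h')
  have dvm : ∀ {a b : ℕ} {N : IntermediateField ℚ ℂ}, a ≠ 0 → rt a ∈ N → rt (a * b) ∈ N → rt b ∈ N := by
    intro a b N h0 h1 h2
    have : rt b = rt (a * b) / rt a := by rw [rt_mul, mul_div_cancel_left₀ _ (rt0 h0)]
    rw [this]; exact div_mem h2 h1
  have mm : ∀ {a b : ℕ} {N : IntermediateField ℚ ℂ}, rt a ∈ N → rt b ∈ N → rt (a * b) ∈ N := by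
    intro a b N h1 h2
    rw [rt_mul]; exact mul_mem h1 h2
  have hp0 := hp.ne_zero
  have hq0 := hq.ne_zero
  -- quadratic fields
  have Ap := qs1 p nP ⟨rt p, self1 p⟩ rfl
  have Aq := qs1 q nQ ⟨rt q, self1 q⟩ rfl
  have Aqs := qs1 (q * s) nQS ⟨rt (q * s), self1 _⟩ rfl
  have Apqs := qs1 (p * q * s) nPQS ⟨rt (p * q * s), self1 _⟩ rfl
  -- biquadratic
  have ns2 : ∀ n m : ℕ, (∀ a : ℚ, a ^ 2 ≠ (m : ℚ)) → (∀ a : ℚ, a ^ 2 ≠ ((m * n : ℕ) : ℚ)) → (∀ a : ℚ, a ^ 2 ≠ (n : ℚ)) →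
      ∀ a : X1 n, a ^ 2 ≠ (m : X1 n) := fun n m h1 h2 h3 => (qs1 n h3 ⟨rt n, self1 n⟩ rfl).ns_up m h1 h2
  have Fqs := qs2 (M := X1 q) (N := X2 q s) (le1 (self2 q s)) s (ns2 q s nS (nsQ hq d3 _ (by ring)) nQ) ⟨rt s, self2' q s⟩ rfl
    (fun N h1 h2 => le2 (h1 (self1 q)) h2)
  have Fpq := qs2 (M := X1 p) (N := X2 p q) (le1 (self2 p q)) q (ns2 p q nQ (nsQ hp d1 _ (by ring)) nP) ⟨rt q, self2' p q⟩ rfl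
    (fun N h1 h2 => le2 (h1 (self1 p)) h2)
  have Fps := qs2 (M := X1 p) (N := X2 p s) (le1 (self2 p s)) s (ns2 p s nS (nsQ hp d2 _ (by ring)) nP) ⟨rt s, self2' p s⟩ rfl
    (fun N h1 h2 => le2 (h1 (self1 p)) h2)
  have Lk_le : X1 (p * q * s) ≤ X2 p (q * s) := le1 (by rw [mul_assoc]; exact mm Lp Lqs)
  have LB_le : X1 (q * s) ≤ X2 p (q * s) := le1 Lqs
  have La_le : X1 p ≤ X2 p (q * s) := le1 Lp
  have Lk := qs2 Lk_le p (ns2 (p * q * s) p nP (nsQ (m := p * p * s) hq (p1 hq (p1 hq d4 d4) d3) _ (by ring)) nPQS) ⟨rt p, Lp⟩ rfl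
    (fun N h1 h2 => le2 h2 (dvm hp0 h2 (by rw [← mul_assoc]; exact h1 (self1 _))))
  have LB := qs2 LB_le p (ns2 (q * s) p nP (nsQ hp (p1 hp d1 d2) _ rfl) nQS) ⟨rt p, Lp⟩ rfl
    (fun N h1 h2 => le2 h2 (h1 (self1 _)))
  have La := qs2 La_le (q * s) (ns2 p (q * s) nQS (nsQ hp (p1 hp d1 d2) _ (by ring)) nP) ⟨rt (q * s), Lqs⟩ rfl
    (fun N h1 h2 => le2 (h1 (self1 _)) h2)
  -- octic
  have KF_le : X2 q s ≤ X3 p q s := le2 Kq Ks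
  have Kps_le : X2 p s ≤ X3 p q s := le2 Kp Ks
  have Kpq_le : X2 p q ≤ X3 p q s := le2 Kp Kq
  have KL_le : X2 p (q * s) ≤ X3 p q s := le2 Kp (mm Kq Ks)
  have KF := qs2 KF_le p (Fqs.ns_up p (ns2 q p nP (nsQ hp d1 _ rfl) nQ)
      (ns2 q (p * s) nPS (nsQ hp (p1 hp d2 d1) _ (by ring)) nQ)) ⟨rt p, Kp⟩ rfl
    (fun N h1 h2 => le3 h2 (h1 (self2 _ _)) (h1 (self2' _ _)))
  have Kps := qs2 Kps_le q (Fps.ns_up q (ns2 p q nQ (nsQ hp d1 _ (by ring)) nP)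
      (ns2 p (q * s) nQS (nsQ hp (p1 hp d1 d2) _ (by ring)) nP)) ⟨rt q, Kq⟩ rfl
    (fun N h1 h2 => le3 (h1 (self2 _ _)) h2 (h1 (self2' _ _)))
  have Kpq := qs2 Kpq_le s (Fpq.ns_up s (ns2 p s nS (nsQ hp d2 _ (by ring)) nP)
      (ns2 p (s * q) (nsQ hq d3 _ (by ring)) (nsQ hp (p1 hp d1 d2) _ (by ring)) nP)) ⟨rt s, Ks⟩ rfl
    (fun N h1 h2 => le3 (h1 (self2 _ _)) (h1 (self2' _ _)) h2)
  have KL := qs2 KL_le q (La.ns_up q (ns2 p q nQ (nsQ hp d1 _ (by ring)) nP)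
      (ns2 p (q * (q * s)) (nsQ (m := q * q) hs (p1 hs d6 d6) _ (by ring)) (nsQ hp (p1 hp (p1 hp d1 d1) d2) _ (by ring)) nP)) ⟨rt q, Kq⟩ rfl
    (fun N h1 h2 => le3 (h1 (self2 _ _)) h2 (dvm hq0 h2 (h1 (self2' _ _))))
  -- odd class numbers
  have ho_p := odd1 hp hp4 Ap
  have ho_qs := odd2 hq hs hqs hq4 hs4 Aqs
  have ho_pq := odd3 hp hq hpq hp8 hq4 hQRq Ap Fpq
  have ho_ps := odd3 hp hs hps hp8 hs4 hQRs Ap Fps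
  -- the two upper bounds
  have hkr := Apqs.totallyReal
  have hLr := Lk.totallyReal
  have step7 : 2 * Nat.card (tw (ClassGroup (𝓞 (X2 p (q * s))))) ∣ Nat.card (tw (ClassGroup (𝓞 (X1 (p * q * s))))) := by
    obtain ⟨σ, h1, h2⟩ := Lk.conj
    obtain ⟨ρ1, r1, r1'⟩ := La.conj
    obtain ⟨ρ2, r2, r2'⟩ := LB.conj
    have hσb : σ ⟨rt (q * s), Lqs⟩ = -⟨rt (q * s), Lqs⟩ := by
      have e : inc Lk_le ⟨rt (p * q * s), self1 _⟩ = ⟨rt p, Lp⟩ * ⟨rt (q * s), Lqs⟩ :=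
        Subtype.ext (by show rt (p * q * s) = rt p * rt (q * s); rw [mul_assoc, rt_mul])
      have e2 := h1 ⟨rt (p * q * s), self1 _⟩
      rw [e, map_mul, h2] at e2
      have e0 : (⟨rt p, Lp⟩ : X2 p (q * s)) ≠ 0 := Lk.θ_ne
      apply mul_left_cancel₀ e0
      linear_combination -e2
    refine le7 (b := ⟨rt (q * s), Lqs⟩) ?_ hp4 (by rw [Nat.mul_mod, hq4, hs4]) hkr Lk h1 h2 La.sq hσb (La.quad r1 r1') (LB.quad r2 r2') ho_p ho_qs ?_
    · exact (hp.coprime_iff_not_dvd).2 (p1 hp d1 d2)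
    · have r1p : ρ1 ⟨rt p, Lp⟩ = ⟨rt p, Lp⟩ := r1 ⟨rt p, self1 _⟩
      have r2q : ρ2 ⟨rt (q * s), Lqs⟩ = ⟨rt (q * s), Lqs⟩ := r2 ⟨rt (q * s), self1 _⟩
      apply hom_ext_adjoin
      rintro x (rfl | rfl)
      · rw [RingHom.comp_apply]
        exact h2.trans (by rw [r2', map_neg, r1p])
      · rw [RingHom.comp_apply]
        exact hσb.trans (by rw [r2q, r1'])
  have step6 : Nat.card (tw (ClassGroup (𝓞 (X3 p q s)))) ∣ Nat.card (tw (ClassGroup (𝓞 (X2 p (q * s))))) := by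
    obtain ⟨σ, h1, h2⟩ := KL.conj
    obtain ⟨ρ1, r1, r1'⟩ := Kps.conj
    obtain ⟨ρ2, r2, r2'⟩ := Kpq.conj
    have hσb : σ ⟨rt s, Ks⟩ = -⟨rt s, Ks⟩ := by
      have e : inc KL_le ⟨rt (q * s), Lqs⟩ = ⟨rt q, Kq⟩ * ⟨rt s, Ks⟩ :=
        Subtype.ext (by show rt (q * s) = rt q * rt s; rw [rt_mul])
      have e2 := h1 ⟨rt (q * s), Lqs⟩
      rw [e, map_mul, h2] at e2
      have e0 : (⟨rt q, Kq⟩ : X3 p q s) ≠ 0 := KL.θ_ne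
      apply mul_left_cancel₀ e0
      linear_combination -e2
    have hc : σ = ρ1.comp ρ2 := by
      have a0 : σ ⟨rt p, Kp⟩ = ⟨rt p, Kp⟩ := h1 ⟨rt p, Lp⟩
      have a1 : ρ1 ⟨rt p, Kp⟩ = ⟨rt p, Kp⟩ := r1 ⟨rt p, self2 _ _⟩
      have a2 : ρ1 ⟨rt s, Ks⟩ = ⟨rt s, Ks⟩ := r1 ⟨rt s, self2' _ _⟩
      have a3 : ρ2 ⟨rt p, Kp⟩ = ⟨rt p, Kp⟩ := r2 ⟨rt p, self2 _ _⟩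
      have a4 : ρ2 ⟨rt q, Kq⟩ = ⟨rt q, Kq⟩ := r2 ⟨rt q, self2' _ _⟩
      apply hom_ext_adjoin
      rintro x (rfl | rfl | rfl)
      · rw [RingHom.comp_apply]
        exact a0.trans (by rw [a3, a1])
      · rw [RingHom.comp_apply]
        exact h2.trans (by rw [a4, r1'])
      · rw [RingHom.comp_apply]
        exact hσb.trans (by rw [r2', map_neg, a2])
    have hd : Module.finrank ℚ (X2 p (q * s)) = 4 := by rw [Lk.fin, finQ Apqs]
    have hcop : Nat.Coprime q s := (Nat.coprime_primes hq hs).2 hqs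
    have two : ∀ n : ℕ, n % 8 = 1 → ∃ r : ℚ_[2], r ^ 2 = n := by
      intro n hn
      obtain ⟨r, hr⟩ := hensel_two n hn
      refine ⟨r, ?_⟩
      have := congrArg (fun z : ℤ_[2] => (z : ℚ_[2])) hr
      simpa using this
    rcases (by omega : s % 8 = 3 ∨ s % 8 = 7) with h8 | h8
    · obtain ⟨r, hr⟩ := two (q * s) (by rw [Nat.mul_mod, hq8, h8])
      obtain ⟨γ, -, -⟩ := Aqs.lift (algebraMap ℚ ℚ_[2]) r hr
      exact le6 (b := ⟨rt s, Ks⟩) hp hcop hp8 hq4 hLr hd KL h1 h2 Kpq.sq hσb (Kps.quad r1 r1') (Kpq.quad r2 r2') ho_ps ho_pq hc LB γ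
    · obtain ⟨r, hr⟩ := two (p * q * s) (by rw [Nat.mul_mod, Nat.mul_mod p, hp8, hq8, h8])
      obtain ⟨γ, -, -⟩ := Apqs.lift (algebraMap ℚ ℚ_[2]) r hr
      exact le6 (b := ⟨rt s, Ks⟩) hp hcop hp8 hq4 hLr hd KL h1 h2 Kpq.sq hσb (Kps.quad r1 r1') (Kpq.quad r2 r2') ho_ps ho_pq hc Lk γ
  -- the lower bound
  have step8 : Nat.card (tw (ClassGroup (𝓞 (X1 (p * q * s))))) ≤ 2 * Nat.card (tw (ClassGroup (𝓞 (X3 p q s)))) := by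
    obtain ⟨σ, h1, h2⟩ := Lk.conj
    obtain ⟨τ, t1, t2⟩ := KL.conj
    obtain ⟨l, x, y, hl0, hx, hy, hA, hA', hlp⟩ := ex_data hp hq hs hpq hps hqs (by omega) (by omega) (by omega)
    refine lower (Lk.quad h1 h2) (KL.quad t1 t2) (cyc8 hp hq hs hpq hps hqs hp4 hq4 hs4 Apqs) ?_
    refine not_surj hp hq hs hpq hps hqs hp4 hq4 hs4 hsq hss Aqs LB KL Apqs ?_ hl0 hx hy hA hA' hlp
    exact Subtype.ext (by show rt (p * q * s) = rt p * rt (q * s); rw [mul_assoc, rt_mul])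
  exact ⟨cyc5 hp hq hs hpq hps hqs hp8 hq4 hs4 hsq hss Aq Fqs KF, fin_final step6 step7 step8 Nat.card_pos⟩

end TriQ

theorem two_class_group_of_triquadratic
    (p q s : ℕ) (hp : p.Prime) (hq : q.Prime) (hs : s.Prime)
    (hpq : p ≠ q) (hps : p ≠ s) (hqs : q ≠ s)
    (hp8 : p % 8 = 5) (hq8 : q % 8 = 3) (hs4 : s % 4 = 3)
    (hQRq : IsSquare (p : ZMod q)) (hQRs : IsSquare (p : ZMod s)) :
    ∀ P : Sylow 2 (ClassGroup (𝓞 (triquad p q s))),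
      ∀ Q : Sylow 2 (ClassGroup (𝓞 (quadF (p * q * s)))),
      IsCyclic (P : Subgroup (ClassGroup (𝓞 (triquad p q s)))) ∧
      2 * Nat.card (P : Subgroup (ClassGroup (𝓞 (triquad p q s)))) =
        Nat.card (Q : Subgroup (ClassGroup (𝓞 (quadF (p * q * s))))) := by
  intro P Q
  have h := TriQ.main hp hq hs hpq hps hqs hp8 hq8 hs4 hQRq hQRs
  have : NumberField (triquad p q s) := TriQ.nf3 p q s
  have : NumberField (quadF (p * q * s)) := TriQ.nf1 (p * q * s)
  rw [TriQ.tw_eq P, TriQ.tw_eq Q]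
  exact h
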